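/- Let K be a number field and let f be a quadratic form in 4 variables over K such that det M_f is a nonzero square in K (i.e. f is nondegenerate with discriminant 1), and such that for every ring homomorphism v : K → ℝ there exists x ∈ K⁴ with v(f(x)) > 0 (f is not negative definite at any real place). Then there exist nonzero a, b ∈ K such that f is isometric over K to the quaternion norm form ⟨1,−a,−b,ab⟩. -/

import Mathlib

open Quaternion

/-- The Gram matrix `M_f` of a quadratic form `f` in `n` variables: the matrix of the polar
bilinear form `B_f(x, y) = f(x + y) - f(x) - f(y)` in the standard basis. -/
noncomputable def gramMatrix {R : Type*} [CommRing R] {n : ℕ}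
    (f : QuadraticForm R (Fin n → R)) : Matrix (Fin n) (Fin n) R :=
  Matrix.of fun i j => QuadraticMap.polar f (Pi.single i 1) (Pi.single j 1)

/-!
Diagonalize `f` as `⟨d₀, d₁, d₂, d₃⟩`. Since `d₀d₁d₂d₃` is a square, `f` is isometric to `d₀ · N`,
where `N` is the norm form of `ℍ[K, a, b]` with `a = -d₀d₁` and `b = -d₀d₂`. As `N` is
multiplicative, `d₀ · N` is isometric to `N` as soon as `d₀` is a value of `N`. The positivity
assumption on `f` makes `d₀` positive at every real place at which `a` and `b` are negative, and by
the Hasse–Schilling norm theorem this suffices.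

The Hasse–Schilling theorem is reduced to Hasse's norm theorem for quadratic extensions `L = K(√c)`:
to show that `c` is a norm from `ℍ[K, a, b]`, first multiply it by such a norm to make it a local
square at the real places and at the primes dividing `2ab`. Then one finds `e = t² - 4b` such that
`a` is everywhere a local norm from `K(√e, √c)` to `K(√e)`. It is then a global norm, so `ℍ[K, a,
c]` contains `√e`, hence `(t + √e) / 2`, which has norm `b`; this is equivalent to the claim.

Hasse's norm theorem comes from counting, without ideles. The units theorem and Theorem 90 give the
index of the norms of `S`-units of `L` among the `S`-units of `K`: it is `2 ^ (m - 1)`, where `m` is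
the number of places which do not split in `L`. Comparison with the local norm indices leaves no
room for an element which is a local norm everywhere but not a global norm. Completions are never
needed: by Hensel's lemma, a unit of `K` at a prime `𝔭` is a local square if and only if it is a
square modulo `4𝔭`, and norms from `K(√c)` depend on `c` only up to local squares.
-/

namespace HasseSchilling

open NumberField IsDedekindDomain HeightOneSpectrum WithZero

section Order

variable {R : Type*} [CommRing R] [IsDedekindDomain R]
  {K : Type*} [Field K] [Algebra R K] [IsFractionRing R K]

/-- The additive order of a unit `x` of `K` at a prime `v` of the Dedekind domain `R`, normalized
so that uniformizers have order `1`. -/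
noncomputable def ord (v : HeightOneSpectrum R) (x : Kˣ) : ℤ :=
  -(Multiplicative.toAdd (v.valuationOfNeZero x))

lemma valuation_eq_exp_neg_ord (v : HeightOneSpectrum R) (x : Kˣ) :
    v.valuation K (x : K) = exp (-ord v x) := by
  rw [← valuationOfNeZero_eq]
  simp [ord, exp]

@[simp] lemma ord_mul (v : HeightOneSpectrum R) (x y : Kˣ) :
    ord v (x * y) = ord v x + ord v y := by
  simp [ord, add_comm]

@[simp] lemma ord_one (v : HeightOneSpectrum R) : ord v (1 : Kˣ) = 0 := by simp [ord]

@[simp] lemma ord_inv (v : HeightOneSpectrum R) (x : Kˣ) : ord v x⁻¹ = -ord v x := by simp [ord]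

@[simp] lemma ord_neg (v : HeightOneSpectrum R) (x : Kˣ) : ord v (-x) = ord v x := by
  rw [← neg_inj, ← exp_inj, ← valuation_eq_exp_neg_ord, ← valuation_eq_exp_neg_ord, Units.val_neg,
    Valuation.map_neg]

@[simp] lemma ord_div (v : HeightOneSpectrum R) (x y : Kˣ) :
    ord v (x / y) = ord v x - ord v y := by
  rw [div_eq_mul_inv, ord_mul, ord_inv, sub_eq_add_neg]

@[simp] lemma ord_pow (v : HeightOneSpectrum R) (x : Kˣ) (n : ℕ) :
    ord v (x ^ n) = n * ord v x := by
  simp [ord]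

@[simp] lemma ord_zpow (v : HeightOneSpectrum R) (x : Kˣ) (n : ℤ) :
    ord v (x ^ n) = n * ord v x := by
  simp [ord]

lemma ord_prod {ι : Type*} (v : HeightOneSpectrum R) (s : Finset ι) (f : ι → Kˣ) :
    ord v (∏ i ∈ s, f i) = ∑ i ∈ s, ord v (f i) := by
  simp [ord]

lemma valuation_eq_one_iff (v : HeightOneSpectrum R) (x : Kˣ) :
    v.valuation K (x : K) = 1 ↔ ord v x = 0 := by
  rw [valuation_eq_exp_neg_ord, ← exp_zero, exp_inj, neg_eq_zero]

lemma valuation_eq_iff {v : HeightOneSpectrum R} {x y : Kˣ} :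
    v.valuation K (x : K) = v.valuation K (y : K) ↔ ord v x = ord v y := by
  rw [valuation_eq_exp_neg_ord, valuation_eq_exp_neg_ord, exp_inj, neg_inj]

variable (K) in
lemma exists_ord_eq_one (v : HeightOneSpectrum R) : ∃ x : Kˣ, ord v x = 1 := by
  obtain ⟨p, hp⟩ := v.valuation_exists_uniformizer K
  have hp0 : p ≠ 0 := by
    rintro rfl
    exact exp_ne_zero (hp.symm.trans (map_zero _))
  refine ⟨Units.mk0 p hp0, ?_⟩
  rwa [← Units.val_mk0 hp0, valuation_eq_exp_neg_ord, exp_inj, neg_inj] at hp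

lemma finite_setOf_ord_ne_zero (x : Kˣ) : {v : HeightOneSpectrum R | ord v x ≠ 0}.Finite := by
  refine ((Support.finite R (x : K)).union (Support.finite R ((x⁻¹ : Kˣ) : K))).subset
    fun v hv ↦ ?_
  simp only [Support, Set.mem_union, Set.mem_ofPred_eq, valuation_eq_exp_neg_ord, ← exp_zero,
    exp_lt_exp, ord_inv]
  rcases lt_or_gt_of_ne hv with h | h <;> [left; right] <;> omega

lemma valuation_natCast_le_one (v : HeightOneSpectrum R) (n : ℕ) : v.valuation K (n : K) ≤ 1 := by
  simpa using v.valuation_le_one (K := K) (n : R)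

lemma exists_integer_valuation_sub_lt_one (v : HeightOneSpectrum R) {x : K}
    (hx : v.valuation K x ≤ 1) :
    ∃ a : R, v.valuation K (x - algebraMap R K a) < 1 := by
  obtain ⟨n, d, hnd⟩ := exists_primeCompl_mul_eq_of_integer v x hx
  have hd : v.intValuation (d : R) = 1 := (v.intValuation_eq_one_iff_mem_primeCompl _).2 d.2
  obtain ⟨a, ha⟩ := exists_intValuation_mul_sub_lt v (a := (d : R)) (b := n)
    (by rw [hd]; exact v.intValuation_le_one _) 1
  rw [← valuation_of_algebraMap (K := K)] at ha
  change v.valuation K (algebraMap R K (n - a * d)) < 1 at ha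
  rw [map_sub, map_mul, ← hnd, ← sub_mul, map_mul, valuation_of_algebraMap, hd, mul_one] at ha
  exact ⟨a, ha⟩

end Order

/-- The finite primes of a number field. -/
abbrev FinitePrime (K : Type*) [Field K] := HeightOneSpectrum (𝓞 K)

variable {K : Type*} [Field K] [NumberField K]

lemma exists_finitePrime_natCast_mem {p : ℕ} (hp : p.Prime) :
    ∃ v : FinitePrime K, (p : 𝓞 K) ∈ v.asIdeal := by
  have hprime : (Ideal.span {(p : ℤ)}).IsPrime :=
    (Ideal.span_singleton_prime (mod_cast hp.ne_zero)).2 (Nat.prime_iff_prime_int.1 hp)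
  obtain ⟨Q, hQ, hover⟩ :=
    (Ideal.span {(p : ℤ)}).exists_ideal_over_prime_of_isIntegral_of_isDomain (S := 𝓞 K)
      (by simp [(RingHom.injective_iff_ker_eq_bot (algebraMap ℤ (𝓞 K))).1
        (FaithfulSMul.algebraMap_injective ℤ (𝓞 K)), -algebraMap_int_eq])
  have hmem : (p : 𝓞 K) ∈ Q := by
    have : (p : ℤ) ∈ Q.comap (algebraMap ℤ (𝓞 K)) := hover ▸ Ideal.mem_span_singleton_self _
    simpa using this
  refine ⟨⟨Q, hQ, ?_⟩, hmem⟩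
  rintro rfl
  exact hp.ne_zero (by simpa using hmem)

instance infinite_finitePrime : Infinite (FinitePrime K) := by
  choose v hv using fun p : Nat.Primes ↦ exists_finitePrime_natCast_mem (K := K) p.2
  refine Infinite.of_injective v fun p q hpq ↦ by_contra fun hne ↦ ?_
  have hcoprime : IsCoprime (p : 𝓞 K) (q : 𝓞 K) := by
    simpa using (Nat.isCoprime_iff_coprime.2 ((Nat.coprime_primes p.2 q.2).2
      fun h ↦ hne (Subtype.ext h))).map (Int.castRingHom (𝓞 K))
  obtain ⟨a, b, hab⟩ := hcoprime
  refine (v p).isPrime.ne_top ((Ideal.eq_top_iff_one _).2 (hab ▸ ?_))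
  exact add_mem (Ideal.mul_mem_left _ _ (hv p)) (Ideal.mul_mem_left _ _ (hpq ▸ hv q))

section WeakApproximation

lemma adicAbv_lt_adicAbv_iff (v : FinitePrime K) (a b : K) :
    adicAbv K v a < adicAbv K v b ↔ v.valuation K a < v.valuation K b := by
  rw [adicAbv_def, adicAbv_def, NNReal.coe_lt_coe]
  exact (WithZeroMulInt.toNNReal_strictMono (one_lt_absNorm_nnreal v)).lt_iff_lt

lemma adicAbv_lt_one_iff (v : FinitePrime K) (a : K) :
    adicAbv K v a < 1 ↔ v.valuation K a < 1 := by
  simpa using adicAbv_lt_adicAbv_iff v a 1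

lemma adicAbv_isNontrivial (v : FinitePrime K) : (adicAbv K v).IsNontrivial := by
  obtain ⟨p, hp⟩ := exists_ord_eq_one K v
  refine ⟨p, p.ne_zero, ((adicAbv_lt_one_iff v p).2 ?_).ne⟩
  rw [valuation_eq_exp_neg_ord, hp, ← exp_zero, exp_lt_exp]
  norm_num

lemma not_isEquiv_adicAbv (w : InfinitePlace K) (v : FinitePrime K) :
    ¬ w.1.IsEquiv (adicAbv K v) := fun h ↦ by
  have h2 : w (2 : K) ≤ 1 :=
    h.le_one_iff.2 (by exact_mod_cast adicAbv_natCast_le_one (K := K) v 2)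
  rw [← InfinitePlace.norm_embedding_eq, map_ofNat] at h2
  norm_num at h2

lemma eq_of_adicAbv_isEquiv {v v' : FinitePrime K} (h : (adicAbv K v).IsEquiv (adicAbv K v')) :
    v = v' := by
  refine eq_of_valuation_isEquiv_valuation (K := K) (Valuation.isEquiv_iff_val_lt_one.2 ?_)
  intro a
  rw [← adicAbv_lt_one_iff, ← adicAbv_lt_one_iff, h.lt_one_iff]

/-- The places of a number field. -/
abbrev Place (K : Type*) [Field K] := InfinitePlace K ⊕ FinitePrime K

/-- The absolute value attached to a place. -/
noncomputable def placeAbv : Place K → AbsoluteValue K ℝ :=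
  Sum.elim (fun w ↦ w.1) fun v ↦ adicAbv K v

lemma placeAbv_isNontrivial : ∀ v : Place K, (placeAbv v).IsNontrivial
  | .inl w => w.isNontrivial
  | .inr v => adicAbv_isNontrivial v

lemma eq_of_placeAbv_isEquiv :
    ∀ {v v' : Place K}, (placeAbv v).IsEquiv (placeAbv v') → v = v'
  | .inl _, .inl _, h => congrArg _ (InfinitePlace.eq_iff_isEquiv.2 h)
  | .inl w, .inr v, h => (not_isEquiv_adicAbv w v h).elim
  | .inr v, .inl w, h => (not_isEquiv_adicAbv w v h.symm).elim
  | .inr _, .inr _, h => congrArg _ (eq_of_adicAbv_isEquiv h)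

lemma exists_forall_placeAbv_sub_lt (T : Finset (Place K)) (x : Place K → K) {ε : Place K → ℝ}
    (hε : ∀ v, 0 < ε v) : ∃ z : K, ∀ v ∈ T, placeAbv v (z - x v) < ε v := by
  have hdense := AbsoluteValue.denseRange_algebraMap_pi (F := K) (v := fun v : T ↦ placeAbv v.1)
    (fun v ↦ placeAbv_isNontrivial v.1)
    (fun v v' hne h ↦ hne (Subtype.ext (eq_of_placeAbv_isEquiv h)))
  let target : (v : T) → WithAbs (placeAbv v.1) := fun v ↦ WithAbs.toAbs _ (x v)
  have hopen : IsOpen (Set.univ.pi fun v : T ↦ Metric.ball (target v) (ε v)) :=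
    isOpen_set_pi Set.finite_univ fun _ _ ↦ Metric.isOpen_ball
  obtain ⟨z, hz⟩ :=
    hdense.exists_mem_open hopen ⟨target, fun v _ ↦ Metric.mem_ball_self (hε v)⟩
  refine ⟨z, fun v hv ↦ ?_⟩
  have := hz ⟨v, hv⟩ (Set.mem_univ _)
  rwa [mem_ball_iff_norm] at this

lemma weak_approximation (S : Finset (FinitePrime K)) (x : FinitePrime K → K)
    {ε : FinitePrime K → ℤᵐ⁰} (hε : ∀ v, ε v ≠ 0) (y : InfinitePlace K → K) {δ : ℝ}
    (hδ : 0 < δ) :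
    ∃ z : K, (∀ v ∈ S, v.valuation K (z - x v) < ε v) ∧ ∀ w : InfinitePlace K, w (z - y w) < δ := by
  classical
  choose e he using fun v : FinitePrime K ↦ v.valuation_surjective K (ε v)
  have he0 (v : FinitePrime K) : e v ≠ 0 := fun h ↦ hε v (by rw [← he, h, map_zero])
  obtain ⟨z, hz⟩ := exists_forall_placeAbv_sub_lt (Finset.univ.disjSum S) (Sum.elim y x)
    (ε := Sum.elim (fun _ ↦ δ) fun v ↦ adicAbv K v (e v))
    (Sum.rec (fun _ ↦ hδ) fun v ↦ (adicAbv K v).pos (he0 v))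
  refine ⟨z, fun v hv ↦ ?_, fun w ↦ hz (.inl w) (by simp)⟩
  rw [← he, ← adicAbv_lt_adicAbv_iff]
  exact hz (.inr v) (by simpa using hv)

end WeakApproximation

/-- The infinite place of a real embedding. -/
noncomputable def realPlace (φ : K →+* ℝ) : InfinitePlace K :=
  InfinitePlace.mk (Complex.ofRealHom.comp φ)

omit [NumberField K] in
lemma realPlace_apply (φ : K →+* ℝ) (x : K) : realPlace φ x = |φ x| := by
  simp [realPlace, InfinitePlace.apply]

omit [NumberField K] in
lemma realPlace_injective : Function.Injective (realPlace (K := K)) := by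
  intro φ ψ h
  rcases InfinitePlace.mk_eq_iff.1 h with h | h <;> ext x <;>
    simpa [ComplexEmbedding.conjugate] using congrArg (fun f : K →+* ℂ ↦ f x) h

section LocalSquares

lemma valuation_ofNat_le_one (v : FinitePrime K) (n : ℕ) [n.AtLeastTwo] :
    v.valuation K (OfNat.ofNat n : K) ≤ 1 :=
  mod_cast valuation_natCast_le_one (K := K) v n

lemma valuation_four_pos (v : FinitePrime K) : 0 < v.valuation K (4 : K) :=
  zero_lt_iff.2 ((Valuation.ne_zero_iff _).2 (by norm_num))

lemma valuation_one_add (v : FinitePrime K) {p : K} (hp : v.valuation K p < 1) :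
    v.valuation K (1 + p) = 1 := by
  rw [Valuation.map_add_eq_of_lt_left _ (by simpa using hp), map_one]

/-- The elements of `Kˣ` that are squares in the completion at a finite prime `v`. By Hensel's
lemma `1 + 4 𝔭` consists of squares in the completion, so it is enough to test approximation by
squares of `K` to this precision. -/
noncomputable def finiteLocalSquares (v : FinitePrime K) : Subgroup Kˣ where
  carrier := {x | ∃ y : Kˣ, v.valuation K ((x : K) * (y : K) ^ 2 - 1) < v.valuation K (4 : K)}
  one_mem' := ⟨1, by simpa using valuation_four_pos v⟩
  mul_mem' := by
    rintro x x' ⟨y, hy⟩ ⟨y', hy'⟩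
    refine ⟨y * y', ?_⟩
    have hprod : ((x * x' : Kˣ) : K) * ((y * y' : Kˣ) : K) ^ 2 - 1 =
        (x * y ^ 2 - 1) + (x' * y' ^ 2 - 1) + (x * y ^ 2 - 1) * (x' * y' ^ 2 - 1) := by
      push_cast; ring
    rw [hprod]
    refine Valuation.map_add_lt _ (Valuation.map_add_lt _ hy hy') ?_
    rw [map_mul]
    exact (mul_le_of_le_one_left' (hy.le.trans (valuation_ofNat_le_one v 4))).trans_lt hy'
  inv_mem' := by
    rintro x ⟨y, hy⟩
    refine ⟨y⁻¹, ?_⟩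
    have hunit : v.valuation K ((x : K) * y ^ 2) = 1 := by
      simpa using valuation_one_add v (hy.trans_le (valuation_ofNat_le_one v 4))
    have hinv : ((x⁻¹ : Kˣ) : K) * ((y⁻¹ : Kˣ) : K) ^ 2 - 1 = -(x * y ^ 2 - 1) / (x * y ^ 2) := by
      push_cast; field_simp; ring
    rw [hinv, map_div₀, hunit, Valuation.map_neg, div_one]
    exact hy

/-- The elements of `Kˣ` that are squares in the completion at an infinite place `w`: those that
are positive if `w` is real, and all of them if `w` is complex. -/
def infiniteLocalSquares (w : InfinitePlace K) : Subgroup Kˣ where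
  carrier := {x | ∀ φ : K →+* ℝ, realPlace φ = w → 0 < φ x}
  one_mem' _ _ := by simp
  mul_mem' hx hy φ h := by simpa using mul_pos (hx φ h) (hy φ h)
  inv_mem' hx φ h := by simpa using hx φ h

/-- The elements of `Kˣ` that are squares in the completion at a place. -/
noncomputable def localSquares : Place K → Subgroup Kˣ :=
  Sum.elim infiniteLocalSquares finiteLocalSquares

lemma sq_mem_finiteLocalSquares (v : FinitePrime K) (x : Kˣ) : x ^ 2 ∈ finiteLocalSquares v := by
  refine ⟨x⁻¹, ?_⟩
  simpa [← mul_pow] using valuation_four_pos v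

omit [NumberField K] in
lemma sq_mem_infiniteLocalSquares (w : InfinitePlace K) (x : Kˣ) :
    x ^ 2 ∈ infiniteLocalSquares w := by
  intro φ _
  have : φ x ≠ 0 := (map_ne_zero φ).2 x.ne_zero
  simpa using pow_pos_of_ne_zero this
where
  pow_pos_of_ne_zero {r : ℝ} (h : r ≠ 0) : 0 < r ^ 2 := by positivity

lemma sq_mem_localSquares : ∀ (p : Place K) (x : Kˣ), x ^ 2 ∈ localSquares p
  | .inl w => sq_mem_infiniteLocalSquares w
  | .inr v => sq_mem_finiteLocalSquares v

/-- One step of Newton's iteration `y ↦ y / (1 + 2m)`, where `x y² = 1 + 4m`. -/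
lemma exists_mul_sq_eq_one_add (v : FinitePrime K) {x y : Kˣ} {m : K}
    (hxy : (x : K) * y ^ 2 = 1 + 4 * m) (hm : v.valuation K m < 1) :
    ∃ (y' : Kˣ) (m' : K), (x : K) * y' ^ 2 = 1 + 4 * m' ∧
      v.valuation K m' = v.valuation K m ^ 2 := by
  have hval : v.valuation K (1 + 2 * m) = 1 := valuation_one_add v (by
    rw [map_mul]; exact (mul_le_of_le_one_left' (valuation_ofNat_le_one v 2)).trans_lt hm)
  have h0 : 1 + 2 * m ≠ 0 := by
    rw [← Valuation.ne_zero_iff (v.valuation K), hval]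
    exact one_ne_zero
  refine ⟨y / Units.mk0 _ h0, -m ^ 2 / (1 + 2 * m) ^ 2, ?_, by simp [hval]⟩
  push_cast
  rw [Units.val_mk0, div_pow, mul_div_assoc', hxy, div_eq_iff (pow_ne_zero 2 h0), add_mul,
    mul_assoc, div_mul_cancel₀ _ (pow_ne_zero 2 h0)]
  ring

lemma exists_valuation_mul_sq_sub_one_lt (v : FinitePrime K) {x : Kˣ}
    (hx : x ∈ finiteLocalSquares v) {ε : ℤᵐ⁰} (hε : ε ≠ 0) :
    ∃ y : Kˣ, v.valuation K ((x : K) * (y : K) ^ 2 - 1) < ε := by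
  obtain ⟨y₀, hy₀⟩ := hx
  set m₀ : K := (x * y₀ ^ 2 - 1) / 4 with hm₀
  have hlt : v.valuation K m₀ < 1 := by
    rwa [hm₀, map_div₀, div_lt_one₀ (valuation_four_pos v)]
  have newton (n : ℕ) : ∃ (y : Kˣ) (m : K), (x : K) * (y : K) ^ 2 = 1 + 4 * m ∧
      v.valuation K m ≤ v.valuation K m₀ ^ (n + 1) := by
    induction n with
    | zero => exact ⟨y₀, m₀, by rw [hm₀]; field_simp; ring, by simp⟩
    | succ n ih =>
      obtain ⟨y, m, hxy, hm⟩ := ih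
      obtain ⟨y', m', hxy', hm'⟩ :=
        exists_mul_sq_eq_one_add v hxy (hm.trans_lt (pow_lt_one₀ zero_le hlt n.succ_ne_zero))
      refine ⟨y', m', hxy', ?_⟩
      calc v.valuation K m' = v.valuation K m ^ 2 := hm'
        _ ≤ (v.valuation K m₀ ^ (n + 1)) ^ 2 := pow_le_pow_left' hm 2
        _ = v.valuation K m₀ ^ (2 * n + 2) := by rw [← pow_mul]; ring_nf
        _ ≤ v.valuation K m₀ ^ (n + 2) := pow_le_pow_right_of_le_one' hlt.le (by omega)
  obtain ⟨n, hn⟩ := exists_pow_lt₀ hlt (Units.mk0 ε hε)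
  obtain ⟨y, m, hxy, hm⟩ := newton n
  refine ⟨y, ?_⟩
  calc v.valuation K ((x : K) * y ^ 2 - 1) = v.valuation K 4 * v.valuation K m := by
        rw [hxy, add_sub_cancel_left, map_mul]
    _ ≤ v.valuation K m₀ ^ (n + 1) := (mul_le_of_le_one_left' (valuation_ofNat_le_one v 4)).trans hm
    _ ≤ v.valuation K m₀ ^ n := pow_le_pow_right_of_le_one' hlt.le n.le_succ
    _ < ε := hn

lemma div_mem_finiteLocalSquares (v : FinitePrime K) {x y : Kˣ}
    (h : v.valuation K ((x : K) - y) < v.valuation K (4 : K) * v.valuation K (y : K)) :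
    x / y ∈ finiteLocalSquares v := by
  refine ⟨1, ?_⟩
  have hdiv : ((x / y : Kˣ) : K) * ((1 : Kˣ) : K) ^ 2 - 1 = ((x : K) - y) / y := by
    push_cast; field_simp
  rwa [hdiv, map_div₀, div_lt_iff₀ (zero_lt_iff.2 ((Valuation.ne_zero_iff _).2 y.ne_zero))]

lemma ord_eq_of_valuation_sub_lt {v : FinitePrime K} {x y : Kˣ}
    (h : v.valuation K ((x : K) - y) < v.valuation K (y : K)) : ord v x = ord v y := by
  rw [← valuation_eq_iff, ← add_sub_cancel (y : K) x, Valuation.map_add_eq_of_lt_left _ h]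

lemma even_ord_of_mem_finiteLocalSquares {v : FinitePrime K} {x : Kˣ}
    (hx : x ∈ finiteLocalSquares v) : Even (ord v x) := by
  obtain ⟨y, hy⟩ := hx
  have hord : ord v (x * y ^ 2) = ord v (1 : Kˣ) := ord_eq_of_valuation_sub_lt (by
    simpa using hy.trans_le (valuation_ofNat_le_one v 4))
  simp only [ord_mul, ord_pow, ord_one] at hord
  exact ⟨-ord v y, by push_cast at hord; omega⟩

omit [NumberField K] in
lemma div_mem_infiniteLocalSquares {w : InfinitePlace K} {x y : Kˣ}
    (h : w ((x : K) - y) < w (y : K)) : x / y ∈ infiniteLocalSquares w := by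
  rintro φ rfl
  rw [realPlace_apply, realPlace_apply, map_sub] at h
  have hy : φ y ≠ 0 := (map_ne_zero φ).2 y.ne_zero
  rw [Units.val_div_eq_div_val, map_div₀]
  rcases lt_or_gt_of_ne hy with hneg | hpos
  · rw [abs_of_neg hneg, abs_lt] at h
    exact div_pos_of_neg_of_neg (by linarith) hneg
  · rw [abs_of_pos hpos, abs_lt] at h
    exact div_pos (by linarith) hpos

lemma exists_unit_weak_approximation (S : Finset (FinitePrime K)) (x : FinitePrime K → K)
    {ε : FinitePrime K → ℤᵐ⁰} (hε : ∀ v, ε v ≠ 0) (y : InfinitePlace K → Kˣ) :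
    ∃ z : Kˣ, (∀ v ∈ S, v.valuation K ((z : K) - x v) < ε v) ∧
      ∀ w : InfinitePlace K, w ((z : K) - y w) < w (y w : K) := by
  obtain ⟨w₀, hmin⟩ := Finite.exists_min fun w : InfinitePlace K ↦ w (y w : K)
  obtain ⟨z, hfin, hinf⟩ := weak_approximation S x hε (fun w ↦ (y w : K))
    (InfinitePlace.pos_iff.2 (y w₀).ne_zero)
  have hz : z ≠ 0 := by
    rintro rfl
    exact (hinf w₀).ne (by rw [zero_sub]; exact w₀.1.map_neg _)
  exact ⟨Units.mk0 z hz, hfin, fun w ↦ (hinf w).trans_le (hmin w)⟩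

lemma exists_localSquares_approximation {S T : Finset (FinitePrime K)} (hST : Disjoint S T)
    (x : Place K → Kˣ) (a : FinitePrime K → K) {ε : FinitePrime K → ℤᵐ⁰} (hε : ∀ v, ε v ≠ 0) :
    ∃ z : Kˣ, (∀ w, z / x (.inl w) ∈ infiniteLocalSquares w) ∧
      (∀ v ∈ S, z / x (.inr v) ∈ finiteLocalSquares v ∧ ord v z = ord v (x (.inr v))) ∧
      ∀ v ∈ T, v.valuation K ((z : K) - a v) < ε v := by
  classical
  obtain ⟨z, hfin, hinf⟩ := exists_unit_weak_approximation (S ∪ T)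
    (fun v ↦ if v ∈ T then a v else x (.inr v))
    (ε := fun v ↦ if v ∈ T then ε v else v.valuation K 4 * v.valuation K (x (.inr v) : K))
    (fun v ↦ by split_ifs; exacts [hε v, by simp]) (fun w ↦ x (.inl w))
  refine ⟨z, fun w ↦ div_mem_infiniteLocalSquares (hinf w), fun v hv ↦ ?_, fun v hv ↦ ?_⟩
  · have hclose := hfin v (Finset.mem_union_left _ hv)
    simp only [Finset.disjoint_left.1 hST hv, if_false] at hclose
    exact ⟨div_mem_finiteLocalSquares v hclose, ord_eq_of_valuation_sub_lt
      (hclose.trans_le (mul_le_of_le_one_left' (valuation_ofNat_le_one v 4)))⟩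
  · simpa only [hv, if_true] using hfin v (Finset.mem_union_right _ hv)

end LocalSquares

section QuadraticNorms

variable {F : Type*} [Field F]

/-- The elements of `Fˣ` that are values of the form `x² - c y²`; if `c` is not a square, these
are the norms from `F(√c)`. -/
def quadraticNorms (c : Fˣ) : Subgroup Fˣ where
  carrier := {u | ∃ x y : F, (u : F) = x ^ 2 - c * y ^ 2}
  one_mem' := ⟨1, 0, by simp⟩
  mul_mem' := by
    rintro u u' ⟨x, y, h⟩ ⟨x', y', h'⟩
    refine ⟨x * x' + c * y * y', x * y' + x' * y, ?_⟩
    rw [Units.val_mul, h, h']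
    ring
  inv_mem' := by
    rintro u ⟨x, y, h⟩
    refine ⟨x / u, y / u, ?_⟩
    rw [div_pow, div_pow, mul_div_assoc', ← sub_div, ← h]
    push_cast
    field_simp

lemma sq_mem_quadraticNorms (c x : Fˣ) : x ^ 2 ∈ quadraticNorms c := ⟨x, 0, by simp⟩

lemma mem_quadraticNorms_of_isSquare {c u : Fˣ} (hu : IsSquare u) : u ∈ quadraticNorms c := by
  obtain ⟨x, rfl⟩ := hu
  rw [← sq]
  exact sq_mem_quadraticNorms c x

lemma neg_self_mem_quadraticNorms (c : Fˣ) : -c ∈ quadraticNorms c := ⟨0, 1, by simp⟩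

lemma isSquare_or_mem_quadraticNorms_symm {u x : Fˣ} (h : x ∈ quadraticNorms u) :
    IsSquare x ∨ u ∈ quadraticNorms x := by
  obtain ⟨α, β, h⟩ := h
  rcases eq_or_ne β 0 with rfl | hβ
  · have hα : α ≠ 0 := by rintro rfl; simp at h
    exact .inl ⟨Units.mk0 α hα, Units.ext (by simpa [sq] using h)⟩
  · refine .inr ⟨α / β, 1 / β, ?_⟩
    rw [h]
    field_simp
    ring

lemma mem_quadraticNorms_mul {u e x : Fˣ} (hue : ¬ IsSquare (u * e)) (hu : x ∈ quadraticNorms u)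
    (he : x ∈ quadraticNorms e) : x ∈ quadraticNorms (u * e) := by
  rcases isSquare_or_mem_quadraticNorms_symm hu with hx | hu
  · exact mem_quadraticNorms_of_isSquare hx
  rcases isSquare_or_mem_quadraticNorms_symm he with hx | he
  · exact mem_quadraticNorms_of_isSquare hx
  exact (isSquare_or_mem_quadraticNorms_symm (mul_mem hu he)).resolve_left hue

/-- The elements of `Kˣ` that are norms from the quadratic extension by `√c` locally at a
place. -/
noncomputable def localNorms (p : Place K) (c : Kˣ) : Subgroup Kˣ :=
  quadraticNorms c ⊔ localSquares p

lemma localSquares_le_localNorms (p : Place K) (c : Kˣ) : localSquares p ≤ localNorms p c :=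
  le_sup_right

lemma quadraticNorms_le_localNorms (p : Place K) (c : Kˣ) : quadraticNorms c ≤ localNorms p c :=
  le_sup_left

lemma mem_localNorms {p : Place K} {c u : Kˣ} :
    u ∈ localNorms p c ↔ ∃ n ∈ quadraticNorms c, u / n ∈ localSquares p := by
  rw [localNorms, Subgroup.mem_sup]
  refine exists_congr fun n ↦ and_congr_right fun _ ↦ ⟨?_, fun h ↦ ⟨_, h, by simp⟩⟩
  rintro ⟨s, hs, rfl⟩
  simpa using hs

end QuadraticNorms

section SquaresOfSubgroups

variable {G : Type*} [CommGroup G]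

lemma relIndex_le_card_of_fiber {H V : Subgroup G} {α : Type*} [Finite α] (f : G → α)
    (hf : ∀ x ∈ V, ∀ y ∈ V, f x = f y → x / y ∈ H) :
    H.relIndex V ≤ Nat.card α ∧ H.relIndex V ≠ 0 := by
  have hinj : Function.Injective fun q : V ⧸ H.subgroupOf V ↦ f ((Quotient.out q : V) : G) := by
    intro a b hab
    have hdiv := hf _ (Quotient.out b).2 _ (Quotient.out a).2 hab.symm
    rw [← Quotient.out_eq a, ← Quotient.out_eq b]
    refine QuotientGroup.eq.2 (Subgroup.mem_subgroupOf.2 ?_)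
    simpa [div_eq_inv_mul] using hdiv
  have : Finite (V ⧸ H.subgroupOf V) := Finite.of_injective _ hinj
  exact ⟨Nat.card_le_card_of_injective _ hinj, Subgroup.index_ne_zero_of_finite⟩

/-- The subgroup of the squares of the elements of `V`. -/
def squares (V : Subgroup G) : Subgroup G := V.map (powMonoidHom 2)

/-- The subgroup of the elements whose square lies in `H`. -/
def squareRoots (H : Subgroup G) : Subgroup G := H.comap (powMonoidHom 2)

lemma mem_squares {V : Subgroup G} {x : G} : x ∈ squares V ↔ ∃ y ∈ V, y ^ 2 = x := by
  simp [squares, Subgroup.mem_map]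

lemma mem_squareRoots {V : Subgroup G} {x : G} : x ∈ squareRoots V ↔ x ^ 2 ∈ V := by
  simp [squareRoots]

lemma squares_le (V : Subgroup G) : squares V ≤ V := by
  intro x hx
  obtain ⟨y, hy, rfl⟩ := mem_squares.1 hx
  exact V.pow_mem hy 2

lemma relIndex_squares_sup {H V : Subgroup G} (hHV : H ≤ V) (h0 : H.relIndex V ≠ 0) :
    (squares V ⊔ H).relIndex V = H.relIndex (squareRoots H ⊓ V) := by
  have hroots : H ≤ squareRoots H ⊓ V :=
    le_inf (fun x hx ↦ mem_squareRoots.2 (H.pow_mem hx 2)) hHV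
  have hfirst : (squareRoots H ⊓ V).relIndex V = H.relIndex (squares V ⊔ H) := by
    rw [Subgroup.inf_relIndex_right, Subgroup.relIndex_sup_right, squareRoots, squares,
      Subgroup.relIndex_comap]
  have hsecond : H.relIndex (squares V ⊔ H) * (squares V ⊔ H).relIndex V = H.relIndex V :=
    Subgroup.relIndex_mul_relIndex H _ V le_sup_right (sup_le (squares_le V) hHV)
  refine mul_left_cancel₀ (left_ne_zero_of_mul (hsecond ▸ h0)) ?_
  rw [hsecond, ← Subgroup.relIndex_mul_relIndex H _ V hroots inf_le_right, hfirst, mul_comm]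

lemma relIndex_zpowers_dvd_two (H : Subgroup G) {g : G} (hg : g ^ 2 = 1) :
    H.relIndex (Subgroup.zpowers g) ∣ 2 := by
  refine Subgroup.relIndex_dvd_two_iff.2 ⟨g, Subgroup.mem_zpowers _, fun b hb ↦ ?_⟩
  obtain ⟨k, rfl⟩ := Subgroup.mem_zpowers_iff.1 hb
  rcases Int.even_or_odd' k with ⟨m, rfl | rfl⟩
  · exact .inr (by simp [zpow_mul, hg])
  · exact .inl (by simp [zpow_add, zpow_mul, hg, ← sq])

end SquaresOfSubgroups

section HigherUnits

lemma lt_exp_neg_iff {x : ℤᵐ⁰} (n : ℕ) :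
    x < exp (-(n : ℤ)) ↔ x ≤ exp (-((n + 1 : ℕ) : ℤ)) := by
  rcases eq_or_ne x 0 with rfl | hx
  · simp
  · rw [← exp_log hx, exp_lt_exp, exp_le_exp]
    omega

/-- The elements of `Kˣ` that are units at `v` congruent to `1` modulo `v ^ m`; for `m = 0` these
are all the units at `v`. -/
noncomputable def higherUnits (v : FinitePrime K) (m : ℕ) : Subgroup Kˣ where
  carrier := {x | ord v x = 0 ∧ v.valuation K ((x : K) - 1) ≤ exp (-(m : ℤ))}
  one_mem' := by simp
  mul_mem' := by
    rintro x y ⟨hx, hx1⟩ ⟨hy, hy1⟩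
    refine ⟨by simp [hx, hy], ?_⟩
    have hsub : ((x * y : Kˣ) : K) - 1 = x * ((y : K) - 1) + ((x : K) - 1) := by push_cast; ring
    rw [hsub]
    refine Valuation.map_add_le _ ?_ hx1
    rwa [map_mul, (valuation_eq_one_iff v x).2 hx, one_mul]
  inv_mem' := by
    rintro x ⟨hx, hx1⟩
    refine ⟨by simp [hx], ?_⟩
    have hsub : ((x⁻¹ : Kˣ) : K) - 1 = -((x⁻¹ : Kˣ) * ((x : K) - 1)) := by
      rw [mul_sub, Units.inv_mul]; ring
    rwa [hsub, Valuation.map_neg, map_mul, (valuation_eq_one_iff v x⁻¹).2 (by simp [hx]), one_mul]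

lemma mem_higherUnits_zero {v : FinitePrime K} {x : Kˣ} : x ∈ higherUnits v 0 ↔ ord v x = 0 := by
  refine ⟨fun h ↦ h.1, fun h ↦ ⟨h, ?_⟩⟩
  rw [Nat.cast_zero, neg_zero, exp_zero]
  exact (Valuation.map_sub _ _ _).trans (max_le ((valuation_eq_one_iff v x).2 h).le (by simp))

lemma higherUnits_antitone (v : FinitePrime K) : Antitone (higherUnits v) :=
  fun _ _ hmn _ hx ↦ ⟨hx.1, hx.2.trans (exp_le_exp.2 (by omega))⟩

lemma exists_residueMap (v : FinitePrime K) :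
    ∃ f : K → 𝓞 K ⧸ v.asIdeal, ∀ x y : K, v.valuation K x ≤ 1 → v.valuation K y ≤ 1 →
      f x = f y → v.valuation K (x - y) < 1 := by
  have happrox (x : K) : ∃ a : 𝓞 K, v.valuation K x ≤ 1 →
      v.valuation K (x - algebraMap (𝓞 K) K a) < 1 := by
    by_cases hx : v.valuation K x ≤ 1
    · exact (exists_integer_valuation_sub_lt_one v hx).imp fun _ h _ ↦ h
    · exact ⟨0, fun h ↦ absurd h hx⟩
  choose g hg using happrox
  refine ⟨fun x ↦ Ideal.Quotient.mk _ (g x), fun x y hx hy hxy ↦ ?_⟩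
  have hgxy : v.valuation K (algebraMap (𝓞 K) K (g x - g y)) < 1 := by
    rw [valuation_lt_one_iff_mem]
    exact Ideal.Quotient.eq.1 hxy
  have hsum : x - y = (x - algebraMap (𝓞 K) K (g x)) + algebraMap (𝓞 K) K (g x - g y) -
      (y - algebraMap (𝓞 K) K (g y)) := by
    rw [map_sub]; ring
  rw [hsum]
  exact Valuation.map_sub_lt _ (Valuation.map_add_lt _ (hg x hx) hgxy) (hg y hy)

lemma relIndex_higherUnits_succ (v : FinitePrime K) (m : ℕ) :
    (higherUnits v (m + 1)).relIndex (higherUnits v m) ≤ Ideal.absNorm v.asIdeal ∧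
      (higherUnits v (m + 1)).relIndex (higherUnits v m) ≠ 0 := by
  obtain ⟨π, hπ⟩ := exists_ord_eq_one K v
  obtain ⟨f, hf⟩ := exists_residueMap v
  have : Finite (𝓞 K ⧸ v.asIdeal) := Ideal.finiteQuotientOfFreeOfNeBot _ v.ne_bot
  rw [Ideal.absNorm_apply, Submodule.cardQuot_apply]
  refine relIndex_le_card_of_fiber (α := 𝓞 K ⧸ v.asIdeal)
    (fun x : Kˣ ↦ f (((x : K) - 1) / (π : K) ^ m)) ?_
  intro x hx y hy hxy
  have hπm : v.valuation K ((π : K) ^ m) = exp (-(m : ℤ)) := by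
    simpa [hπ] using valuation_eq_exp_neg_ord v (π ^ m)
  have hpos : (0 : ℤᵐ⁰) < exp (-(m : ℤ)) := by simp
  have hclose := hf _ _ (by rw [map_div₀, hπm, div_le_one₀ hpos]; exact hx.2)
    (by rw [map_div₀, hπm, div_le_one₀ hpos]; exact hy.2) hxy
  rw [← sub_div, map_div₀, hπm, div_lt_one₀ hpos] at hclose
  refine ⟨by simp [hx.1, hy.1], ?_⟩
  have hdiv : ((x / y : Kˣ) : K) - 1 = ((x : K) - 1 - (y - 1)) * ((y⁻¹ : Kˣ) : K) := by
    push_cast; field_simp; ring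
  rw [hdiv, map_mul, (valuation_eq_one_iff v y⁻¹).2 (by simp [hy.1]), mul_one]
  exact (lt_exp_neg_iff m).1 hclose

lemma relIndex_higherUnits_add (v : FinitePrime K) (m k : ℕ) :
    (higherUnits v (m + k)).relIndex (higherUnits v m) ≤ Ideal.absNorm v.asIdeal ^ k ∧
      (higherUnits v (m + k)).relIndex (higherUnits v m) ≠ 0 := by
  induction k with
  | zero => simp
  | succ k ih =>
    obtain ⟨hle, hne⟩ := relIndex_higherUnits_succ v (m + k)
    rw [← add_assoc, ← Subgroup.relIndex_mul_relIndex _ (higherUnits v (m + k)) (higherUnits v m)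
      (higherUnits_antitone v (by omega)) (higherUnits_antitone v (by omega)), pow_succ']
    exact ⟨Nat.mul_le_mul hle ih.1, mul_ne_zero hne ih.2⟩

end HigherUnits

section IndexOfLocalSquares

/-- The order of `2` at a finite prime. -/
noncomputable def ordTwo (v : FinitePrime K) : ℕ := (ord v (Units.mk0 (2 : K) two_ne_zero)).toNat

lemma valuation_two (v : FinitePrime K) : v.valuation K (2 : K) = exp (-(ordTwo v : ℤ)) := by
  have hord := valuation_eq_exp_neg_ord v (Units.mk0 (2 : K) two_ne_zero)
  have hle := valuation_ofNat_le_one (K := K) v 2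
  rw [Units.val_mk0] at hord
  rw [hord, ← exp_zero, exp_le_exp] at hle
  rw [hord, ordTwo, Int.toNat_of_nonneg (by omega)]

lemma valuation_four (v : FinitePrime K) :
    v.valuation K (4 : K) = exp (-((2 * ordTwo v : ℕ) : ℤ)) := by
  have : (4 : K) = 2 * 2 := by norm_num
  rw [this, map_mul, valuation_two, ← exp_add]
  congr 1
  push_cast
  ring

lemma finiteLocalSquares_inf_units (v : FinitePrime K) :
    finiteLocalSquares v ⊓ higherUnits v 0 =
      squares (higherUnits v 0) ⊔ higherUnits v (2 * ordTwo v + 1) := by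
  refine le_antisymm ?_ (sup_le (fun x hx ↦ ?_) fun x hx ↦ ?_)
  · rintro x ⟨⟨y, hy⟩, hx⟩
    replace hx := mem_higherUnits_zero.1 hx
    have hord : ord v (x * y ^ 2) = 0 := by
      rw [← ord_one (K := K) v]
      refine ord_eq_of_valuation_sub_lt ?_
      simpa using hy.trans_le (valuation_ofNat_le_one v 4)
    rw [valuation_four, lt_exp_neg_iff] at hy
    have hx_eq : x = y⁻¹ ^ 2 * (x * y ^ 2) := by rw [mul_comm x, inv_pow, inv_mul_cancel_left]
    rw [hx_eq]
    refine Subgroup.mul_mem_sup (mem_squares.2 ⟨y⁻¹, mem_higherUnits_zero.2 ?_, rfl⟩)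
      ⟨hord, by push_cast at hy ⊢; exact hy⟩
    simpa [hx] using hord
  · obtain ⟨y, -, rfl⟩ := mem_squares.1 hx
    exact ⟨sq_mem_finiteLocalSquares v y, squares_le _ hx⟩
  · refine ⟨⟨1, ?_⟩, higherUnits_antitone v (Nat.zero_le _) hx⟩
    rw [valuation_four, lt_exp_neg_iff]
    simpa using hx.2

/-- If `x² ≡ 1 mod 4𝔭`, then `x ≡ ±1 mod 2𝔭`, because `x² - 1 = (x - 1)(x + 1)`. -/
lemma squareRoots_higherUnits_inf_le (v : FinitePrime K) :
    squareRoots (higherUnits v (2 * ordTwo v + 1)) ⊓ higherUnits v 0 ≤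
      Subgroup.zpowers (-1) ⊔ higherUnits v (ordTwo v + 1) := by
  rintro x ⟨hsq, hx⟩
  replace hx := mem_higherUnits_zero.1 hx
  have hprod := (mem_squareRoots.1 hsq).2
  have hfactor : ((x ^ 2 : Kˣ) : K) - 1 = ((x : K) - 1) * (x + 1) := by push_cast; ring
  rw [hfactor, map_mul, ← lt_exp_neg_iff] at hprod
  have hor : v.valuation K ((x : K) - 1) < exp (-(ordTwo v : ℤ)) ∨
      v.valuation K ((x : K) + 1) < exp (-(ordTwo v : ℤ)) := by
    by_contra! hcon
    have hlt := (mul_le_mul' hcon.1 hcon.2).trans_lt hprod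
    rw [← exp_add, exp_lt_exp] at hlt
    omega
  rw [lt_exp_neg_iff, lt_exp_neg_iff] at hor
  rcases hor with h | h
  · exact Subgroup.mem_sup_right ⟨hx, h⟩
  · rw [← neg_neg x, ← neg_one_mul (-x)]
    refine Subgroup.mul_mem_sup (Subgroup.mem_zpowers _) ⟨by simp [hx], ?_⟩
    rw [Units.val_neg, ← neg_add', Valuation.map_neg]
    exact h

lemma neg_one_notMem_higherUnits (v : FinitePrime K) {m : ℕ} (hm : ordTwo v < m) :
    (-1 : Kˣ) ∉ higherUnits v m := by
  intro h
  have h2 := h.2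
  have hneg : ((-1 : Kˣ) : K) - 1 = -2 := by push_cast; ring
  rw [hneg, Valuation.map_neg, valuation_two, exp_le_exp] at h2
  omega

lemma relIndex_finiteLocalSquares_units_eq (v : FinitePrime K) :
    (finiteLocalSquares v).relIndex (higherUnits v 0) = (higherUnits v (2 * ordTwo v + 1)).relIndex
      (squareRoots (higherUnits v (2 * ordTwo v + 1)) ⊓ higherUnits v 0) := by
  rw [← Subgroup.inf_relIndex_right, finiteLocalSquares_inf_units,
    ← relIndex_squares_sup (higherUnits_antitone v (Nat.zero_le _))]
  simpa using (relIndex_higherUnits_add v 0 (2 * ordTwo v + 1)).2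

lemma relIndex_finiteLocalSquares_units_ne_one (v : FinitePrime K) :
    (finiteLocalSquares v).relIndex (higherUnits v 0) ≠ 1 := by
  rw [relIndex_finiteLocalSquares_units_eq]
  intro h
  refine neg_one_notMem_higherUnits v (by omega) (Subgroup.relIndex_eq_one.1 h ⟨?_, ?_⟩)
  · exact mem_squareRoots.2 (by simp)
  · exact mem_higherUnits_zero.2 (by simp)

lemma relIndex_finiteLocalSquares_units (v : FinitePrime K) :
    (finiteLocalSquares v).relIndex (higherUnits v 0) ≤ 2 * Ideal.absNorm v.asIdeal ^ ordTwo v ∧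
      (finiteLocalSquares v).relIndex (higherUnits v 0) ≠ 0 := by
  set e := ordTwo v
  have htower : (higherUnits v (2 * e + 1)).relIndex (Subgroup.zpowers (-1) ⊔ higherUnits v (e + 1))
      = (higherUnits v (2 * e + 1)).relIndex (higherUnits v (e + 1)) *
        (higherUnits v (e + 1)).relIndex (Subgroup.zpowers (-1)) := by
    rw [← Subgroup.relIndex_mul_relIndex _ _ _ (higherUnits_antitone v (by omega)) le_sup_right,
      Subgroup.relIndex_sup_right]
  have hsign := relIndex_zpowers_dvd_two (higherUnits v (e + 1)) (g := -1) (by simp)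
  have hhigher := relIndex_higherUnits_add v (e + 1) e
  rw [show e + 1 + e = 2 * e + 1 by ring] at hhigher
  have hne : (higherUnits v (2 * e + 1)).relIndex (Subgroup.zpowers (-1) ⊔ higherUnits v (e + 1))
      ≠ 0 := by
    rw [htower]
    exact mul_ne_zero hhigher.2 (ne_zero_of_dvd_ne_zero two_ne_zero hsign)
  rw [relIndex_finiteLocalSquares_units_eq]
  have hroots := squareRoots_higherUnits_inf_le v
  refine ⟨(Subgroup.relIndex_le_of_le_right hroots hne).trans ?_,
    fun h ↦ hne (Subgroup.relIndex_eq_zero_of_le_right hroots h)⟩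
  rw [htower, mul_comm]
  exact Nat.mul_le_mul (Nat.le_of_dvd two_pos hsign) hhigher.1

lemma mem_units_sup_finiteLocalSquares {v : FinitePrime K} {x : Kˣ} (hx : Even (ord v x)) :
    x ∈ higherUnits v 0 ⊔ finiteLocalSquares v := by
  obtain ⟨k, hk⟩ := hx
  obtain ⟨π, hπ⟩ := exists_ord_eq_one K v
  rw [← mul_div_cancel (π ^ (2 * k)) x, mul_comm (π ^ (2 * k))]
  refine Subgroup.mul_mem_sup (mem_higherUnits_zero.2 ?_) ?_
  · simp [hπ, hk]; ring
  · rw [mul_comm 2 k, zpow_mul]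
    exact sq_mem_finiteLocalSquares v (π ^ k)

lemma index_finiteLocalSquares (v : FinitePrime K) :
    (finiteLocalSquares v).index ≤ 4 * Ideal.absNorm v.asIdeal ^ ordTwo v ∧
      (finiteLocalSquares v).index ≠ 0 := by
  have htower : (finiteLocalSquares v).relIndex (higherUnits v 0) *
      (higherUnits v 0 ⊔ finiteLocalSquares v).index = (finiteLocalSquares v).index := by
    rw [← Subgroup.relIndex_sup_right, Subgroup.relIndex_mul_index le_sup_right]
  have htwo : (higherUnits v 0 ⊔ finiteLocalSquares v).index ∣ 2 := by
    obtain ⟨π, hπ⟩ := exists_ord_eq_one K v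
    refine Subgroup.index_dvd_two_iff.2 ⟨π, fun b ↦ ?_⟩
    rcases Int.even_or_odd (ord v b) with hb | hb
    · exact .inr (mem_units_sup_finiteLocalSquares hb)
    · exact .inl (mem_units_sup_finiteLocalSquares (by rw [ord_mul, hπ]; exact hb.add_one))
  obtain ⟨hle, hne⟩ := relIndex_finiteLocalSquares_units v
  rw [← htower]
  refine ⟨?_, mul_ne_zero hne (ne_zero_of_dvd_ne_zero two_ne_zero htwo)⟩
  calc _ ≤ (2 * Ideal.absNorm v.asIdeal ^ ordTwo v) * 2 :=
        Nat.mul_le_mul hle (Nat.le_of_dvd two_pos htwo)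
    _ = _ := by ring

lemma exists_unit_notMem_finiteLocalSquares (v : FinitePrime K) :
    ∃ x : Kˣ, ord v x = 0 ∧ x ∉ finiteLocalSquares v := by
  by_contra! h
  exact relIndex_finiteLocalSquares_units_ne_one v
    (Subgroup.relIndex_eq_one.2 fun x hx ↦ h x (mem_higherUnits_zero.1 hx))

end IndexOfLocalSquares

/-! ### Independence of local conditions -/

section Independence

lemma exists_mem_localSquares_of_notMem {F : Finset (Place K)} {p : Place K} (hp : p ∉ F)
    (x : Kˣ) : ∃ z : Kˣ, z / x ∈ localSquares p ∧ ∀ q ∈ F, z ∈ localSquares q := by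
  classical
  obtain ⟨z, hinf, hfin, -⟩ := exists_localSquares_approximation
    (Finset.disjoint_empty_right (insert p F).toRight) (Function.update (fun _ ↦ 1) p x)
    (fun _ ↦ 1) (fun _ ↦ one_ne_zero)
  have hz : ∀ q ∈ insert p F,
      z / (Function.update (fun _ ↦ (1 : Kˣ)) p x) q ∈ localSquares q := by
    rintro (w | v) hq
    · exact hinf w
    · exact (hfin v (by simpa using hq)).1
  refine ⟨z, by simpa using hz p (by simp), fun q hq ↦ ?_⟩
  have hne : q ≠ p := ne_of_mem_of_not_mem hq hp
  simpa [Function.update_of_ne hne] using hz q (by simp [hq])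

lemma index_iInf_eq_prod_index (F : Finset (Place K)) {H : Place K → Subgroup Kˣ}
    (hH : ∀ p ∈ F, localSquares p ≤ H p) : (⨅ p ∈ F, H p).index = ∏ p ∈ F, (H p).index := by
  classical
  induction F using Finset.induction_on with
  | empty => simp
  | insert p F hp ih =>
    have hsup : (⨅ q ∈ F, H q) ⊔ H p = ⊤ := by
      refine eq_top_iff.2 fun x _ ↦ ?_
      obtain ⟨z, hzx, hz⟩ := exists_mem_localSquares_of_notMem hp x
      rw [show x = z * (z / x)⁻¹ by simp]
      refine Subgroup.mul_mem_sup ?_ (inv_mem (hH p (by simp) hzx))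
      simp only [Subgroup.mem_iInf]
      exact fun q hq ↦ hH q (by simp [hq]) (hz q hq)
    have htower := Subgroup.relIndex_mul_index
      (H := H p ⊓ ⨅ q ∈ F, H q) (K := ⨅ q ∈ F, H q) inf_le_right
    rw [Subgroup.inf_relIndex_right] at htower
    rw [Finset.iInf_insert, Finset.prod_insert hp, ← ih fun q hq ↦ hH q (by simp [hq]), ← htower,
      ← Subgroup.relIndex_sup_right, hsup, Subgroup.relIndex_top_right]

end Independence

section ProductOfIndices

omit [NumberField K] in
lemma mem_infiniteLocalSquares_or_neg_mem (w : InfinitePlace K) (x : Kˣ) :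
    x ∈ infiniteLocalSquares w ∨ -x ∈ infiniteLocalSquares w := by
  by_contra! h
  simp only [infiniteLocalSquares, Subgroup.mem_mk, Submonoid.mem_mk, Subsemigroup.mem_mk,
    Set.mem_ofPred_eq, not_forall, not_lt] at h
  obtain ⟨⟨φ, hφ, hφx⟩, ψ, hψ, hψx⟩ := h
  obtain rfl : φ = ψ := realPlace_injective (hφ.trans hψ.symm)
  have : φ x ≠ 0 := (map_ne_zero φ).2 x.ne_zero
  rw [Units.val_neg, map_neg, neg_nonpos] at hψx
  exact this (le_antisymm hφx hψx)

omit [NumberField K] in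
lemma index_infiniteLocalSquares_dvd_two (w : InfinitePlace K) :
    (infiniteLocalSquares w).index ∣ 2 :=
  Subgroup.index_dvd_two_iff.2 ⟨-1, fun x ↦ by
    simpa using (mem_infiniteLocalSquares_or_neg_mem w x).symm⟩

omit [NumberField K] in
lemma isReal_realPlace (φ : K →+* ℝ) : (realPlace φ).IsReal := by
  refine ⟨Complex.ofRealHom.comp φ, ?_, rfl⟩
  rw [ComplexEmbedding.isReal_iff]
  ext x
  simp [ComplexEmbedding.conjugate]

omit [NumberField K] in
lemma infiniteLocalSquares_eq_top_of_isComplex {w : InfinitePlace K} (hw : w.IsComplex) :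
    infiniteLocalSquares w = ⊤ := by
  refine eq_top_iff.2 fun x _ φ hφ ↦ absurd (hφ ▸ isReal_realPlace φ) ?_
  exact InfinitePlace.not_isReal_iff_isComplex.2 hw

/-- The finite set of places `S ∪ {v ∣ ∞}`. -/
noncomputable def sPlaces (S : Finset (FinitePrime K)) : Finset (Place K) := by
  classical exact (Finset.univ : Finset (InfinitePlace K)).disjSum S

@[simp] lemma inl_mem_sPlaces (S : Finset (FinitePrime K)) (w : InfinitePlace K) :
    Sum.inl w ∈ sPlaces S := by
  simp [sPlaces]

@[simp] lemma inr_mem_sPlaces {S : Finset (FinitePrime K)} {v : FinitePrime K} :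
    Sum.inr v ∈ sPlaces S ↔ v ∈ S := by
  simp [sPlaces]

lemma card_sPlaces (S : Finset (FinitePrime K)) :
    (sPlaces S).card = Fintype.card (InfinitePlace K) + S.card := by
  simp [sPlaces, Finset.card_disjSum]

lemma natAbs_norm_two : (Algebra.norm ℤ (2 : 𝓞 K)).natAbs = 2 ^ Module.finrank ℚ K := by
  have h := Algebra.norm_algebraMap (S := 𝓞 K) (2 : ℤ)
  rw [map_ofNat] at h
  simp [h, Int.natAbs_pow, RingOfIntegers.rank]

lemma prod_absNorm_pow_le (S : Finset (FinitePrime K)) :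
    ∏ v ∈ S, Ideal.absNorm v.asIdeal ^ ordTwo v ≤ 2 ^ Module.finrank ℚ K := by
  have hdvd : ∏ v ∈ S, v.asIdeal ^ ordTwo v ∣ Ideal.span {(2 : 𝓞 K)} := by
    refine Finset.prod_dvd_of_coprime (fun v _ w _ hvw ↦ IsCoprime.pow ?_) fun v _ ↦ ?_
    · rw [Ideal.isCoprime_iff_sup_eq]
      exact v.isMaximal.coprime_of_ne w.isMaximal fun h ↦ hvw (HeightOneSpectrum.ext h)
    · rw [Ideal.dvd_span_singleton, ← intValuation_le_pow_iff_mem,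
        ← valuation_of_algebraMap (K := K)]
      change v.valuation K (algebraMap (𝓞 K) K 2) ≤ _
      rw [map_ofNat, valuation_two v]
  have hnorm := Ideal.absNorm_dvd_absNorm_of_le (Ideal.le_of_dvd hdvd)
  rw [Ideal.absNorm_span_singleton, natAbs_norm_two] at hnorm
  simpa using Nat.le_of_dvd (by positivity) hnorm

lemma prod_index_infiniteLocalSquares_le :
    ∏ w : InfinitePlace K, (infiniteLocalSquares w).index ≤ 2 ^ InfinitePlace.nrRealPlaces K := by
  classical
  have hle (w : InfinitePlace K) :
      (infiniteLocalSquares w).index ≤ if w.IsReal then 2 else 1 := by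
    split_ifs with h
    · exact Nat.le_of_dvd two_pos (index_infiniteLocalSquares_dvd_two w)
    · rw [infiniteLocalSquares_eq_top_of_isComplex (InfinitePlace.not_isReal_iff_isComplex.1 h),
        Subgroup.index_top]
  refine (Finset.prod_le_prod' fun w _ ↦ hle w).trans (le_of_eq ?_)
  simp [Finset.prod_ite, InfinitePlace.nrRealPlaces, Fintype.card_subtype]

lemma prod_index_localSquares_le (S : Finset (FinitePrime K)) :
    ∏ p ∈ sPlaces S, (localSquares p).index ≤ 4 ^ (sPlaces S).card := by
  have hfin : ∏ v ∈ S, (finiteLocalSquares v).index ≤ 4 ^ S.card * 2 ^ Module.finrank ℚ K :=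
    calc _ ≤ ∏ v ∈ S, (4 * Ideal.absNorm v.asIdeal ^ ordTwo v) :=
          Finset.prod_le_prod' fun v _ ↦ (index_finiteLocalSquares v).1
      _ = 4 ^ S.card * ∏ v ∈ S, Ideal.absNorm v.asIdeal ^ ordTwo v := by
          rw [Finset.prod_mul_distrib, Finset.prod_const]
      _ ≤ _ := Nat.mul_le_mul_left _ (prod_absNorm_pow_le S)
  rw [card_sPlaces, sPlaces, Finset.prod_disjSum]
  refine (Nat.mul_le_mul prod_index_infiniteLocalSquares_le hfin).trans (le_of_eq ?_)
  rw [← InfinitePlace.card_add_two_mul_card_eq_rank K,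
    InfinitePlace.card_eq_nrRealPlaces_add_nrComplexPlaces K, show (4 : ℕ) = 2 ^ 2 by norm_num,
    ← pow_mul, ← pow_mul, ← pow_add, ← pow_add]
  ring_nf

end ProductOfIndices

section OddPrimes

/-- A finite prime is odd if it does not divide `2`. -/
def IsOdd (v : FinitePrime K) : Prop := v.valuation K (2 : K) = 1

variable {v : FinitePrime K} {c u : Kˣ}

lemma IsOdd.valuation_four (h : IsOdd v) : v.valuation K (4 : K) = 1 := by
  rw [show (4 : K) = 2 * 2 by norm_num, map_mul, h, one_mul]

lemma IsOdd.ordTwo_eq_zero (h : IsOdd v) : ordTwo v = 0 := by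
  have htwo := valuation_two v
  rw [h, ← exp_zero, exp_inj] at htwo
  omega

lemma IsOdd.div_mem_finiteLocalSquares (h : IsOdd v) {x y : Kˣ}
    (hxy : v.valuation K ((x : K) - y) < v.valuation K (y : K)) : x / y ∈ finiteLocalSquares v :=
  HasseSchilling.div_mem_finiteLocalSquares v (by rwa [h.valuation_four, one_mul])

lemma IsOdd.relIndex_finiteLocalSquares (h : IsOdd v) :
    (finiteLocalSquares v).relIndex (higherUnits v 0) = 2 := by
  have hle := relIndex_finiteLocalSquares_units v
  have hne := relIndex_finiteLocalSquares_units_ne_one v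
  rw [h.ordTwo_eq_zero, pow_zero] at hle
  omega

/-- If one of three elements with `a + b = n` is strictly smaller than the other two, then these
two agree up to sign and local squares. -/
lemma IsOdd.trichotomy_of_add_eq (h : IsOdd v) {a b n : Kˣ} (habn : (a : K) + b = n) :
    n / a ∈ finiteLocalSquares v ∨ n / b ∈ finiteLocalSquares v ∨
      a / -b ∈ finiteLocalSquares v ∨ ord v a = ord v b ∧ ord v n = ord v a := by
  rcases lt_trichotomy (v.valuation K (a : K)) (v.valuation K (b : K)) with hlt | heq | hlt
  · exact .inr (.inl (h.div_mem_finiteLocalSquares (by rwa [← habn, add_sub_cancel_right])))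
  · rcases lt_or_ge (v.valuation K (n : K)) (v.valuation K (b : K)) with hn | hn
    · refine .inr (.inr (.inl (h.div_mem_finiteLocalSquares ?_)))
      rwa [Units.val_neg, sub_neg_eq_add, habn, Valuation.map_neg]
    · refine .inr (.inr (.inr ⟨valuation_eq_iff.1 heq, valuation_eq_iff.1 (le_antisymm ?_ ?_)⟩))
      · rw [← habn]
        exact (Valuation.map_add _ _ _).trans (max_le le_rfl heq.ge)
      · rwa [heq]
  · exact .inl (h.div_mem_finiteLocalSquares (by rwa [← habn, add_sub_cancel_left]))

lemma mem_finiteLocalSquares_of_div_sq_mem {x y : Kˣ} (h : x / y ^ 2 ∈ finiteLocalSquares v) :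
    x ∈ finiteLocalSquares v := by
  simpa using mul_mem h (sq_mem_finiteLocalSquares v y)

lemma IsOdd.quadraticNorms_cases (h : IsOdd v) {n : Kˣ} (hn : n ∈ quadraticNorms c) :
    n ∈ finiteLocalSquares v ∨ -n / c ∈ finiteLocalSquares v ∨ c ∈ finiteLocalSquares v ∨
      Even (ord v c) ∧ Even (ord v n) := by
  obtain ⟨x, y, hxy⟩ := hn
  rcases eq_or_ne y 0 with rfl | hy
  · have hx : x ≠ 0 := by rintro rfl; simp at hxy
    left
    rw [show n = Units.mk0 x hx ^ 2 from Units.ext (by simpa using hxy)]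
    exact sq_mem_finiteLocalSquares v _
  rcases eq_or_ne x 0 with rfl | hx
  · refine .inr (.inl ?_)
    rw [show -n / c = Units.mk0 y hy ^ 2 from Units.ext (by simp [hxy])]
    exact sq_mem_finiteLocalSquares v _
  lift x to Kˣ using hx.isUnit
  lift y to Kˣ using hy.isUnit
  rcases h.trichotomy_of_add_eq (a := x ^ 2) (b := -(c * y ^ 2)) (n := n)
    (by push_cast; rw [hxy]; ring) with hcase | hcase | hcase | ⟨hab, hna⟩
  · exact .inl (mem_finiteLocalSquares_of_div_sq_mem hcase)
  · refine .inr (.inl (mem_finiteLocalSquares_of_div_sq_mem (y := y) ?_))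
    rwa [div_div, neg_div, ← div_neg]
  · refine .inr (.inr (.inl (mem_finiteLocalSquares_of_div_sq_mem (y := x / y) ?_)))
    rw [← inv_mem_iff]
    simpa [div_pow, div_div_eq_mul_div] using hcase
  · simp only [ord_pow, ord_neg, ord_mul] at hab hna
    exact .inr (.inr (.inr ⟨⟨ord v x - ord v y, by push_cast at hab; omega⟩,
      ⟨ord v x, by push_cast at hna; omega⟩⟩))

end OddPrimes

section LocalNorms

variable {v : FinitePrime K} {c u : Kˣ}

lemma even_ord_div_iff {x y : Kˣ} (h : x / y ∈ finiteLocalSquares v) :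
    Even (ord v x) ↔ Even (ord v y) := by
  have := even_ord_of_mem_finiteLocalSquares h
  rwa [ord_div, Int.even_sub] at this

lemma even_ord_of_mem_localNorms (h : IsOdd v) (hc : Even (ord v c))
    (hc' : c ∉ finiteLocalSquares v) (hu : u ∈ localNorms (Sum.inr v) c) : Even (ord v u) := by
  obtain ⟨n, hn, hun⟩ := mem_localNorms.1 hu
  rw [even_ord_div_iff hun]
  rcases h.quadraticNorms_cases hn with hcase | hcase | hcase | hcase
  · exact even_ord_of_mem_finiteLocalSquares hcase
  · simpa [even_ord_div_iff hcase] using (even_ord_div_iff hcase).2 hc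
  · exact absurd hcase hc'
  · exact hcase.2

lemma mem_finiteLocalSquares_of_mem_localNorms (h : IsOdd v) (hc : ¬ Even (ord v c))
    (hu0 : Even (ord v u)) (hu : u ∈ localNorms (Sum.inr v) c) : u ∈ finiteLocalSquares v := by
  obtain ⟨n, hn, hun⟩ := mem_localNorms.1 hu
  have hn' : n ∈ finiteLocalSquares v := by
    rcases h.quadraticNorms_cases hn with hcase | hcase | hcase | hcase
    · exact hcase
    · rw [← even_ord_div_iff hcase, ord_neg, ← even_ord_div_iff hun] at hc
      exact absurd hu0 hc
    · exact absurd (even_ord_of_mem_finiteLocalSquares hcase) hc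
    · exact absurd hcase.1 hc
  simpa using mul_mem (show u / n ∈ finiteLocalSquares v from hun) hn'

lemma localNorms_ne_top_of_isOdd (h : IsOdd v) (hc : c ∉ finiteLocalSquares v) :
    localNorms (Sum.inr v) c ≠ ⊤ := by
  intro htop
  have hmem (x : Kˣ) : x ∈ localNorms (Sum.inr v) c := htop ▸ Subgroup.mem_top x
  by_cases he : Even (ord v c)
  · obtain ⟨π, hπ⟩ := exists_ord_eq_one K v
    simpa [hπ] using even_ord_of_mem_localNorms h he hc (hmem π)
  · obtain ⟨x, hx, hx'⟩ := exists_unit_notMem_finiteLocalSquares v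
    exact hx' (mem_finiteLocalSquares_of_mem_localNorms h he (by simp [hx]) (hmem x))

lemma exists_unit_div_mem_finiteLocalSquares {a : K} {n : Kˣ}
    (h : v.valuation K (a - n) < v.valuation K (4 : K) * v.valuation K (n : K)) :
    ∃ a' : Kˣ, (a' : K) = a ∧ a' / n ∈ finiteLocalSquares v := by
  have ha : a ≠ 0 := by
    rintro rfl
    rw [zero_sub, Valuation.map_neg] at h
    exact (h.trans_le (mul_le_of_le_one_left' (valuation_ofNat_le_one v 4))).false
  lift a to Kˣ using ha.isUnit
  exact ⟨a, rfl, div_mem_finiteLocalSquares v h⟩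

lemma exists_valuation_sub_mul_sq_lt {c c' : Kˣ} (h : c / c' ∈ finiteLocalSquares v) {ε : ℤᵐ⁰}
    (hε : ε ≠ 0) : ∃ t : Kˣ, v.valuation K ((c : K) - c' * t ^ 2) < ε := by
  have hcpos : 0 < v.valuation K (c : K) :=
    zero_lt_iff.2 ((Valuation.ne_zero_iff _).2 c.ne_zero)
  obtain ⟨t, ht⟩ := exists_valuation_mul_sq_sub_one_lt v (inv_mem h)
    (div_ne_zero hε hcpos.ne')
  refine ⟨t, ?_⟩
  rwa [lt_div_iff₀ hcpos, ← map_mul, inv_div, Units.val_div_eq_div_val, sub_mul, one_mul,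
    mul_right_comm, div_mul_cancel₀ _ c.ne_zero, Valuation.map_sub_swap] at ht

lemma quadraticNorms_le_localNorms_of_div_mem {c c' : Kˣ} (h : c / c' ∈ finiteLocalSquares v) :
    quadraticNorms c ≤ localNorms (Sum.inr v) c' := by
  rintro n ⟨x, y, hxy⟩
  have hpos (z : K) (hz : z ≠ 0) : 0 < v.valuation K z :=
    zero_lt_iff.2 ((Valuation.ne_zero_iff _).2 hz)
  suffices ∃ t : K, v.valuation K ((x ^ 2 - c' * (t * y) ^ 2) - n) <
      v.valuation K (4 : K) * v.valuation K (n : K) by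
    obtain ⟨t, ht⟩ := this
    obtain ⟨n', hn', hdiv⟩ := exists_unit_div_mem_finiteLocalSquares ht
    refine mem_localNorms.2 ⟨n', ⟨x, t * y, hn'⟩, ?_⟩
    simpa using inv_mem (show n' / n ∈ localSquares (Sum.inr v) from hdiv)
  have hbound : 0 < v.valuation K (4 : K) * v.valuation K (n : K) :=
    mul_pos (valuation_four_pos v) (hpos _ n.ne_zero)
  rcases eq_or_ne y 0 with rfl | hy
  · exact ⟨0, by simpa [hxy] using hbound⟩
  have hy2 := hpos (y ^ 2) (pow_ne_zero 2 hy)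
  obtain ⟨t, ht⟩ := exists_valuation_sub_mul_sq_lt h (div_ne_zero hbound.ne' hy2.ne')
  refine ⟨t, ?_⟩
  rw [lt_div_iff₀ hy2, ← map_mul] at ht
  convert ht using 2
  rw [hxy]
  ring

lemma localNorms_congr {c c' : Kˣ} (h : c / c' ∈ finiteLocalSquares v) :
    localNorms (Sum.inr v) c = localNorms (Sum.inr v) c' :=
  le_antisymm
    (sup_le (quadraticNorms_le_localNorms_of_div_mem h) (localSquares_le_localNorms _ _))
    (sup_le (quadraticNorms_le_localNorms_of_div_mem (inv_div c c' ▸ inv_mem h))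
      (localSquares_le_localNorms _ _))

lemma quadraticNorms_eq_top_of_isSquare {F : Type*} [Field F] [NeZero (2 : F)] {c : Fˣ}
    (hc : IsSquare c) : quadraticNorms c = ⊤ := by
  obtain ⟨d, rfl⟩ := hc
  refine eq_top_iff.2 fun u _ ↦ ⟨((u : F) + 1) / 2, ((u : F) - 1) / 2 / d, ?_⟩
  have h2 : (2 : F) ≠ 0 := NeZero.ne 2
  push_cast
  field_simp
  ring

lemma localNorms_eq_top {p : Place K} (hc : c ∈ localSquares p) : localNorms p c = ⊤ := by
  rcases p with w | v
  · refine eq_top_iff.2 fun u _ ↦ ?_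
    rcases mem_infiniteLocalSquares_or_neg_mem w u with hu | hu
    · exact localSquares_le_localNorms _ _ hu
    · refine mem_localNorms.2 ⟨-c, neg_self_mem_quadraticNorms c, ?_⟩
      rw [div_neg, ← neg_div]
      exact div_mem hu hc
  · rw [localNorms_congr (c' := 1) (by rwa [div_one]), localNorms,
      quadraticNorms_eq_top_of_isSquare IsSquare.one, top_sup_eq]

end LocalNorms

/-! ### The group of `S`-units modulo squares -/

section IndexOfPowers

lemma finrank_prod_of_finite (F T : Type*) [AddCommGroup F] [Module.Finite ℤ F]
    [AddCommGroup T] [Finite T] :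
    Module.finrank ℤ (F × T) = Module.finrank ℤ F := by
  have htorsion : Module.rank ℤ (LinearMap.ker (LinearMap.fst ℤ F T)) = 0 := by
    refine rank_eq_zero_iff.2 fun ⟨⟨x, t⟩, hx⟩ ↦ ?_
    obtain ⟨k, hk, hkt⟩ := isOfFinAddOrder_iff_nsmul_eq_zero.1 (isOfFinAddOrder_of_finite t)
    obtain rfl : x = 0 := hx
    refine ⟨k, mod_cast hk.ne', Subtype.ext (Prod.ext ?_ ?_)⟩ <;> simp [hkt]
  have h := Submodule.finrank_quotient_add_finrank (LinearMap.ker (LinearMap.fst ℤ F T))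
  rw [LinearEquiv.finrank_eq (LinearMap.quotKerEquivOfSurjective _ LinearMap.fst_surjective),
    Module.finrank_eq_zero_of_rank_eq_zero htorsion] at h
  exact h.symm

lemma index_range_nsmul_prod_of_finite (F T : Type*) [AddCommGroup F] [Module.Free ℤ F]
    [Module.Finite ℤ F] [AddCommGroup T] [Finite T] {n : ℕ} (hn : n ≠ 0) :
    (nsmulAddMonoidHom (α := F × T) n).range.index =
      n ^ Module.finrank ℤ F * Nat.card (nsmulAddMonoidHom (α := F × T) n).ker := by
  have hrange : (nsmulAddMonoidHom (α := F × T) n).range =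
      (nsmulAddMonoidHom (α := F) n).range.prod (nsmulAddMonoidHom (α := T) n).range := by
    ext ⟨x, t⟩
    simp [AddSubgroup.mem_prod, Prod.ext_iff]
  have hker : Nat.card (nsmulAddMonoidHom (α := F × T) n).ker =
      Nat.card (nsmulAddMonoidHom (α := T) n).ker := by
    have hmem (t : (nsmulAddMonoidHom (α := T) n).ker) :
        ((0, t) : F × T) ∈ (nsmulAddMonoidHom (α := F × T) n).ker := Prod.ext (nsmul_zero n) t.2
    refine (Nat.card_congr ⟨fun t ↦ ⟨(0, t), hmem t⟩, fun x ↦ ⟨x.1.2, congrArg Prod.snd x.2⟩,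
      fun t ↦ rfl, fun x ↦ Subtype.ext (Prod.ext ?_ rfl)⟩).symm
    have hx : (n : ℤ) • x.1.1 = 0 := (natCast_zsmul x.1.1 n).trans (congrArg Prod.fst x.2)
    exact ((smul_eq_zero_iff_right (mod_cast hn)).1 hx).symm
  rw [hrange, AddSubgroup.index_prod, AddSubgroup.index_range_nsmul, AddSubgroup.index_range, hker]

lemma index_range_nsmul_eq_mul_card_ker (M : Type*) [AddCommGroup M] [AddGroup.FG M] {n : ℕ}
    (hn : n ≠ 0) : (nsmulAddMonoidHom (α := M) n).range.index =
      n ^ Module.finrank ℤ M * Nat.card (nsmulAddMonoidHom (α := M) n).ker := by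
  classical
  obtain ⟨r, ι, _, p, hp, e, ⟨E⟩⟩ := AddCommGroup.equiv_free_prod_directSum_zmod M
  have (i : ι) : NeZero (p i ^ e i) := ⟨pow_ne_zero _ (hp i).ne_zero⟩
  have : Finite (DirectSum ι fun i ↦ ZMod (p i ^ e i)) :=
    .of_equiv _ (DirectSum.addEquivProd fun i ↦ ZMod (p i ^ e i)).symm.toEquiv
  have hker : Nat.card (nsmulAddMonoidHom (α := M) n).ker =
      Nat.card (nsmulAddMonoidHom (α := (Fin r →₀ ℤ) × DirectSum ι fun i ↦ ZMod (p i ^ e i))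
        n).ker := by
    refine Nat.card_congr (E.toEquiv.subtypeEquiv fun x ↦ ?_)
    simp [AddMonoidHom.mem_ker, ← map_nsmul]
  rw [hker, LinearEquiv.finrank_eq E.toIntLinearEquiv, finrank_prod_of_finite,
    ← index_range_nsmul_prod_of_finite _ _ hn, ← AddEquiv.map_range_nsmulAddMonoidHom E n,
    AddSubgroup.index_map_equiv]

lemma card_ker_powMonoidHom_two {F : Type*} [Field F] [NeZero (2 : F)] {H : Subgroup Fˣ}
    (hneg : -1 ∈ H) : Nat.card (powMonoidHom 2 : H →* H).ker = 2 := by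
  have hsq : (⟨-1, hneg⟩ : H) ∈ (powMonoidHom 2 : H →* H).ker := Subtype.ext (by simp)
  refine Nat.card_eq_two_iff.2 ⟨1, ⟨⟨-1, hneg⟩, hsq⟩, fun h ↦ ?_, ?_⟩
  · have h1 : (1 : F) = -1 :=
      congrArg (fun z : (powMonoidHom 2 : H →* H).ker ↦ (((z : H) : Fˣ) : F)) h
    exact NeZero.ne (2 : F) (by linear_combination h1)
  · refine Set.eq_univ_of_forall fun ⟨z, hz⟩ ↦ ?_
    have hz1 : ((z : Fˣ) : F) ^ 2 = 1 :=
      congrArg (fun t : H ↦ ((t : Fˣ) : F)) (MonoidHom.mem_ker.1 hz)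
    exact (sq_eq_one_iff.1 hz1).imp (fun h ↦ Subtype.ext (Subtype.ext (Units.ext h)))
      fun h ↦ Subtype.ext (Subtype.ext (Units.ext h))

lemma relIndex_squares {F : Type*} [Field F] [NeZero (2 : F)] {H : Subgroup Fˣ} (hneg : -1 ∈ H)
    [Module.Finite ℤ (Additive H)] :
    (squares H).relIndex H = 2 ^ (Module.finrank ℤ (Additive H) + 1) := by
  have : AddGroup.FG (Additive H) := Module.Finite.iff_addGroup_fg.1 inferInstance
  have h := index_range_nsmul_eq_mul_card_ker (Additive H) two_ne_zero
  have hker : Nat.card (nsmulAddMonoidHom (α := Additive H) 2).ker = 2 :=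
    card_ker_powMonoidHom_two hneg
  rw [hker, ← pow_succ] at h
  rw [← h, squares, Subgroup.relIndex, Subgroup.subgroupOf_map_powMonoidHom_eq_range]
  rfl

end IndexOfPowers

section SUnits

/-- The group of `S`-units of `K`. -/
noncomputable abbrev sUnits (S : Finset (FinitePrime K)) : Subgroup Kˣ :=
  (S : Set (FinitePrime K)).unit K

lemma mem_sUnits {S : Finset (FinitePrime K)} {x : Kˣ} :
    x ∈ sUnits S ↔ ∀ v ∉ S, ord v x = 0 := by
  simp only [← valuation_eq_one_iff]
  rfl

lemma sUnits_mono {S T : Finset (FinitePrime K)} (h : S ⊆ T) : sUnits S ≤ sUnits T :=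
  fun _ hx v hv ↦ hx v fun hv' ↦ hv (h hv')

lemma neg_one_mem_sUnits (S : Finset (FinitePrime K)) : -1 ∈ sUnits S :=
  mem_sUnits.2 fun v _ ↦ by rw [ord_neg, ord_one]

/-- The finite set of primes at which `x` is not a unit. -/
noncomputable def primeSupport (x : Kˣ) : Finset (FinitePrime K) :=
  (finite_setOf_ord_ne_zero x).toFinset

@[simp] lemma mem_primeSupport {x : Kˣ} {v : FinitePrime K} :
    v ∈ primeSupport x ↔ ord v x ≠ 0 := by
  simp [primeSupport]

lemma mem_sUnits_iff_primeSupport_subset {S : Finset (FinitePrime K)} {x : Kˣ} :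
    x ∈ sUnits S ↔ primeSupport x ⊆ S := by
  simp only [mem_sUnits, Finset.subset_iff, mem_primeSupport]
  exact forall_congr' fun v ↦ not_imp_comm

variable (K) in
/-- The finite set of primes above `2`. -/
noncomputable def dyadicPrimes : Finset (FinitePrime K) :=
  primeSupport (Units.mk0 (2 : K) two_ne_zero)

lemma isOdd_iff_notMem_dyadicPrimes {v : FinitePrime K} : IsOdd v ↔ v ∉ dyadicPrimes K := by
  rw [dyadicPrimes, mem_primeSupport, not_not, ← valuation_eq_one_iff]
  rfl

/-- Every prime outside `S` is principal up to primes in `S`. -/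
def IsPrincipalOutside (S : Finset (FinitePrime K)) : Prop :=
  ∀ v₀ ∉ S, ∃ π : Kˣ, ord v₀ π = 1 ∧ ∀ v ∉ S, v ≠ v₀ → ord v π = 0

lemma IsPrincipalOutside.mono {S T : Finset (FinitePrime K)} (hS : IsPrincipalOutside S)
    (h : S ⊆ T) : IsPrincipalOutside T := by
  intro v₀ hv₀
  obtain ⟨π, hπ₀, hπ⟩ := hS v₀ fun h' ↦ hv₀ (h h')
  exact ⟨π, hπ₀, fun v hv ↦ hπ v fun h' ↦ hv (h h')⟩

lemma IsPrincipalOutside.exists_ord_eq {S : Finset (FinitePrime K)} (hS : IsPrincipalOutside S)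
    {n : FinitePrime K → ℤ} (hn : {v | n v ≠ 0}.Finite) :
    ∃ z : Kˣ, ∀ v ∉ S, ord v z = n v := by
  classical
  choose! π hπ₀ hπ using hS
  refine ⟨∏ w ∈ hn.toFinset \ S, π w ^ n w, fun v hv ↦ ?_⟩
  have hord (w) (hw : w ∈ hn.toFinset \ S) : ord v (π w ^ n w) = if v = w then n v else 0 := by
    rw [ord_zpow]
    split_ifs with h
    · rw [← h, hπ₀ v hv, mul_one]
    · rw [hπ w (Finset.mem_sdiff.1 hw).2 v hv h, mul_zero]
  rw [ord_prod, Finset.sum_congr rfl hord, Finset.sum_ite_eq]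
  by_cases h : n v = 0 <;> simp [h, hv]

lemma exists_ord_eq_multiplicity {J : nonZeroDivisors (Ideal (𝓞 K))}
    (hJ : ClassGroup.mk0 J = 1) :
    ∃ π : Kˣ, ∀ v : FinitePrime K, ord v π = multiplicity v.asIdeal (J : Ideal (𝓞 K)) := by
  obtain ⟨α, hα⟩ := (ClassGroup.mk0_eq_one_iff _).1 hJ |>.principal
  have hspan : (J : Ideal (𝓞 K)) = Ideal.span {α} := hα
  have hα0 : α ≠ 0 := by
    rintro rfl
    exact nonZeroDivisors.coe_ne_zero J (by simpa using hspan)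
  have hα0' : algebraMap (𝓞 K) K α ≠ 0 := by simpa using hα0
  refine ⟨Units.mk0 _ hα0', fun v ↦ ?_⟩
  have h := valuation_eq_exp_neg_ord v (Units.mk0 _ hα0')
  rw [Units.val_mk0, valuation_of_algebraMap, v.intValuation_eq_exp_neg_multiplicity hα0,
    exp_inj, neg_inj] at h
  rw [hspan, h]

lemma not_asIdeal_dvd_of_ne {v w : FinitePrime K} (h : w ≠ v) : ¬ w.asIdeal ∣ v.asIdeal :=
  fun hd ↦ h (HeightOneSpectrum.ext
    (v.isMaximal.eq_of_le w.isPrime.ne_top (Ideal.le_of_dvd hd)).symm)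

lemma exists_isPrincipalOutside : ∃ S : Finset (FinitePrime K), IsPrincipalOutside S := by
  classical
  choose J hJ using fun c : ClassGroup (𝓞 K) ↦ ClassGroup.mk0_surjective c
  have hfin (c) : {v : FinitePrime K | v.asIdeal ∣ (J c : Ideal (𝓞 K))}.Finite :=
    Ideal.finite_factors (nonZeroDivisors.coe_ne_zero (J c))
  refine ⟨Finset.univ.biUnion fun c ↦ (hfin c).toFinset, fun v₀ hv₀ ↦ ?_⟩
  let P : nonZeroDivisors (Ideal (𝓞 K)) :=
    ⟨v₀.asIdeal, mem_nonZeroDivisors_of_ne_zero v₀.ne_bot⟩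
  set c := (ClassGroup.mk0 P)⁻¹ with hc
  obtain ⟨π, hπ⟩ := exists_ord_eq_multiplicity (J := P * J c)
    (by rw [map_mul, hJ, hc, mul_inv_cancel])
  have hord (v) (hv : v ∉ Finset.univ.biUnion fun c ↦ (hfin c).toFinset) :
      ord v π = multiplicity v.asIdeal v₀.asIdeal := by
    have hnd : ¬ v.asIdeal ∣ (J c : Ideal (𝓞 K)) := fun hd ↦
      hv (Finset.mem_biUnion.2 ⟨c, Finset.mem_univ c, by simpa using hd⟩)
    have hfinite : FiniteMultiplicity v.asIdeal ((P * J c : nonZeroDivisors _) : Ideal (𝓞 K)) :=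
      .of_prime_left v.prime (nonZeroDivisors.coe_ne_zero _)
    rw [hπ, Submonoid.coe_mul, multiplicity_mul v.prime hfinite, multiplicity_eq_zero.2 hnd,
      add_zero]
  refine ⟨π, ?_, fun v hv hne ↦ ?_⟩
  · rw [hord v₀ hv₀, multiplicity_self, Nat.cast_one]
  · rw [hord v hv, multiplicity_eq_zero.2 (not_asIdeal_dvd_of_ne hne), Nat.cast_zero]

/-- A power of every prime is principal, the exponent being the class number. -/
lemma exists_ord_eq_card_classGroup (v : FinitePrime K) :
    ∃ α : Kˣ, ord v α = Fintype.card (ClassGroup (𝓞 K)) ∧ ∀ w ≠ v, ord w α = 0 := by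
  let P : nonZeroDivisors (Ideal (𝓞 K)) :=
    ⟨v.asIdeal, mem_nonZeroDivisors_of_ne_zero v.ne_bot⟩
  obtain ⟨α, hα⟩ := exists_ord_eq_multiplicity (J := P ^ Fintype.card (ClassGroup (𝓞 K)))
    (by rw [map_pow, pow_card_eq_one])
  simp only [SubmonoidClass.coe_pow] at hα
  refine ⟨α, ?_, fun w hw ↦ ?_⟩
  · rw [hα, multiplicity_pow_self_of_prime v.prime]
  · rw [hα, multiplicity_eq_zero.2 fun hd ↦
      not_asIdeal_dvd_of_ne hw (w.prime.dvd_of_dvd_pow hd), Nat.cast_zero]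

lemma ord_map_units (v : FinitePrime K) (u : (𝓞 K)ˣ) :
    ord v (Units.map (algebraMap (𝓞 K) K : 𝓞 K →* K) u) = 0 := by
  simp [ord, valuation_of_unit_eq v u]

lemma exists_units_map_eq {x : Kˣ} (hx : ∀ v : FinitePrime K, ord v x = 0) :
    ∃ u : (𝓞 K)ˣ, Units.map (algebraMap (𝓞 K) K : 𝓞 K →* K) u = x := by
  obtain ⟨a, ha⟩ := mem_integers_of_valuation_le_one (R := 𝓞 K) K (x : K) fun v ↦
    ((valuation_eq_one_iff v x).2 (hx v)).le
  obtain ⟨b, hb⟩ := mem_integers_of_valuation_le_one (R := 𝓞 K) K ((x⁻¹ : Kˣ) : K) fun v ↦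
    ((valuation_eq_one_iff v (x⁻¹ : Kˣ)).2 (by rw [ord_inv, hx v, neg_zero])).le
  have hab : a * b = 1 := by
    apply FaithfulSMul.algebraMap_injective (𝓞 K) K
    rw [map_mul, ha, hb, Units.mul_inv, map_one]
  exact ⟨⟨a, b, hab, by rw [mul_comm, hab]⟩, Units.ext ha⟩

variable (S : Finset (FinitePrime K))

/-- The orders of an `S`-unit at the primes in `S`. -/
noncomputable def sUnitsOrd : Additive (sUnits S) →ₗ[ℤ] (S → ℤ) :=
  AddMonoidHom.toIntLinearMap
    { toFun := fun x v ↦ ord v.1 (x.toMul : Kˣ)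
      map_zero' := by ext v; simp
      map_add' := fun x y ↦ by ext v; simp }

@[simp] lemma sUnitsOrd_apply (x : Additive (sUnits S)) (v : S) :
    sUnitsOrd S x v = ord v.1 (x.toMul : Kˣ) := rfl

/-- Units of the ring of integers as `S`-units. -/
noncomputable def unitsToSUnits : (𝓞 K)ˣ →* sUnits S :=
  (Units.map (algebraMap (𝓞 K) K : 𝓞 K →* K)).codRestrict (sUnits S) fun u ↦
    mem_sUnits.2 fun v _ ↦ ord_map_units v u

lemma unitsToSUnits_injective : Function.Injective (unitsToSUnits S) := by
  intro u u' h
  exact Units.map_injective (FaithfulSMul.algebraMap_injective (𝓞 K) K) (congrArg Subtype.val h)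

lemma range_unitsToSUnits :
    LinearMap.range (unitsToSUnits S).toAdditive.toIntLinearMap = LinearMap.ker (sUnitsOrd S) := by
  classical
  ext x
  simp only [LinearMap.mem_range, LinearMap.mem_ker, AddMonoidHom.coe_toIntLinearMap]
  constructor
  · rintro ⟨u, rfl⟩
    ext v
    exact ord_map_units v.1 u.toMul
  · intro hx
    obtain ⟨u, hu⟩ := exists_units_map_eq (x := (x.toMul : Kˣ)) fun v ↦
      if hv : v ∈ S then congrFun hx ⟨v, hv⟩ else mem_sUnits.1 x.toMul.2 v hv
    exact ⟨.ofMul u, Additive.toMul.injective (Subtype.ext hu)⟩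

/-- The units of the ring of integers are the `S`-units of trivial order at all primes. -/
noncomputable def unitsEquivKerOrd : Additive (𝓞 K)ˣ ≃ₗ[ℤ] LinearMap.ker (sUnitsOrd S) :=
  (LinearEquiv.ofInjective _ (unitsToSUnits_injective S)).trans
    (LinearEquiv.ofEq _ _ (range_unitsToSUnits S))

instance finite_sUnits : Module.Finite ℤ (Additive (sUnits S)) := by
  have : Module.Finite ℤ (LinearMap.ker (sUnitsOrd S)) := .equiv (unitsEquivKerOrd S)
  have : Module.Finite ℤ (Additive (sUnits S) ⧸ LinearMap.ker (sUnitsOrd S)) :=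
    .equiv (sUnitsOrd S).quotKerEquivRange.symm
  exact .of_submodule_quotient (LinearMap.ker (sUnitsOrd S))

lemma range_smul_id_le_range_sUnitsOrd :
    LinearMap.range ((Fintype.card (ClassGroup (𝓞 K)) : ℤ) • LinearMap.id) ≤
      LinearMap.range (sUnitsOrd S) := by
  classical
  rintro _ ⟨x, rfl⟩
  choose α hα hα' using exists_ord_eq_card_classGroup (K := K)
  have hmem (v : S) : α v ∈ sUnits S := mem_sUnits.2 fun w hw ↦
    hα' v w (ne_of_mem_of_not_mem v.2 hw).symm
  refine ⟨∑ v : S, x v • .ofMul ⟨α v, hmem v⟩, ?_⟩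
  ext w
  have hord (v : S) : ord w.1 (α v) =
      if w = v then (Fintype.card (ClassGroup (𝓞 K)) : ℤ) else 0 := by
    split_ifs with h
    · rw [h, hα]
    · exact hα' v w fun h' ↦ h (Subtype.ext h')
  simp [ord_prod, hord, mul_comm, -Finset.univ_eq_attach]

lemma finrank_range_sUnitsOrd : Module.finrank ℤ (LinearMap.range (sUnitsOrd S)) = S.card := by
  apply le_antisymm
  · simpa using Submodule.finrank_le (LinearMap.range (sUnitsOrd S))
  · have hinj : Function.Injective ((Fintype.card (ClassGroup (𝓞 K)) : ℤ) •
        (LinearMap.id : (S → ℤ) →ₗ[ℤ] (S → ℤ))) :=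
      smul_right_injective _ (mod_cast Fintype.card_ne_zero)
    simpa [LinearMap.finrank_range_of_inj hinj] using
      Submodule.finrank_mono (range_smul_id_le_range_sUnitsOrd S)

lemma finrank_sUnits : Module.finrank ℤ (Additive (sUnits S)) + 1 = (sPlaces S).card := by
  have h := Submodule.finrank_quotient_add_finrank (LinearMap.ker (sUnitsOrd S))
  rw [LinearEquiv.finrank_eq (sUnitsOrd S).quotKerEquivRange, finrank_range_sUnitsOrd,
    ← LinearEquiv.finrank_eq (unitsEquivKerOrd S), Units.finrank_eq, Units.rank] at h
  have hpos : 0 < Fintype.card (InfinitePlace K) := Fintype.card_pos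
  rw [card_sPlaces]
  omega

lemma relIndex_squares_sUnits :
    (squares (sUnits S)).relIndex (sUnits S) = 2 ^ (sPlaces S).card := by
  rw [relIndex_squares (neg_one_mem_sUnits S), finrank_sUnits]

end SUnits

/-! ### Primes and places of a quadratic extension -/

section Extension

/-- The inclusion `Kˣ → Lˣ` of unit groups. -/
abbrev unitsMap (K L : Type*) [Field K] [Field L] [Algebra K L] : Kˣ →* Lˣ :=
  Units.map (algebraMap K L : K →* L)

lemma unitsMap_injective (K L : Type*) [Field K] [Field L] [Algebra K L] :
    Function.Injective (unitsMap K L) :=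
  Units.map_injective (algebraMap K L).injective

variable {L : Type*} [Field L] [NumberField L] [Algebra K L]

variable (K) in
/-- The ramification index over `K` of a prime of `L`. -/
noncomputable abbrev ramificationExp (P : FinitePrime L) : ℕ :=
  (P.under (𝓞 K)).asIdeal.ramificationIdx' P.asIdeal

omit [NumberField K] [NumberField L] in
lemma liesOver_under (P : FinitePrime L) : P.asIdeal.LiesOver (P.under (𝓞 K)).asIdeal := ⟨rfl⟩

omit [NumberField K] in
lemma ramificationExp_pos (P : FinitePrime L) : 0 < ramificationExp K P :=
  have := liesOver_under (K := K) P
  Nat.pos_of_ne_zero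
    (Ideal.IsDedekindDomain.ramificationIdx'_ne_zero_of_liesOver _ (P.under (𝓞 K)).ne_bot)

lemma valuation_algebraMap (P : FinitePrime L) (x : K) :
    P.valuation L (algebraMap K L x) =
      (P.under (𝓞 K)).valuation K x ^ ramificationExp K P :=
  have := liesOver_under (K := K) P
  (valuation_liesOver L (P.under (𝓞 K)) P x).symm

lemma ord_unitsMap (P : FinitePrime L) (x : Kˣ) :
    ord P (unitsMap K L x) = ramificationExp K P * ord (P.under (𝓞 K)) x := by
  have h : P.valuation L (unitsMap K L x : L) = _ := valuation_algebraMap P (x : K)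
  rw [valuation_eq_exp_neg_ord, valuation_eq_exp_neg_ord, ← exp_nsmul, exp_inj] at h
  simpa using h

lemma ord_unitsMap_eq_zero_iff (P : FinitePrime L) (x : Kˣ) :
    ord P (unitsMap K L x) = 0 ↔ ord (P.under (𝓞 K)) x = 0 := by
  simp [ord_unitsMap, (ramificationExp_pos P).ne']

lemma valuation_algebraMap_lt_one_iff (P : FinitePrime L) (x : K) :
    P.valuation L (algebraMap K L x) < 1 ↔ (P.under (𝓞 K)).valuation K x < 1 := by
  rw [valuation_algebraMap, pow_lt_one_iff (ramificationExp_pos P).ne']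

lemma valuation_lt_of_valuation_algebraMap_lt (P : FinitePrime L) {x y : K}
    (h : P.valuation L (algebraMap K L x) < P.valuation L (algebraMap K L y)) :
    (P.under (𝓞 K)).valuation K x < (P.under (𝓞 K)).valuation K y := by
  rw [valuation_algebraMap, valuation_algebraMap] at h
  exact lt_of_pow_lt_pow_left₀ _ zero_le h

lemma valuation_algebraMap_le_of_lt_one {P : FinitePrime L} {x : K}
    (hx : P.valuation L (algebraMap K L x) < 1) :
    P.valuation L (algebraMap K L x) ≤ exp (-(ramificationExp K P : ℤ)) := by
  rcases eq_or_ne x 0 with rfl | hx0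
  · simp
  have hval : P.valuation L (algebraMap K L x) = exp (-ord P (unitsMap K L (Units.mk0 x hx0))) :=
    valuation_eq_exp_neg_ord P (unitsMap K L (Units.mk0 x hx0))
  rw [hval, ← exp_zero, exp_lt_exp, ord_unitsMap] at hx
  rw [hval, exp_le_exp, ord_unitsMap, neg_le_neg_iff]
  have hpos : 0 < ord (P.under (𝓞 K)) (Units.mk0 x hx0) :=
    pos_of_mul_pos_right (neg_lt_zero.1 hx) (Nat.cast_nonneg _)
  exact le_mul_of_one_le_right (Nat.cast_nonneg _) hpos

lemma exists_under_eq (L : Type*) [Field L] [Algebra K L] (v : FinitePrime K) :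
    ∃ P : FinitePrime L, P.under (𝓞 K) = v := by
  have := v.isMaximal
  obtain ⟨Q, hQ, hQv⟩ := Ideal.exists_maximal_ideal_liesOver_of_isIntegral (S := 𝓞 L) v.asIdeal
  exact ⟨⟨Q, hQ.isPrime, Ideal.ne_bot_of_liesOver_of_ne_bot v.ne_bot Q⟩,
    HeightOneSpectrum.ext hQv.over.symm⟩

lemma finite_setOf_under_eq (v : FinitePrime K) :
    {P : FinitePrime L | P.under (𝓞 K) = v}.Finite := by
  have := v.isMaximal
  refine ((IsDedekindDomain.primesOver_finite v.asIdeal (𝓞 L)).preimage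
    (f := HeightOneSpectrum.asIdeal) fun _ _ _ _ ↦ HeightOneSpectrum.ext).subset ?_
  rintro P rfl
  exact ⟨P.isPrime, ⟨rfl⟩⟩

variable (L) in
/-- The finite set of primes of `L` above the primes in `S`. -/
noncomputable def primesAbove (S : Finset (FinitePrime K)) : Finset (FinitePrime L) :=
  (S.finite_toSet.preimage' (f := fun P : FinitePrime L ↦ P.under (𝓞 K))
    fun v _ ↦ finite_setOf_under_eq v).toFinset

@[simp] lemma mem_primesAbove {S : Finset (FinitePrime K)} {P : FinitePrime L} :
    P ∈ primesAbove L S ↔ P.under (𝓞 K) ∈ S := by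
  simp [primesAbove]

lemma unitsMap_mem_sUnits_iff {S : Finset (FinitePrime K)} {x : Kˣ} :
    unitsMap K L x ∈ sUnits (primesAbove L S) ↔ x ∈ sUnits S := by
  rw [mem_sUnits, mem_sUnits]
  constructor
  · intro h v hv
    obtain ⟨P, rfl⟩ := exists_under_eq L v
    exact (ord_unitsMap_eq_zero_iff P x).1 (h P (by simpa using hv))
  · intro h P hP
    exact (ord_unitsMap_eq_zero_iff P x).2 (h _ (by simpa using hP))

lemma unitsMap_mem_finiteLocalSquares (P : FinitePrime L) {x : Kˣ}
    (h : x ∈ finiteLocalSquares (P.under (𝓞 K))) : unitsMap K L x ∈ finiteLocalSquares P := by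
  obtain ⟨y, hy⟩ := h
  have hxy := valuation_algebraMap P ((x : K) * (y : K) ^ 2 - 1)
  have h4 := valuation_algebraMap (K := K) P 4
  simp only [map_sub, map_mul, map_pow, map_one, map_ofNat] at hxy h4
  refine ⟨unitsMap K L y, ?_⟩
  change P.valuation L (algebraMap K L x * algebraMap K L y ^ 2 - 1) < _
  rw [hxy, h4]
  exact pow_lt_pow_left₀ hy zero_le (ramificationExp_pos P).ne'

omit [NumberField K] in
lemma exists_realPlace_eq {w : InfinitePlace K} (hw : w.IsReal) :
    ∃ φ : K →+* ℝ, realPlace φ = w := by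
  refine ⟨InfinitePlace.embedding_of_isReal hw, InfinitePlace.ext _ _ fun x ↦ ?_⟩
  rw [realPlace_apply, ← InfinitePlace.norm_embedding_of_isReal hw, Real.norm_eq_abs]

omit [NumberField K] [NumberField L] in
lemma realPlace_comp_algebraMap (φ : L →+* ℝ) :
    realPlace (φ.comp (algebraMap K L)) = (realPlace φ).comap (algebraMap K L) := by
  rw [realPlace, realPlace, InfinitePlace.comap_mk]
  rfl

omit [NumberField K] [NumberField L] in
lemma unitsMap_mem_infiniteLocalSquares (W : InfinitePlace L) {x : Kˣ}
    (h : ∀ w : InfinitePlace K, x ∈ infiniteLocalSquares w) :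
    unitsMap K L x ∈ infiniteLocalSquares W :=
  fun φ _ ↦ h _ (φ.comp (algebraMap K L)) rfl

end Extension

/-- Data exhibiting `L` as the quadratic extension `K(√c)` of `K`, where `c` is not a square. -/
structure QuadraticExtension (K L : Type*) [Field K] [Field L] [Algebra K L] (c : Kˣ) where
  /-- The square root of `c`. -/
  sqrt : Lˣ
  sq_sqrt : (sqrt : L) ^ 2 = algebraMap K L c
  exists_eq_add_mul_sqrt (x : L) : ∃ a b : K, x = algebraMap K L a + algebraMap K L b * sqrt
  /-- The nontrivial automorphism of `L`. -/
  conj : L ≃ₐ[K] L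
  conj_sqrt : conj sqrt = -sqrt

universe u in
lemma exists_quadraticExtension {K : Type u} [Field K] [NumberField K] {c : Kˣ}
    (hc : ¬ IsSquare c) :
    ∃ (L : Type u) (_ : Field L) (_ : NumberField L) (_ : Algebra K L),
      Nonempty (QuadraticExtension K L c) := by
  have : Fact (∀ r : K, r ^ 2 ≠ (c : K) + 0 * r) := ⟨fun r hr ↦ by
    have hr' : (c : K) = r * r := by linear_combination -hr
    have hr0 : r ≠ 0 := by
      rintro rfl
      simp at hr'
    exact hc ⟨Units.mk0 r hr0, Units.ext hr'⟩⟩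
  let L := QuadraticAlgebra K (c : K) 0
  have : IsScalarTower ℚ K L := .of_algebraMap_eq fun x ↦ by simp
  have : NumberField L :=
    { to_charZero := inferInstance
      to_finiteDimensional := Module.Finite.trans K L }
  have hsq : (⟨0, 1⟩ : L) ^ 2 = algebraMap K L c := by
    ext <;> simp [L, sq, QuadraticAlgebra.algebraMap_eq]
  have hne : (⟨0, 1⟩ : L) ≠ 0 := fun h ↦ by simpa [h] using hsq.symm
  refine ⟨L, inferInstance, inferInstance, inferInstance, ⟨⟨Units.mk0 _ hne, hsq, fun x ↦
    ⟨x.re, x.im, ?_⟩, AlgEquiv.ofRingEquiv (f := (starRingAut : RingAut L)) fun x ↦ ?_, ?_⟩⟩⟩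
  all_goals ext <;> simp [L, QuadraticAlgebra.algebraMap_eq]

namespace QuadraticExtension

section Field

variable {K L : Type*} [Field K] [Field L] [Algebra K L] {c : Kˣ} (Q : QuadraticExtension K L c)

lemma sqrt_sq : Q.sqrt ^ 2 = unitsMap K L c :=
  Units.ext (by simpa using Q.sq_sqrt)

@[simp] lemma conj_conj (x : L) : Q.conj (Q.conj x) = x := by
  obtain ⟨a, b, rfl⟩ := Q.exists_eq_add_mul_sqrt x
  simp [Q.conj_sqrt]

lemma eq_one_or_eq_conj (τ : L ≃ₐ[K] L) : τ = 1 ∨ τ = Q.conj := by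
  have hτ : τ Q.sqrt ^ 2 = (Q.sqrt : L) ^ 2 := by rw [← map_pow, Q.sq_sqrt, τ.commutes]
  refine (sq_eq_sq_iff_eq_or_eq_neg.1 hτ).imp (fun h ↦ ?_) fun h ↦ ?_ <;>
  · ext x
    obtain ⟨a, b, rfl⟩ := Q.exists_eq_add_mul_sqrt x
    simp [h, Q.conj_sqrt]

/-- Conjugation on units. -/
def unitsConj : Lˣ →* Lˣ := Units.map (Q.conj : L →* L)

@[simp] lemma coe_unitsConj (x : Lˣ) : (Q.unitsConj x : L) = Q.conj x := rfl

@[simp] lemma unitsConj_unitsConj (x : Lˣ) : Q.unitsConj (Q.unitsConj x) = x := by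
  ext
  simp

@[simp] lemma unitsConj_unitsMap (x : Kˣ) :
    Q.unitsConj (unitsMap K L x) = unitsMap K L x := by
  ext
  simp

@[simp] lemma unitsConj_sqrt : Q.unitsConj Q.sqrt = -Q.sqrt := by
  ext
  simp [Q.conj_sqrt]

/-- The norm `x ↦ x * x̄`, with values in `Lˣ`. -/
def norm : Lˣ →* Lˣ := MonoidHom.id _ * Q.unitsConj

/-- The homomorphism `x ↦ x / x̄`. -/
def divConj : Lˣ →* Lˣ := MonoidHom.id _ / Q.unitsConj

@[simp] lemma norm_apply (x : Lˣ) : Q.norm x = x * Q.unitsConj x := rfl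

@[simp] lemma divConj_apply (x : Lˣ) : Q.divConj x = x / Q.unitsConj x := rfl

lemma exists_eq_divConj {x : Lˣ} (h : Q.norm x = 1) : ∃ y, x = Q.divConj y := by
  by_cases hx : (1 : L) + x = 0
  · refine ⟨Q.sqrt, ?_⟩
    have hneg : x = -1 := by
      ext
      push_cast
      linear_combination hx
    rw [hneg, divConj_apply, unitsConj_sqrt, div_neg, div_self']
  · refine ⟨Units.mk0 _ hx, ?_⟩
    rw [divConj_apply, eq_div_iff_mul_eq']
    ext
    have hval : (x : L) * Q.conj x = 1 := congrArg Units.val h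
    simp only [Units.val_mul, coe_unitsConj, Units.val_mk0, map_add, map_one]
    linear_combination hval

lemma mem_quadraticNorms_iff {a : Kˣ} :
    a ∈ quadraticNorms c ↔ ∃ x, Q.norm x = unitsMap K L a := by
  have hmul (y z : K) : (algebraMap K L y + algebraMap K L z * Q.sqrt) *
      Q.conj (algebraMap K L y + algebraMap K L z * Q.sqrt) =
        algebraMap K L (y ^ 2 - c * z ^ 2) := by
    simp only [map_add, map_sub, map_mul, map_pow, AlgEquiv.commutes, Q.conj_sqrt, ← Q.sq_sqrt]
    ring
  constructor
  · rintro ⟨y, z, h⟩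
    have hyz := hmul y z
    rw [← h] at hyz
    have h0 : algebraMap K L y + algebraMap K L z * Q.sqrt ≠ 0 := fun h0 ↦ by
      rw [h0, zero_mul] at hyz
      exact a.ne_zero ((map_eq_zero _).1 hyz.symm)
    exact ⟨Units.mk0 _ h0, Units.ext hyz⟩
  · rintro ⟨x, hx⟩
    obtain ⟨y, z, hyz⟩ := Q.exists_eq_add_mul_sqrt x
    refine ⟨y, z, (algebraMap K L).injective ?_⟩
    rw [← hmul, ← hyz]
    exact (congrArg Units.val hx).symm

section NeZero

variable [NeZero (2 : L)]

lemma exists_eq_algebraMap {x : L} (h : Q.conj x = x) : ∃ a : K, x = algebraMap K L a := by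
  obtain ⟨a, b, rfl⟩ := Q.exists_eq_add_mul_sqrt x
  simp only [map_add, map_mul, AlgEquiv.commutes, Q.conj_sqrt] at h
  have h2 : (2 : L) * (algebraMap K L b * Q.sqrt) = 0 := by linear_combination -h
  exact ⟨a, by rw [(mul_eq_zero.1 h2).resolve_left (NeZero.ne 2), add_zero]⟩

lemma exists_eq_unitsMap {x : Lˣ} (h : Q.unitsConj x = x) : ∃ a : Kˣ, x = unitsMap K L a := by
  obtain ⟨a, ha⟩ := Q.exists_eq_algebraMap (congrArg Units.val h)
  have ha0 : a ≠ 0 := by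
    rintro rfl
    simp at ha
  exact ⟨Units.mk0 a ha0, Units.ext ha⟩

lemma exists_norm_eq (x : Lˣ) : ∃ a : Kˣ, Q.norm x = unitsMap K L a :=
  Q.exists_eq_unitsMap (by rw [norm_apply, map_mul, unitsConj_unitsConj, mul_comm])

include Q in
lemma isSquare_or_isSquare_mul {a : Kˣ} (h : IsSquare (unitsMap K L a)) :
    IsSquare a ∨ IsSquare (a * c) := by
  obtain ⟨y, hy⟩ := h
  have hsq : (Q.unitsConj y : L) ^ 2 = (y : L) ^ 2 := by
    rw [← Units.val_pow_eq_pow_val, ← Units.val_pow_eq_pow_val, ← map_pow, sq, ← hy,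
      unitsConj_unitsMap]
  rcases sq_eq_sq_iff_eq_or_eq_neg.1 hsq with h | h
  · obtain ⟨k, rfl⟩ := Q.exists_eq_unitsMap (Units.ext h)
    exact .inl ⟨k, unitsMap_injective K L (by rw [hy, map_mul])⟩
  · have hfixed : Q.unitsConj (y * Q.sqrt) = y * Q.sqrt := by
      rw [map_mul, unitsConj_sqrt, show Q.unitsConj y = -y from Units.ext h, neg_mul_neg]
    obtain ⟨k, hk⟩ := Q.exists_eq_unitsMap hfixed
    refine .inr ⟨k, unitsMap_injective K L ?_⟩
    rw [map_mul, map_mul, hy, ← sqrt_sq, ← hk, sq, mul_mul_mul_comm]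

include Q in
lemma isGalois [FiniteDimensional K L] : IsGalois K L := by
  refine .of_fixedField_eq_bot K L (eq_bot_iff.2 fun x hx ↦ ?_)
  obtain ⟨a, ha⟩ := Q.exists_eq_algebraMap (hx ⟨Q.conj, trivial⟩)
  exact IntermediateField.mem_bot.2 ⟨a, ha.symm⟩

include Q in
lemma finrank_eq_two [FiniteDimensional K L] : Module.finrank K L = 2 := by
  have := Q.isGalois
  have hne : (1 : L ≃ₐ[K] L) ≠ Q.conj := fun h ↦ by
    have hneg : (Q.sqrt : L) = -Q.sqrt := Q.conj_sqrt ▸ DFunLike.congr_fun h (Q.sqrt : L)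
    have h2 : (2 : L) * Q.sqrt = 0 := by linear_combination hneg
    exact (mul_eq_zero.1 h2).elim (NeZero.ne 2) Q.sqrt.ne_zero
  rw [← IsGalois.card_aut_eq_finrank, Nat.card_eq_two_iff]
  exact ⟨1, Q.conj, hne, Set.eq_univ_of_forall Q.eq_one_or_eq_conj⟩

end NeZero

end Field

variable {L : Type*} [Field L] [NumberField L] [Algebra K L] {c : Kˣ}
  (Q : QuadraticExtension K L c)

/-- The conjugate of a prime. -/
noncomputable def conjPrime (P : FinitePrime L) : FinitePrime L :=
  HeightOneSpectrum.comap (RingOfIntegers.mapRingEquiv Q.conj.toRingEquiv : 𝓞 L →+* 𝓞 L)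
    (RingOfIntegers.mapRingEquiv Q.conj.toRingEquiv).surjective P

omit [NumberField K] [NumberField L] in
lemma mem_conjPrime_pow (P : FinitePrime L) (y : 𝓞 L) (n : ℕ) :
    y ∈ (Q.conjPrime P).asIdeal ^ n ↔
      RingOfIntegers.mapRingEquiv Q.conj.toRingEquiv y ∈ P.asIdeal ^ n := by
  change y ∈ (P.asIdeal.comap (RingOfIntegers.mapRingEquiv Q.conj.toRingEquiv)) ^ n ↔ _
  rw [← Ideal.map_symm, ← Ideal.map_pow, Ideal.map_symm]
  rfl

omit [NumberField K] in
lemma intValuation_conjPrime (P : FinitePrime L) (y : 𝓞 L) :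
    (Q.conjPrime P).intValuation y =
      P.intValuation (RingOfIntegers.mapRingEquiv Q.conj.toRingEquiv y) := by
  rcases eq_or_ne y 0 with rfl | hy
  · simp
  have hy' : RingOfIntegers.mapRingEquiv Q.conj.toRingEquiv y ≠ 0 := by simpa using hy
  have key (n : ℕ) : (Q.conjPrime P).intValuation y ≤ exp (-(n : ℤ)) ↔
      P.intValuation (RingOfIntegers.mapRingEquiv Q.conj.toRingEquiv y) ≤ exp (-(n : ℤ)) := by
    rw [intValuation_le_pow_iff_mem, intValuation_le_pow_iff_mem, mem_conjPrime_pow]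
  rw [intValuation_eq_exp_neg_multiplicity _ hy,
    intValuation_eq_exp_neg_multiplicity _ hy'] at key ⊢
  exact le_antisymm ((key _).2 le_rfl) ((key _).1 le_rfl)

omit [NumberField K] in
lemma valuation_conjPrime (P : FinitePrime L) (x : L) :
    (Q.conjPrime P).valuation L x = P.valuation L (Q.conj x) := by
  obtain ⟨a, b, -, rfl⟩ := IsFractionRing.div_surjective (A := 𝓞 L) x
  rw [map_div₀, map_div₀, map_div₀, valuation_of_algebraMap, valuation_of_algebraMap,
    intValuation_conjPrime, intValuation_conjPrime, ← valuation_of_algebraMap (K := L),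
    ← valuation_of_algebraMap (K := L)]
  rfl

omit [NumberField K] in
lemma ord_conjPrime (P : FinitePrime L) (x : Lˣ) :
    ord (Q.conjPrime P) x = ord P (Q.unitsConj x) := by
  have h : _ = P.valuation L (Q.unitsConj x : L) := Q.valuation_conjPrime P x
  rwa [valuation_eq_exp_neg_ord, valuation_eq_exp_neg_ord, exp_inj, neg_inj] at h

@[simp] lemma under_conjPrime (P : FinitePrime L) :
    (Q.conjPrime P).under (𝓞 K) = P.under (𝓞 K) := by
  have hmem (R : FinitePrime L) (x : 𝓞 K) : x ∈ (R.under (𝓞 K)).asIdeal ↔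
      R.valuation L (algebraMap K L (algebraMap (𝓞 K) K x)) < 1 := by
    rw [valuation_algebraMap_lt_one_iff, valuation_of_algebraMap, intValuation_lt_one_iff_mem]
  ext x
  rw [hmem, hmem, valuation_conjPrime, AlgEquiv.commutes]

lemma eq_or_eq_conjPrime {P P' : FinitePrime L} (h : P.under (𝓞 K) = P'.under (𝓞 K)) :
    P' = P ∨ P' = Q.conjPrime P := by
  have := Q.isGalois
  have : P.asIdeal.LiesOver (P.under (𝓞 K)).asIdeal := ⟨rfl⟩
  have : P'.asIdeal.LiesOver (P.under (𝓞 K)).asIdeal := ⟨congrArg HeightOneSpectrum.asIdeal h⟩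
  obtain ⟨τ, hτ⟩ := Ideal.exists_smul_eq_of_isGaloisGroup (P.under (𝓞 K)).asIdeal
    P'.asIdeal P.asIdeal Gal(L/K)
  have hmem (x : 𝓞 L) : x ∈ P'.asIdeal ↔ τ • x ∈ P.asIdeal := by
    rw [← hτ, Ideal.smul_mem_pointwise_smul_iff]
  rcases Q.eq_one_or_eq_conj τ with rfl | rfl
  · left
    ext x
    simp [hmem]
  · right
    ext x
    exact hmem x

lemma mem_finiteLocalSquares_of_conjPrime_ne {P : FinitePrime L} (h : Q.conjPrime P ≠ P) :
    c ∈ finiteLocalSquares (P.under (𝓞 K)) := by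
  classical
  -- An element close to `1` at `P` and to `0` at its conjugate has trace-free part close to `1`.
  obtain ⟨z, hz, -⟩ := weak_approximation {P, Q.conjPrime P} (fun R ↦ if R = P then 1 else 0)
    (fun _ ↦ (valuation_four_pos P).ne') (fun _ ↦ 0) one_pos
  have hzP := hz P (by simp)
  have hzP' := hz (Q.conjPrime P) (by simp)
  simp only [h, if_true, if_false, sub_zero, valuation_conjPrime] at hzP hzP'
  obtain ⟨b, hb⟩ := Q.exists_eq_algebraMap (x := (z - Q.conj z) / Q.sqrt) (by
    rw [map_div₀, map_sub, conj_conj, Q.conj_sqrt, div_neg, ← neg_div, neg_sub])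
  rw [div_eq_iff Q.sqrt.ne_zero] at hb
  have hsub : P.valuation L (algebraMap K L b * Q.sqrt - 1) < P.valuation L 4 := by
    rw [← hb, sub_right_comm]
    exact Valuation.map_sub_lt _ hzP hzP'
  have hadd : P.valuation L (algebraMap K L b * Q.sqrt + 1) ≤ 1 := by
    have hsplit : algebraMap K L b * Q.sqrt + 1 =
        (algebraMap K L b * Q.sqrt - 1) + (2 : ℕ) := by push_cast; ring
    rw [hsplit]
    exact (Valuation.map_add _ _ _).trans
      (max_le (hsub.le.trans (valuation_ofNat_le_one P 4)) (valuation_natCast_le_one P 2))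
  have hb0 : b ≠ 0 := by
    rintro rfl
    rw [map_zero, zero_mul, zero_sub, Valuation.map_neg, map_one] at hsub
    exact (hsub.trans_le (valuation_ofNat_le_one P 4)).false
  refine ⟨Units.mk0 b hb0, valuation_lt_of_valuation_algebraMap_lt P ?_⟩
  have hfactor : algebraMap K L (c * (Units.mk0 b hb0 : K) ^ 2 - 1) =
      (algebraMap K L b * Q.sqrt - 1) * (algebraMap K L b * Q.sqrt + 1) := by
    rw [Units.val_mk0, map_sub, map_mul, map_pow, ← Q.sq_sqrt, map_one]
    ring
  rw [hfactor, map_mul, map_ofNat]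
  exact (mul_le_of_le_one_right' hadd).trans_lt hsub

lemma conjPrime_ne_of_mem_finiteLocalSquares {P : FinitePrime L}
    (h : c ∈ finiteLocalSquares (P.under (𝓞 K))) : Q.conjPrime P ≠ P := by
  intro hP
  obtain ⟨y, hy⟩ := h
  set θ : L := (1 + Q.sqrt * algebraMap K L y) / 2 with hθ
  have hconj : Q.conj θ = (1 - Q.sqrt * algebraMap K L y) / 2 := by
    simp [hθ, Q.conj_sqrt, sub_eq_add_neg, map_div₀, map_ofNat]
  have htrace : θ + Q.conj θ = 1 := by
    rw [hconj, hθ]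
    ring
  have hnorm : θ * Q.conj θ = algebraMap K L (-((c : K) * (y : K) ^ 2 - 1) / 4) := by
    rw [hconj, hθ]
    simp only [map_div₀, map_neg, map_sub, map_mul, map_pow, map_one, map_ofNat, ← Q.sq_sqrt]
    ring
  have hval : P.valuation L (Q.conj θ) = P.valuation L θ := by rw [← valuation_conjPrime, hP]
  have hlt : P.valuation L θ < 1 := by
    have hlt' : P.valuation L (θ * Q.conj θ) < 1 := by
      rw [hnorm, valuation_algebraMap_lt_one_iff, map_div₀, Valuation.map_neg,
        div_lt_one₀ (valuation_four_pos _)]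
      exact hy
    rw [map_mul, hval] at hlt'
    exact lt_of_not_ge fun h ↦ (one_le_mul h h).not_gt hlt'
  have := Valuation.map_add_lt _ hlt (hval ▸ hlt)
  rw [htrace, map_one] at this
  exact this.false

lemma conjPrime_ne_iff (P : FinitePrime L) :
    Q.conjPrime P ≠ P ↔ c ∈ finiteLocalSquares (P.under (𝓞 K)) :=
  ⟨Q.mem_finiteLocalSquares_of_conjPrime_ne, Q.conjPrime_ne_of_mem_finiteLocalSquares⟩

omit [NumberField K] in
lemma exists_ord_eq_one_and_ord_unitsConj_eq_one (P : FinitePrime L) :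
    ∃ π : Lˣ, ord P π = 1 ∧ ord P (Q.unitsConj π) = 1 := by
  classical
  choose ϖ hϖ using fun R : FinitePrime L ↦ exists_ord_eq_one L R
  obtain ⟨π, -, hπ, -⟩ := exists_localSquares_approximation
    (Finset.disjoint_empty_right {P, Q.conjPrime P}) (Sum.elim 1 ϖ) 0 (ε := 1) (by simp)
  refine ⟨π, (hπ P (by simp)).2.trans (hϖ P), ?_⟩
  rw [← ord_conjPrime]
  exact (hπ (Q.conjPrime P) (by simp)).2.trans (hϖ _)

include Q in
/-- A uniformizer `π` whose conjugate is a uniformizer has the form `a + b√c` with `a`, `b ∈ K`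
non-units at `P`, so its order is at least the ramification index. -/
lemma ramificationExp_eq_one {P : FinitePrime L} (hP : IsOdd (P.under (𝓞 K)))
    (hc : ord (P.under (𝓞 K)) c = 0) : ramificationExp K P = 1 := by
  obtain ⟨π, hπ, hπ'⟩ := Q.exists_ord_eq_one_and_ord_unitsConj_eq_one P
  have hlt {x : Lˣ} (hx : ord P x = 1) : P.valuation L x < 1 := by
    rw [valuation_eq_exp_neg_ord, hx, ← exp_zero, exp_lt_exp]
    omega
  have h2 : P.valuation L 2 = 1 := by
    have h := valuation_algebraMap (K := K) P 2
    rwa [hP, one_pow, map_ofNat] at h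
  have hsqrt : P.valuation L Q.sqrt = 1 := by
    have h : ord P (Q.sqrt ^ 2) = 0 := by rw [sqrt_sq, ord_unitsMap, hc, mul_zero]
    rw [ord_pow] at h
    exact (valuation_eq_one_iff _ _).2 (by simpa using h)
  obtain ⟨a, b, hab⟩ := Q.exists_eq_add_mul_sqrt π
  have hconj : (Q.unitsConj π : L) = algebraMap K L a - algebraMap K L b * Q.sqrt := by
    rw [coe_unitsConj, hab]
    simp [Q.conj_sqrt, sub_eq_add_neg]
  have ha : P.valuation L (algebraMap K L a) < 1 := by
    have h := Valuation.map_add_lt _ (hlt hπ) (hlt hπ')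
    rwa [hconj, hab, add_add_sub_cancel, ← two_mul, map_mul, h2, one_mul] at h
  have hb : P.valuation L (algebraMap K L b) < 1 := by
    have h := Valuation.map_sub_lt _ (hlt hπ) (hlt hπ')
    rwa [hconj, hab, add_sub_sub_cancel, ← two_mul, map_mul, h2, one_mul, map_mul, hsqrt,
      mul_one] at h
  have hle : (exp (-1) : ℤᵐ⁰) ≤ exp (-(ramificationExp K P : ℤ)) := by
    rw [← hπ, ← valuation_eq_exp_neg_ord, hab]
    refine (Valuation.map_add _ _ _).trans (max_le (valuation_algebraMap_le_of_lt_one ha) ?_)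
    rw [map_mul, hsqrt, mul_one]
    exact valuation_algebraMap_le_of_lt_one hb
  have hpos := ramificationExp_pos (K := K) P
  rw [exp_le_exp] at hle
  omega

end QuadraticExtension

section CountingPlaces

variable {L : Type*} [Field L] [NumberField L] [Algebra K L] {c : Kˣ}
  (Q : QuadraticExtension K L c)

namespace QuadraticExtension

omit [NumberField K] [NumberField L] in
include Q in
lemma mem_infiniteLocalSquares_of_isUnramified {W : InfinitePlace L} (hW : W.IsUnramified K) :
    c ∈ infiniteLocalSquares (W.comap (algebraMap K L)) := by
  rcases InfinitePlace.isUnramified_iff.1 hW with hreal | hcomplex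
  · obtain ⟨ψ, rfl⟩ := exists_realPlace_eq hreal
    intro φ hφ
    rw [← realPlace_comp_algebraMap] at hφ
    have hc : ψ.comp (algebraMap K L) c = ψ Q.sqrt ^ 2 := by
      rw [← map_pow, Q.sq_sqrt, RingHom.comp_apply]
    have h0 : ψ Q.sqrt ≠ 0 := (map_ne_zero ψ).2 Q.sqrt.ne_zero
    rw [realPlace_injective hφ, hc]
    positivity
  · rw [infiniteLocalSquares_eq_top_of_isComplex hcomplex]
    trivial

omit [NumberField K] in
include Q in
lemma isReal_of_mem_infiniteLocalSquares {W : InfinitePlace L}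
    (hW : (W.comap (algebraMap K L)).IsReal)
    (hc : c ∈ infiniteLocalSquares (W.comap (algebraMap K L))) : W.IsReal := by
  obtain ⟨φ, hφ⟩ := exists_realPlace_eq hW
  have hpos : 0 < φ c := hc φ hφ
  set ψ := W.embedding with hψ
  have hψφ (x : K) : ψ (algebraMap K L x) = (φ x : ℂ) := by
    rw [← InfinitePlace.mk_embedding W, InfinitePlace.comap_mk, realPlace,
      InfinitePlace.mk_eq_iff] at hφ
    rcases hφ with h | h
    · exact (DFunLike.congr_fun h x).symm
    · simpa [ComplexEmbedding.conjugate] using (DFunLike.congr_fun h x).symm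
  have hsqrt : (starRingEnd ℂ) (ψ Q.sqrt) = ψ Q.sqrt := by
    have hsq : ψ Q.sqrt ^ 2 = ((√(φ c) : ℝ) : ℂ) ^ 2 := by
      rw [← map_pow, Q.sq_sqrt, hψφ, ← Complex.ofReal_pow, Real.sq_sqrt hpos.le]
    rcases sq_eq_sq_iff_eq_or_eq_neg.1 hsq with h | h <;> rw [h] <;> simp
  have hreal : ComplexEmbedding.IsReal ψ := by
    rw [ComplexEmbedding.isReal_iff]
    ext x
    obtain ⟨a, b, rfl⟩ := Q.exists_eq_add_mul_sqrt x
    rw [ComplexEmbedding.conjugate_coe_eq]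
    simp only [map_add, map_mul, hψφ, hsqrt, Complex.conj_ofReal]
  exact ⟨ψ, hreal, by rw [hψ, InfinitePlace.mk_embedding]⟩

include Q in
lemma isUnramifiedIn_iff (w : InfinitePlace K) :
    w.IsUnramifiedIn L ↔ c ∈ infiniteLocalSquares w := by
  have := Q.isGalois
  obtain ⟨W, rfl⟩ := InfinitePlace.comap_surjective (K := L) w
  rw [InfinitePlace.isUnramifiedIn_comap]
  refine ⟨Q.mem_infiniteLocalSquares_of_isUnramified, fun hc ↦ ?_⟩
  by_contra hW
  obtain ⟨hcomplex, hreal⟩ := InfinitePlace.isRamified_iff.1 hW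
  exact InfinitePlace.not_isReal_iff_isComplex.2 hcomplex
    (Q.isReal_of_mem_infiniteLocalSquares hreal hc)

open Classical in
include Q in
lemma card_infinitePlace : Fintype.card (InfinitePlace L) =
    Fintype.card (InfinitePlace K) +
      (Finset.univ.filter fun w : InfinitePlace K ↦ c ∈ infiniteLocalSquares w).card := by
  have := Q.isGalois
  have hcompl := Finset.card_add_card_compl
    (Finset.univ.filter fun w : InfinitePlace K ↦ w.IsUnramifiedIn L)
  have hL := InfinitePlace.card_eq_card_isUnramifiedIn K L
  rw [Q.finrank_eq_two] at hL
  simp only [Q.isUnramifiedIn_iff] at hcompl hL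
  omega

open Classical in
include Q in
lemma card_primesAbove (S : Finset (FinitePrime K)) :
    (primesAbove L S).card = S.card + (S.filter fun v ↦ c ∈ finiteLocalSquares v).card := by
  rw [Finset.card_eq_sum_card_fiberwise (f := fun P ↦ P.under (𝓞 K)) (t := S)
    fun P hP ↦ mem_primesAbove.1 hP, Finset.card_filter, Finset.card_eq_sum_ones,
    ← Finset.sum_add_distrib]
  refine Finset.sum_congr rfl fun v hv ↦ ?_
  obtain ⟨P, rfl⟩ := exists_under_eq L v
  have hfiber : {P' ∈ primesAbove L S | P'.under (𝓞 K) = P.under (𝓞 K)} =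
      {P, Q.conjPrime P} := by
    ext P'
    simp only [Finset.mem_filter, mem_primesAbove, Finset.mem_insert, Finset.mem_singleton]
    constructor
    · rintro ⟨-, h⟩
      exact Q.eq_or_eq_conjPrime h.symm
    · rintro (rfl | rfl) <;> simpa using hv
  rw [hfiber, ← Q.conjPrime_ne_iff]
  by_cases h : Q.conjPrime P = P
  · simp [h]
  · rw [if_pos h, Finset.card_pair (Ne.symm h)]

open Classical in
include Q in
lemma card_sPlaces_primesAbove (S : Finset (FinitePrime K)) :
    (sPlaces (primesAbove L S)).card =
      (sPlaces S).card + ((sPlaces S).filter fun p ↦ c ∈ localSquares p).card := by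
  have hsplit : ((sPlaces S).filter fun p ↦ c ∈ localSquares p).card =
      (Finset.univ.filter fun w : InfinitePlace K ↦ c ∈ infiniteLocalSquares w).card +
        (S.filter fun v ↦ c ∈ finiteLocalSquares v).card := by
    rw [← Finset.card_disjSum]
    congr 1
    ext (w | v) <;> rw [Finset.mem_filter] <;> simp [localSquares]
  rw [card_sPlaces, card_sPlaces, Q.card_infinitePlace, Q.card_primesAbove, hsplit]
  omega

lemma unitsConj_mem_sUnits {S : Finset (FinitePrime K)} {x : Lˣ}
    (h : x ∈ sUnits (primesAbove L S)) : Q.unitsConj x ∈ sUnits (primesAbove L S) := by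
  rw [mem_sUnits] at h ⊢
  intro P hP
  rw [← ord_conjPrime]
  exact h _ (by simpa using hP)

end QuadraticExtension

end CountingPlaces

/-! ### The index of the norms of `S`-units -/

section CommGroup

lemma relIndex_map_map_of_ker_inf_le {G H : Type*} [Group G] [Group H] (f : G →* H)
    {A U : Subgroup G} (hAU : A ≤ U) (h : f.ker ⊓ U ≤ A) :
    (A.map f).relIndex (U.map f) = A.relIndex U := by
  rw [← Subgroup.relIndex_comap, ← Subgroup.inf_relIndex_right]
  congr 1
  refine le_antisymm ?_ fun x hx ↦ ⟨⟨x, hx, rfl⟩, hAU hx⟩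
  rintro x ⟨⟨a, ha, hax⟩, hxU⟩
  have hmem : x * a⁻¹ ∈ A :=
    h ⟨MonoidHom.mem_ker.2 (by rw [map_mul, map_inv, hax, mul_inv_cancel]),
      U.mul_mem hxU (U.inv_mem (hAU ha))⟩
  simpa using A.mul_mem hmem ha

lemma finrank_map_add_finrank_ker_inf {G H : Type*} [CommGroup G] [CommGroup H] (f : G →* H)
    (U : Subgroup G) [Module.Finite ℤ (Additive U)] :
    Module.finrank ℤ (Additive (U.map f)) +
      Module.finrank ℤ (Additive (f.ker ⊓ U : Subgroup G)) = Module.finrank ℤ (Additive U) := by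
  let P : Additive U →ₗ[ℤ] Additive (U.map f) := (f.subgroupMap U).toAdditive.toIntLinearMap
  let I : Additive (f.ker ⊓ U : Subgroup G) →ₗ[ℤ] Additive U :=
    (Subgroup.inclusion inf_le_right).toAdditive.toIntLinearMap
  have hP : Function.Surjective P := f.subgroupMap_surjective U
  have hI : Function.Injective I := Subgroup.inclusion_injective inf_le_right
  have hexact : LinearMap.range I = LinearMap.ker P := by
    ext x
    constructor
    · rintro ⟨y, rfl⟩
      exact Subtype.ext y.toMul.2.1
    · intro h
      exact ⟨.ofMul ⟨x.toMul, congrArg Subtype.val h, x.toMul.2⟩, rfl⟩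
  have h := Submodule.finrank_quotient_add_finrank (LinearMap.ker P)
  rwa [(P.quotKerEquivOfSurjective hP).finrank_eq, ← hexact,
    ← (LinearEquiv.ofInjective I hI).finrank_eq] at h

end CommGroup

open Classical in
/-- The infinite places and the places in `S` at which `c` is not a local square. -/
noncomputable def nonsplitPlaces (S : Finset (FinitePrime K)) (c : Kˣ) : Finset (Place K) :=
  (sPlaces S).filter fun p ↦ c ∉ localSquares p

lemma mem_nonsplitPlaces {S : Finset (FinitePrime K)} {c : Kˣ} {p : Place K} :
    p ∈ nonsplitPlaces S c ↔ p ∈ sPlaces S ∧ c ∉ localSquares p := by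
  classical exact Finset.mem_filter

namespace QuadraticExtension

variable {L : Type*} [Field L] [NumberField L] [Algebra K L] {c : Kˣ}
  (Q : QuadraticExtension K L c)

lemma ker_divConj_inf_sUnits (S : Finset (FinitePrime K)) :
    Q.divConj.ker ⊓ sUnits (primesAbove L S) = (sUnits S).map (unitsMap K L) := by
  ext x
  constructor
  · rintro ⟨hx, hxS⟩
    obtain ⟨a, rfl⟩ := Q.exists_eq_unitsMap (div_eq_one.1 (MonoidHom.mem_ker.1 hx)).symm
    exact ⟨a, unitsMap_mem_sUnits_iff.1 hxS, rfl⟩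
  · rintro ⟨y, hy, rfl⟩
    exact ⟨by simp, unitsMap_mem_sUnits_iff.2 hy⟩

lemma exists_ord_unitsMap_eq {S : Finset (FinitePrime K)} (hS : IsPrincipalOutside S)
    (hodd : dyadicPrimes K ⊆ S) (hc : primeSupport c ⊆ S) {y : Lˣ}
    (hy : ∀ P ∉ primesAbove L S, ord (Q.conjPrime P) y = ord P y) :
    ∃ k : Kˣ, ∀ P ∉ primesAbove L S, ord P (unitsMap K L k) = ord P y := by
  choose above habove using exists_under_eq (K := K) L
  obtain ⟨k, hk⟩ := hS.exists_ord_eq (n := fun v ↦ ord (above v) y)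
    (((finite_setOf_ord_ne_zero y).image fun P ↦ P.under (𝓞 K)).subset
      fun v hv ↦ ⟨above v, hv, habove v⟩)
  refine ⟨k, fun P hP ↦ ?_⟩
  rw [mem_primesAbove] at hP
  have hram := Q.ramificationExp_eq_one (P := P)
    (isOdd_iff_notMem_dyadicPrimes.2 fun h ↦ hP (hodd h))
    (by_contra fun h ↦ hP (hc (mem_primeSupport.2 h)))
  rw [ord_unitsMap, hram, hk _ hP, Nat.cast_one, one_mul]
  rcases Q.eq_or_eq_conjPrime (habove (P.under (𝓞 K))) with h | h
  · rw [← h]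
  · rw [← hy _ (by simpa [habove] using hP), ← h]

lemma ker_norm_inf_sUnits_le {S : Finset (FinitePrime K)} (hS : IsPrincipalOutside S)
    (hodd : dyadicPrimes K ⊆ S) (hc : primeSupport c ⊆ S) :
    Q.norm.ker ⊓ sUnits (primesAbove L S) ≤ (sUnits (primesAbove L S)).map Q.divConj := by
  rintro x ⟨hx, hxS⟩
  obtain ⟨y, rfl⟩ := Q.exists_eq_divConj hx
  obtain ⟨k, hk⟩ := Q.exists_ord_unitsMap_eq hS hodd hc (y := y) fun P hP ↦ by
    have h := mem_sUnits.1 hxS P hP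
    rw [divConj_apply, ord_div, ← ord_conjPrime] at h
    omega
  refine ⟨y / unitsMap K L k, mem_sUnits.2 fun P hP ↦ ?_, by simp⟩
  rw [ord_div, hk P hP, sub_self]

/-- The norms of the `S`-units of `L`. -/
noncomputable def sUnitNorms (S : Finset (FinitePrime K)) : Subgroup Kˣ :=
  ((sUnits (primesAbove L S)).map Q.norm).comap (unitsMap K L)

lemma mem_sUnitNorms {S : Finset (FinitePrime K)} {a : Kˣ} :
    a ∈ Q.sUnitNorms S ↔ ∃ x ∈ sUnits (primesAbove L S), Q.norm x = unitsMap K L a :=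
  Iff.rfl

lemma sUnitNorms_le_sUnits (S : Finset (FinitePrime K)) : Q.sUnitNorms S ≤ sUnits S := by
  rintro a ⟨x, hx, h⟩
  rw [← unitsMap_mem_sUnits_iff (L := L), ← h]
  exact mul_mem hx (Q.unitsConj_mem_sUnits hx)

lemma sUnitNorms_le_quadraticNorms (S : Finset (FinitePrime K)) :
    Q.sUnitNorms S ≤ quadraticNorms c := by
  rintro a ⟨x, -, h⟩
  exact Q.mem_quadraticNorms_iff.2 ⟨x, h⟩

lemma sUnits_inf_quadraticNorms_le {S : Finset (FinitePrime K)}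
    (hS : IsPrincipalOutside (primesAbove L S)) :
    sUnits S ⊓ quadraticNorms c ≤ Q.sUnitNorms S := by
  rintro a ⟨haS, ha⟩
  obtain ⟨x, hx⟩ := Q.mem_quadraticNorms_iff.1 ha
  -- Dividing by `z̄ / z`, where `z` cancels the poles of `x` outside `S`, makes `x` an `S`-unit.
  obtain ⟨z, hz⟩ := hS.exists_ord_eq (n := fun P ↦ max (-ord P x) 0)
    ((finite_setOf_ord_ne_zero x).subset fun P hP h0 ↦ by simp [h0] at hP)
  refine Q.mem_sUnitNorms.2 ⟨x * (z / Q.unitsConj z), mem_sUnits.2 fun P hP ↦ ?_, ?_⟩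
  · have hP' : Q.conjPrime P ∉ primesAbove L S := by simpa using hP
    have h0 : ord P (unitsMap K L a) = 0 :=
      mem_sUnits.1 (unitsMap_mem_sUnits_iff.2 haS) P hP
    rw [← hx, norm_apply, ord_mul] at h0
    rw [ord_mul, ord_div, ← ord_conjPrime, hz P hP, hz _ hP', ord_conjPrime]
    omega
  · have hz' : Q.norm (z / Q.unitsConj z) = 1 := by
      rw [norm_apply, map_div, unitsConj_unitsConj, div_mul_div_cancel, div_self']
    rw [map_mul, hz', mul_one, hx]

variable (S : Finset (FinitePrime K))

lemma unitsConj_eq_inv {z : Lˣ} (hz : z ∈ (sUnits (primesAbove L S)).map Q.divConj) :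
    Q.unitsConj z = z⁻¹ := by
  obtain ⟨y, -, rfl⟩ := hz
  simp

lemma map_sUnits_sup_map_divConj_le :
    (sUnits S).map (unitsMap K L) ⊔ (sUnits (primesAbove L S)).map Q.divConj ≤
      sUnits (primesAbove L S) := by
  refine sup_le ?_ ?_
  · rintro _ ⟨y, hy, rfl⟩
    exact unitsMap_mem_sUnits_iff.2 hy
  · rintro _ ⟨y, hy, rfl⟩
    exact div_mem hy (Q.unitsConj_mem_sUnits hy)

lemma map_divConj_sup :
    ((sUnits S).map (unitsMap K L) ⊔ (sUnits (primesAbove L S)).map Q.divConj).map Q.divConj =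
      squares ((sUnits (primesAbove L S)).map Q.divConj) := by
  have hK : ((sUnits S).map (unitsMap K L)).map Q.divConj = ⊥ := by
    rw [← ker_divConj_inf_sUnits, Subgroup.map_eq_bot_iff]
    exact inf_le_left
  rw [Subgroup.map_sup, hK, bot_sup_eq]
  ext x
  simp only [Subgroup.mem_map (f := Q.divConj) (K := Subgroup.map _ _), mem_squares]
  refine exists_congr fun z ↦ and_congr_right fun hz ↦ ?_
  rw [divConj_apply, Q.unitsConj_eq_inv S hz, div_inv_eq_mul, sq]

lemma map_norm_sup :
    ((sUnits S).map (unitsMap K L) ⊔ (sUnits (primesAbove L S)).map Q.divConj).map Q.norm =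
      squares ((sUnits S).map (unitsMap K L)) := by
  have hZ : ((sUnits (primesAbove L S)).map Q.divConj).map Q.norm = ⊥ := by
    rw [Subgroup.map_eq_bot_iff]
    intro z hz
    rw [MonoidHom.mem_ker, norm_apply, Q.unitsConj_eq_inv S hz, mul_inv_cancel]
  rw [Subgroup.map_sup, hZ, sup_bot_eq]
  ext x
  simp only [Subgroup.mem_map (f := Q.norm) (K := Subgroup.map _ _), mem_squares]
  refine exists_congr fun z ↦ and_congr_right ?_
  rintro ⟨k, -, rfl⟩
  rw [norm_apply, unitsConj_unitsMap, sq]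

lemma map_norm_sUnits_le :
    (sUnits (primesAbove L S)).map Q.norm ≤ (sUnits S).map (unitsMap K L) := by
  rintro _ ⟨x, hx, rfl⟩
  obtain ⟨a, ha⟩ := Q.exists_norm_eq x
  have hmem : Q.norm x ∈ sUnits (primesAbove L S) := mul_mem hx (Q.unitsConj_mem_sUnits hx)
  exact ⟨a, unitsMap_mem_sUnits_iff.1 (ha ▸ hmem), ha.symm⟩

omit [NumberField L] in
lemma relIndex_squares_map_sUnits :
    (squares ((sUnits S).map (unitsMap K L))).relIndex ((sUnits S).map (unitsMap K L)) =
      2 ^ (sPlaces S).card := by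
  have hsq : squares ((sUnits S).map (unitsMap K L)) = (squares (sUnits S)).map (unitsMap K L) := by
    rw [squares, squares, Subgroup.map_map, Subgroup.map_map]
    congr 1
    ext
    simp
  rw [hsq, Subgroup.relIndex_map_map_of_injective _ _ (unitsMap_injective K L),
    relIndex_squares_sUnits]

lemma finrank_map_divConj :
    Module.finrank ℤ (Additive ((sUnits (primesAbove L S)).map Q.divConj)) +
      (nonsplitPlaces S c).card = (sPlaces S).card := by
  classical
  have hexact := finrank_map_add_finrank_ker_inf Q.divConj (sUnits (primesAbove L S))
  rw [ker_divConj_inf_sUnits, ← (AddEquiv.toIntLinearEquiv (MulEquiv.toAdditive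
    ((sUnits S).equivMapOfInjective _ (unitsMap_injective K L)))).finrank_eq] at hexact
  have hK := finrank_sUnits S
  have hL := finrank_sUnits (primesAbove L S)
  have hplaces := Q.card_sPlaces_primesAbove S
  have hsplit : ((sPlaces S).filter fun p ↦ c ∈ localSquares p).card +
      (nonsplitPlaces S c).card = (sPlaces S).card :=
    Finset.card_filter_add_card_filter_not _
  omega

variable {S}

lemma neg_one_mem_map_divConj (hc : primeSupport c ⊆ S) :
    (-1 : Lˣ) ∈ (sUnits (primesAbove L S)).map Q.divConj := by
  refine ⟨Q.sqrt, mem_sUnits.2 fun P hP ↦ ?_, ?_⟩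
  · have h : ord P (Q.sqrt ^ 2) = 0 := by
      rw [sqrt_sq]
      exact mem_sUnits.1
        (unitsMap_mem_sUnits_iff.2 (mem_sUnits_iff_primeSupport_subset.2 hc)) P hP
    rw [ord_pow] at h
    simpa using h
  · rw [divConj_apply, unitsConj_sqrt, div_neg, div_self']

/-- Both `norm` and `x ↦ x / x̄` identify the `S`-units of `L` modulo `(S-units of K) · Z`, with `Z`
the image of the second map, with a quotient by squares: `N(U_L) / U_K²` and `Z / Z²`. -/
lemma relIndex_squares_map_norm (hS : IsPrincipalOutside S) (hodd : dyadicPrimes K ⊆ S)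
    (hc : primeSupport c ⊆ S) :
    (squares ((sUnits S).map (unitsMap K L))).relIndex ((sUnits (primesAbove L S)).map Q.norm) =
      2 ^ (Module.finrank ℤ (Additive ((sUnits (primesAbove L S)).map Q.divConj)) + 1) := by
  have hle := Q.map_sUnits_sup_map_divConj_le S
  have : Module.Finite ℤ (Additive ((sUnits (primesAbove L S)).map Q.divConj)) :=
    .of_surjective (Q.divConj.subgroupMap (sUnits (primesAbove L S))).toAdditive.toIntLinearMap
      (Q.divConj.subgroupMap_surjective _)
  rw [← relIndex_squares (Q.neg_one_mem_map_divConj hc), ← map_norm_sup, ← map_divConj_sup,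
    relIndex_map_map_of_ker_inf_le _ hle, relIndex_map_map_of_ker_inf_le _ hle]
  · rw [ker_divConj_inf_sUnits]
    exact le_sup_left
  · exact (Q.ker_norm_inf_sUnits_le hS hodd hc).trans le_sup_right

lemma relIndex_sUnitNorms (hS : IsPrincipalOutside S) (hodd : dyadicPrimes K ⊆ S)
    (hc : primeSupport c ⊆ S) :
    (Q.sUnitNorms S).relIndex (sUnits S) * 2 = 2 ^ (nonsplitPlaces S c).card := by
  have hsq_le : squares ((sUnits S).map (unitsMap K L)) ≤
      (sUnits (primesAbove L S)).map Q.norm := by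
    rw [← map_norm_sup]
    exact Subgroup.map_mono (Q.map_sUnits_sup_map_divConj_le S)
  have htower := Subgroup.relIndex_mul_relIndex _ _ _ hsq_le (Q.map_norm_sUnits_le S)
  rw [Q.relIndex_squares_map_norm hS hodd hc, relIndex_squares_map_sUnits,
    ← Subgroup.relIndex_comap, ← Q.finrank_map_divConj S, pow_succ, pow_add, mul_assoc] at htower
  rw [mul_comm]
  exact Nat.eq_of_mul_eq_mul_left (by positivity) htower

end QuadraticExtension

/-- The first inequality, with norms of `S`-units of `K(√c)` in place of idele norms. -/
theorem exists_norm_subgroup_relIndex {S : Finset (FinitePrime K)} {c : Kˣ}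
    (hS : IsPrincipalOutside S) (hodd : dyadicPrimes K ⊆ S) (hc : primeSupport c ⊆ S)
    (hsq : ¬ IsSquare c) :
    ∃ N : Subgroup Kˣ, N ≤ sUnits S ∧ N ≤ quadraticNorms c ∧
      N.relIndex (sUnits S) * 2 = 2 ^ (nonsplitPlaces S c).card := by
  obtain ⟨L, _, _, _, ⟨Q⟩⟩ := exists_quadraticExtension hsq
  exact ⟨Q.sUnitNorms S, Q.sUnitNorms_le_sUnits S, Q.sUnitNorms_le_quadraticNorms S,
    Q.relIndex_sUnitNorms hS hodd hc⟩

theorem exists_forall_relIndex_quadraticNorms {c : Kˣ} (hsq : ¬ IsSquare c) :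
    ∃ S₀ : Finset (FinitePrime K), ∀ S, S₀ ⊆ S →
      (sUnits S ⊓ quadraticNorms c).relIndex (sUnits S) * 2 = 2 ^ (nonsplitPlaces S c).card := by
  classical
  obtain ⟨L, _, _, _, ⟨Q⟩⟩ := exists_quadraticExtension hsq
  obtain ⟨SK, hSK⟩ := exists_isPrincipalOutside (K := K)
  obtain ⟨SL, hSL⟩ := exists_isPrincipalOutside (K := L)
  refine ⟨SK ∪ dyadicPrimes K ∪ primeSupport c ∪ SL.image fun P ↦ P.under (𝓞 K), fun S hS ↦ ?_⟩
  simp only [Finset.union_subset_iff, Finset.image_subset_iff] at hS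
  obtain ⟨⟨⟨hSK', hodd⟩, hc⟩, hSL'⟩ := hS
  have hnorms : sUnits S ⊓ quadraticNorms c = Q.sUnitNorms S :=
    le_antisymm
      (Q.sUnits_inf_quadraticNorms_le (hSL.mono fun P hP ↦ mem_primesAbove.2 (hSL' P hP)))
      (le_inf (Q.sUnitNorms_le_sUnits S) (Q.sUnitNorms_le_quadraticNorms S))
  rw [hnorms, Q.relIndex_sUnitNorms (hSK.mono hSK') hodd hc]

/-! ### Finding places where given elements are not local squares -/

lemma mul_notMem_iff_of_imp {G : Type*} [Group G] {H : Subgroup G} {a b : G}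
    (h : a ∉ H → b ∈ H) : a * b ∉ H ↔ a ∉ H ∨ b ∉ H := by
  by_cases ha : a ∈ H
  · simp [H.mul_mem_cancel_left ha, ha]
  · simp [H.mul_mem_cancel_right (h ha), ha]

/-- If `a` and `b` had no common non-split place, the non-split places of `ab` would be the disjoint
union of theirs, and norms from both `K(√a)` and `K(√b)` would have too small an index. -/
theorem exists_notMem_localSquares_and_notMem {a b : Kˣ} (ha : ¬ IsSquare a) (hb : ¬ IsSquare b)
    (hab : ¬ IsSquare (a * b)) : ∃ p : Place K, a ∉ localSquares p ∧ b ∉ localSquares p := by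
  classical
  by_contra! hdisj
  obtain ⟨Sa, hSa⟩ := exists_forall_relIndex_quadraticNorms ha
  obtain ⟨Sb, hSb⟩ := exists_forall_relIndex_quadraticNorms hb
  obtain ⟨Sab, hSab⟩ := exists_forall_relIndex_quadraticNorms hab
  set S := Sa ∪ Sb ∪ Sab
  have ha_index := hSa S (Finset.subset_union_left.trans Finset.subset_union_left)
  have hb_index := hSb S (Finset.subset_union_right.trans Finset.subset_union_left)
  have hab_index := hSab S Finset.subset_union_right
  have hcard : (nonsplitPlaces S (a * b)).card =
      (nonsplitPlaces S a).card + (nonsplitPlaces S b).card := by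
    have hunion : nonsplitPlaces S (a * b) = nonsplitPlaces S a ∪ nonsplitPlaces S b := by
      ext p
      rw [Finset.mem_union, mem_nonsplitPlaces, mem_nonsplitPlaces, mem_nonsplitPlaces,
        mul_notMem_iff_of_imp (hdisj p), and_or_left]
    rw [hunion, Finset.card_union_of_disjoint]
    exact Finset.disjoint_left.2 fun p hpa hpb ↦
      (mem_nonsplitPlaces.1 hpb).2 (hdisj p (mem_nonsplitPlaces.1 hpa).2)
  rw [hcard, pow_add, ← ha_index, ← hb_index] at hab_index
  have hle : (sUnits S ⊓ quadraticNorms a) ⊓ (sUnits S ⊓ quadraticNorms b) ≤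
      sUnits S ⊓ quadraticNorms (a * b) :=
    fun x hx ↦ ⟨hx.1.1, mem_quadraticNorms_mul hab hx.1.2 hx.2.2⟩
  have ha0 : (sUnits S ⊓ quadraticNorms a).relIndex (sUnits S) ≠ 0 :=
    left_ne_zero_of_mul (ha_index ▸ pow_ne_zero _ two_ne_zero)
  have hb0 : (sUnits S ⊓ quadraticNorms b).relIndex (sUnits S) ≠ 0 :=
    left_ne_zero_of_mul (hb_index ▸ pow_ne_zero _ two_ne_zero)
  have hindex := (Subgroup.relIndex_le_of_le_left (L := sUnits S) hle
    (Subgroup.relIndex_inf_ne_zero ha0 hb0)).trans Subgroup.relIndex_inf_le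
  have hpos := Nat.mul_pos (Nat.pos_of_ne_zero ha0) (Nat.pos_of_ne_zero hb0)
  linarith

lemma not_isSquare_of_not_even_ord {x : Kˣ} (v : FinitePrime K) (h : ¬ Even (ord v x)) :
    ¬ IsSquare x := by
  rintro ⟨y, rfl⟩
  exact h ⟨ord v y, ord_mul v y y⟩

lemma exists_notMem_finiteLocalSquares {a : Kˣ} (ha : ¬ IsSquare a) (S : Finset (FinitePrime K)) :
    ∃ v ∉ S, a ∉ finiteLocalSquares v := by
  classical
  obtain ⟨v₀, hv₀⟩ := Infinite.exists_notMem_finset (S ∪ primeSupport a)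
  by_cases hav : a ∈ finiteLocalSquares v₀
  swap
  · exact ⟨v₀, fun h ↦ hv₀ (Finset.mem_union_left _ h), hav⟩
  obtain ⟨π, hπ⟩ := exists_ord_eq_one K v₀
  -- `b` is a uniformizer at `v₀`, and a local square at the infinite places and at `S`.
  obtain ⟨b, hb_inf, hb_fin, -⟩ := exists_localSquares_approximation
    (Finset.disjoint_empty_right (insert v₀ S)) (fun p ↦ if p = Sum.inr v₀ then π else 1) 0
    (ε := 1) (by simp)
  have hb₀ : ord v₀ b = 1 := by simpa [hπ] using (hb_fin v₀ (by simp)).2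
  have ha₀ : ord v₀ a = 0 :=
    by_contra fun h ↦ hv₀ (Finset.mem_union_right _ (mem_primeSupport.2 h))
  obtain ⟨w | v, hav', hbv⟩ := exists_notMem_localSquares_and_notMem ha
    (not_isSquare_of_not_even_ord v₀ (x := b) (by simp [hb₀]))
    (not_isSquare_of_not_even_ord v₀ (x := a * b) (by simp [ha₀, hb₀]))
  · have hb : b ∈ infiniteLocalSquares w := by simpa using hb_inf w
    exact absurd hb hbv
  · have hne : v ≠ v₀ := by
      rintro rfl
      exact hav' hav
    refine ⟨v, fun hv ↦ hbv ?_, hav'⟩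
    have hb : b ∈ finiteLocalSquares v := by simpa [hne] using (hb_fin v (by simp [hv])).1
    exact hb

lemma IsOdd.mul_mem_finiteLocalSquares {v : FinitePrime K} (h : IsOdd v) {a c : Kˣ}
    (ha : ord v a = 0) (hc : ord v c = 0) (ha' : a ∉ finiteLocalSquares v)
    (hc' : c ∉ finiteLocalSquares v) : a * c ∈ finiteLocalSquares v :=
  (Subgroup.mul_mem_iff_of_index_two h.relIndex_finiteLocalSquares
    (a := ⟨a, mem_higherUnits_zero.2 ha⟩) (b := ⟨c, mem_higherUnits_zero.2 hc⟩)).2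
      (iff_of_false ha' hc')

lemma exists_mem_and_notMem_finiteLocalSquares {a c : Kˣ} (ha : ¬ IsSquare a) (hc : ¬ IsSquare c)
    (hac : ¬ IsSquare (a * c)) (S : Finset (FinitePrime K)) :
    ∃ v ∉ S, c ∈ finiteLocalSquares v ∧ a ∉ finiteLocalSquares v := by
  classical
  obtain ⟨L, _, _, _, ⟨Q⟩⟩ := exists_quadraticExtension hc
  obtain ⟨P, hP, hPa⟩ := exists_notMem_finiteLocalSquares
    (fun h ↦ (Q.isSquare_or_isSquare_mul h).elim ha hac)
    (primesAbove L (S ∪ dyadicPrimes K ∪ primeSupport a ∪ primeSupport c))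
  simp only [mem_primesAbove, Finset.mem_union, not_or, mem_primeSupport, not_not] at hP
  obtain ⟨⟨⟨hS, hodd⟩, ha0⟩, hc0⟩ := hP
  have hav : a ∉ finiteLocalSquares (P.under (𝓞 K)) :=
    fun h ↦ hPa (unitsMap_mem_finiteLocalSquares P h)
  refine ⟨P.under (𝓞 K), hS, by_contra fun hcv ↦ hPa ?_, hav⟩
  have hmul := unitsMap_mem_finiteLocalSquares P
    ((isOdd_iff_notMem_dyadicPrimes.2 hodd).mul_mem_finiteLocalSquares ha0 hc0 hav hcv)
  rwa [map_mul, ← Q.sqrt_sq,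
    (finiteLocalSquares P).mul_mem_cancel_right (sq_mem_finiteLocalSquares P _)] at hmul

/-! ### Squares among the `S`-units -/

section LocalSquaresAt

variable {S T R : Finset (FinitePrime K)}

/-- The elements which are local squares at all the primes in `R`. -/
noncomputable def finiteLocalSquaresAt (R : Finset (FinitePrime K)) : Subgroup Kˣ :=
  ⨅ v ∈ R, finiteLocalSquares v

lemma mem_finiteLocalSquaresAt {x : Kˣ} :
    x ∈ finiteLocalSquaresAt R ↔ ∀ v ∈ R, x ∈ finiteLocalSquares v := by
  simp [finiteLocalSquaresAt, Subgroup.mem_iInf]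

@[simp] lemma finiteLocalSquaresAt_empty :
    finiteLocalSquaresAt (∅ : Finset (FinitePrime K)) = ⊤ := by
  simp [finiteLocalSquaresAt]

lemma finiteLocalSquaresAt_union [DecidableEq (FinitePrime K)] :
    finiteLocalSquaresAt (R ∪ T) = finiteLocalSquaresAt R ⊓ finiteLocalSquaresAt T :=
  Finset.iInf_union

lemma finiteLocalSquaresAt_insert [DecidableEq (FinitePrime K)] (v : FinitePrime K) :
    finiteLocalSquaresAt (insert v R) = finiteLocalSquares v ⊓ finiteLocalSquaresAt R :=
  Finset.iInf_insert ..

lemma relIndex_finiteLocalSquares_sUnits_dvd_two (hodd : dyadicPrimes K ⊆ S) {v : FinitePrime K}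
    (hv : v ∉ S) : (finiteLocalSquares v).relIndex (sUnits S) ∣ 2 := by
  have hvodd : IsOdd v := isOdd_iff_notMem_dyadicPrimes.2 fun h ↦ hv (hodd h)
  rw [Subgroup.relIndex_dvd_two_iff]
  by_cases! h : ∃ a ∈ sUnits S, a ∉ finiteLocalSquares v
  · obtain ⟨a, ha, ha'⟩ := h
    exact ⟨a, ha, fun b hb ↦ or_iff_not_imp_right.2 fun hb' ↦ hvodd.mul_mem_finiteLocalSquares
      (mem_sUnits.1 hb v hv) (mem_sUnits.1 ha v hv) hb' ha'⟩
  · exact ⟨1, one_mem _, fun b hb ↦ Or.inr (h b hb)⟩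

lemma relIndex_finiteLocalSquaresAt_sUnits_le (hodd : dyadicPrimes K ⊆ S) (hR : Disjoint R S) :
    (finiteLocalSquaresAt R).relIndex (sUnits S) ≤ 2 ^ R.card := by
  classical
  induction R using Finset.induction_on with
  | empty => simp
  | insert v R hv ih =>
    rw [Finset.disjoint_insert_left] at hR
    rw [finiteLocalSquaresAt_insert, Finset.card_insert_of_notMem hv, pow_succ']
    exact Subgroup.relIndex_inf_le.trans <| Nat.mul_le_mul
      (Nat.le_of_dvd two_pos (relIndex_finiteLocalSquares_sUnits_dvd_two hodd hR.1)) (ih hR.2)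

lemma two_pow_card_le_relIndex_finiteLocalSquaresAt (hodd : dyadicPrimes K ⊆ S)
    (hTS : Disjoint T S) (hT : (finiteLocalSquaresAt T).relIndex (sUnits S) = 2 ^ T.card)
    (hR : R ⊆ T) : 2 ^ R.card ≤ (finiteLocalSquaresAt R).relIndex (sUnits S) := by
  classical
  have hdiff := relIndex_finiteLocalSquaresAt_sUnits_le hodd
    (hTS.mono_left (Finset.sdiff_subset : T \ R ⊆ T))
  have hinf := Subgroup.relIndex_inf_le (H := finiteLocalSquaresAt R)
    (K := finiteLocalSquaresAt (T \ R)) (L := sUnits S)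
  rw [← finiteLocalSquaresAt_union, Finset.union_sdiff_of_subset hR, hT,
    ← Finset.card_sdiff_add_card_eq_card hR, add_comm, pow_add] at hinf
  exact Nat.le_of_mul_le_mul_right (hinf.trans (Nat.mul_le_mul_left _ hdiff)) (by positivity)

lemma relIndex_finiteLocalSquaresAt_insert [DecidableEq (FinitePrime K)]
    (hodd : dyadicPrimes K ⊆ S) {v : FinitePrime K} (hv : v ∉ S) {a : Kˣ} (ha : a ∈ sUnits S)
    (haT : a ∈ finiteLocalSquaresAt T) (hav : a ∉ finiteLocalSquares v) :
    (finiteLocalSquaresAt (insert v T)).relIndex (sUnits S) =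
      2 * (finiteLocalSquaresAt T).relIndex (sUnits S) := by
  have hvodd : IsOdd v := isOdd_iff_notMem_dyadicPrimes.2 fun h ↦ hv (hodd h)
  have htwo : (finiteLocalSquares v ⊓ finiteLocalSquaresAt T ⊓ sUnits S).relIndex
      (finiteLocalSquaresAt T ⊓ sUnits S) = 2 := by
    rw [Subgroup.relIndex_eq_two_iff_exists_notMem_and]
    refine ⟨a, ⟨haT, ha⟩, fun h ↦ hav h.1.1, fun b hb ↦ or_iff_not_imp_right.2 fun hb' ↦ ?_⟩
    have hbv : b ∉ finiteLocalSquares v := fun h ↦ hb' ⟨⟨h, hb.1⟩, hb.2⟩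
    exact ⟨⟨hvodd.mul_mem_finiteLocalSquares (mem_sUnits.1 hb.2 v hv) (mem_sUnits.1 ha v hv)
      hbv hav, mul_mem hb.1 haT⟩, mul_mem hb.2 ha⟩
  have htower := Subgroup.relIndex_mul_relIndex _ _ (sUnits S)
    (inf_le_inf_right (sUnits S)
      (inf_le_right : finiteLocalSquares v ⊓ finiteLocalSquaresAt T ≤ finiteLocalSquaresAt T))
    inf_le_right
  rwa [htwo, Subgroup.inf_relIndex_right, Subgroup.inf_relIndex_right,
    ← finiteLocalSquaresAt_insert, eq_comm] at htower

lemma mem_sUnits_of_sq_mem {y : Kˣ} (h : y ^ 2 ∈ sUnits S) : y ∈ sUnits S := by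
  simpa [mem_sUnits] using h

lemma mem_squares_sUnits {x : Kˣ} (hx : x ∈ sUnits S) (h : IsSquare x) :
    x ∈ squares (sUnits S) := by
  obtain ⟨y, rfl⟩ := h
  rw [← sq] at hx ⊢
  exact mem_squares.2 ⟨y, mem_sUnits_of_sq_mem hx, rfl⟩

lemma exists_not_isSquare_and_not_isSquare_mul {c : Kˣ} (hcS : c ∈ sUnits S)
    (hcT : c ∈ finiteLocalSquaresAt T)
    (hT : 2 * (finiteLocalSquaresAt T).relIndex (sUnits S) < 2 ^ (sPlaces S).card) :
    ∃ a ∈ sUnits S ⊓ finiteLocalSquaresAt T, ¬ IsSquare a ∧ ¬ IsSquare (a * c) := by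
  by_contra! hall
  have hle : squares (sUnits S) ≤ sUnits S ⊓ finiteLocalSquaresAt T := by
    intro x hx
    obtain ⟨y, hy, rfl⟩ := mem_squares.1 hx
    exact ⟨pow_mem hy 2, mem_finiteLocalSquaresAt.2 fun v _ ↦ sq_mem_finiteLocalSquares v y⟩
  have hdvd : (squares (sUnits S)).relIndex (sUnits S ⊓ finiteLocalSquaresAt T) ∣ 2 := by
    rw [Subgroup.relIndex_dvd_two_iff]
    refine ⟨c, ⟨hcS, hcT⟩, fun b hb ↦ or_iff_not_imp_right.2 fun hb' ↦ ?_⟩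
    exact mem_squares_sUnits (mul_mem hb.1 hcS)
      (hall b hb fun h ↦ hb' (mem_squares_sUnits hb.1 h))
  have htower := Subgroup.relIndex_mul_relIndex _ _ (sUnits S) hle inf_le_left
  rw [relIndex_squares_sUnits, Subgroup.inf_relIndex_left] at htower
  exact hT.not_ge (htower ▸ Nat.mul_le_mul_right _ (Nat.le_of_dvd two_pos hdvd))

lemma exists_relIndex_finiteLocalSquaresAt_eq {c : Kˣ} (hodd : dyadicPrimes K ⊆ S)
    (hc : c ∈ sUnits S) (hsq : ¬ IsSquare c) (k : ℕ) (hk : k + 1 ≤ (sPlaces S).card) :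
    ∃ T : Finset (FinitePrime K), T.card = k ∧ Disjoint T S ∧ c ∈ finiteLocalSquaresAt T ∧
      (finiteLocalSquaresAt T).relIndex (sUnits S) = 2 ^ k := by
  classical
  induction k with
  | zero => exact ⟨∅, by simp⟩
  | succ k ih =>
    obtain ⟨T, hcard, hTS, hcT, hindex⟩ := ih (by lia)
    obtain ⟨a, ⟨haS, haT⟩, ha, hac⟩ := exists_not_isSquare_and_not_isSquare_mul hc hcT
      (by rw [hindex, ← pow_succ']; exact Nat.pow_lt_pow_right one_lt_two (by lia))
    obtain ⟨v, hv, hcv, hav⟩ := exists_mem_and_notMem_finiteLocalSquares ha hsq hac (S ∪ T)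
    rw [Finset.mem_union, not_or] at hv
    refine ⟨insert v T, by rw [Finset.card_insert_of_notMem hv.2, hcard],
      Finset.disjoint_insert_left.2 ⟨hv.1, hTS⟩, ?_, ?_⟩
    · rw [finiteLocalSquaresAt_insert]
      exact ⟨hcv, hcT⟩
    · rw [relIndex_finiteLocalSquaresAt_insert hodd hv.1 haS haT hav, hindex, pow_succ']

end LocalSquaresAt

section EvenOrd

variable {S T I : Finset (FinitePrime K)}

/-- The elements of even order at `v`. -/
noncomputable def evenOrd (v : FinitePrime K) : Subgroup Kˣ where
  carrier := {x | Even (ord v x)}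
  one_mem' := by simp
  mul_mem' {x y} hx hy := by simpa using Even.add hx hy
  inv_mem' {x} hx := by simpa using hx

lemma mem_evenOrd {v : FinitePrime K} {x : Kˣ} : x ∈ evenOrd v ↔ Even (ord v x) := Iff.rfl

lemma index_evenOrd (v : FinitePrime K) : (evenOrd v).index = 2 := by
  obtain ⟨π, hπ⟩ := exists_ord_eq_one K v
  refine Subgroup.index_eq_two_iff.2 ⟨π, fun x ↦ ?_⟩
  rw [mem_evenOrd, mem_evenOrd, ord_mul, hπ, Int.even_add_one]
  exact xor_not_left.2 Iff.rfl

/-- The elements of even order at all the primes in `I`. -/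
noncomputable def evenOrdAt (I : Finset (FinitePrime K)) : Subgroup Kˣ := ⨅ v ∈ I, evenOrd v

lemma mem_evenOrdAt {x : Kˣ} : x ∈ evenOrdAt I ↔ ∀ v ∈ I, Even (ord v x) := by
  simp [evenOrdAt, Subgroup.mem_iInf, mem_evenOrd]

lemma index_evenOrdAt (I : Finset (FinitePrime K)) : (evenOrdAt I).index = 2 ^ I.card := by
  classical
  have h := index_iInf_eq_prod_index (I.map ⟨Sum.inr, Sum.inr_injective⟩)
    (H := Sum.elim (fun _ ↦ ⊤) evenOrd) <| by
      intro p hp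
      obtain ⟨v, -, rfl⟩ := Finset.mem_map.1 hp
      exact fun _ ↦ even_ord_of_mem_finiteLocalSquares
  rw [Finset.prod_map, Finset.map_eq_image, Finset.iInf_finset_image] at h
  simpa [index_evenOrd, evenOrdAt] using h

lemma relIndex_evenOrdAt_sUnits (hS : IsPrincipalOutside S) (hST : S ⊆ T) (hIS : Disjoint I S)
    (hIT : I ⊆ T) : (evenOrdAt I).relIndex (sUnits T) = 2 ^ I.card := by
  classical
  have hsup : sUnits T ⊔ evenOrdAt I = ⊤ := by
    refine eq_top_iff.2 fun z _ ↦ ?_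
    obtain ⟨w, hw⟩ := hS.exists_ord_eq (n := fun v ↦ if v ∈ I then ord v z else 0)
      (I.finite_toSet.subset fun v hv ↦ by_contra fun h ↦ hv (if_neg h))
    rw [← mul_div_cancel w z]
    refine Subgroup.mul_mem_sup (mem_sUnits.2 fun v hv ↦ ?_) (mem_evenOrdAt.2 fun v hv ↦ ?_)
    · rw [hw v fun h ↦ hv (hST h), if_neg fun h ↦ hv (hIT h)]
    · rw [ord_div, hw v (Finset.disjoint_left.1 hIS hv), if_pos hv, sub_self]
      exact Even.zero
  rw [← Subgroup.relIndex_sup_right, hsup, Subgroup.relIndex_top_right, index_evenOrdAt]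

end EvenOrd

section SUnitSquares

variable {S T : Finset (FinitePrime K)} {x : Kˣ} {N : Subgroup Kˣ}

lemma two_pow_card_mul_relIndex_le [DecidableEq (FinitePrime K)] {I : Finset (FinitePrime K)}
    (hS : IsPrincipalOutside S) (hTS : Disjoint T S) (hIT : I ⊆ T)
    (hodd : ∀ v ∈ I, IsOdd v) (hI : ∀ v ∈ I, Even (ord v x))
    (hI' : ∀ v ∈ I, x ∉ finiteLocalSquares v) (hN : N ≤ sUnits (S ∪ T))
    (hNx : N ≤ quadraticNorms x) (hN0 : N.relIndex (sUnits (S ∪ T)) ≠ 0) :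
    2 ^ I.card * N.relIndex (sUnits S) ≤ N.relIndex (sUnits (S ∪ T)) := by
  have hIS := hTS.mono_left hIT
  have hNE : N ≤ evenOrdAt I := fun y hy ↦ mem_evenOrdAt.2 fun v hv ↦ even_ord_of_mem_localNorms
    (hodd v hv) (hI v hv) (hI' v hv) (quadraticNorms_le_localNorms _ _ (hNx hy))
  have hSE : sUnits S ≤ evenOrdAt I ⊓ sUnits (S ∪ T) := le_inf
    (fun y hy ↦ mem_evenOrdAt.2 fun v hv ↦ by
      simp [mem_sUnits.1 hy v (Finset.disjoint_left.1 hIS hv)])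
    (sUnits_mono Finset.subset_union_left)
  have htower := Subgroup.relIndex_mul_relIndex _ _ (sUnits (S ∪ T)) (le_inf hNE hN) inf_le_right
  rw [Subgroup.inf_relIndex_right, relIndex_evenOrdAt_sUnits hS Finset.subset_union_left hIS
    (hIT.trans Finset.subset_union_right)] at htower
  rw [← htower, mul_comm]
  exact Nat.mul_le_mul_right _
    (Subgroup.relIndex_le_of_le_right hSE (left_ne_zero_of_mul (htower ▸ hN0)))

lemma two_pow_card_le_relIndex_sUnits {R : Finset (FinitePrime K)} (hodd : dyadicPrimes K ⊆ S)
    (hTS : Disjoint T S) (hT : (finiteLocalSquaresAt T).relIndex (sUnits S) = 2 ^ T.card)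
    (hRT : R ⊆ T) (hRodd : ∀ v ∈ R, IsOdd v) (hR : ∀ v ∈ R, ¬ Even (ord v x))
    (hNx : N ≤ quadraticNorms x) (hN0 : N.relIndex (sUnits S) ≠ 0) :
    2 ^ R.card ≤ N.relIndex (sUnits S) := by
  have hle : N ⊓ sUnits S ≤ finiteLocalSquaresAt R := by
    rintro y ⟨hyN, hyS⟩
    refine mem_finiteLocalSquaresAt.2 fun v hv ↦ mem_finiteLocalSquares_of_mem_localNorms
      (hRodd v hv) (hR v hv) ?_ (quadraticNorms_le_localNorms _ _ (hNx hyN))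
    simp [mem_sUnits.1 hyS v (Finset.disjoint_left.1 (hTS.mono_left hRT) hv)]
  rw [← Subgroup.inf_relIndex_right] at hN0 ⊢
  exact (two_pow_card_le_relIndex_finiteLocalSquaresAt hodd hTS hT hRT).trans
    (Subgroup.relIndex_le_of_le_left hle hN0)

/-- At a prime where `x` is not a local square, norms from `K(√x)` have even order if `x` has, and
otherwise those of them which are units are local squares. -/
lemma two_pow_card_le_relIndex_sUnits_union [DecidableEq (FinitePrime K)]
    {T' : Finset (FinitePrime K)} (hS : IsPrincipalOutside S) (hodd : dyadicPrimes K ⊆ S)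
    (hTS : Disjoint T S) (hT : (finiteLocalSquaresAt T).relIndex (sUnits S) = 2 ^ T.card)
    (hT' : T' ⊆ T) (hx : ∀ v ∈ T', x ∉ finiteLocalSquares v) (hN : N ≤ sUnits (S ∪ T))
    (hNx : N ≤ quadraticNorms x) (hN0 : N.relIndex (sUnits (S ∪ T)) ≠ 0) :
    2 ^ T'.card ≤ N.relIndex (sUnits (S ∪ T)) := by
  have hT'odd : ∀ v ∈ T', IsOdd v := fun v hv ↦
    isOdd_iff_notMem_dyadicPrimes.2 fun h ↦ Finset.disjoint_left.1 hTS (hT' hv) (hodd h)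
  have heven := two_pow_card_mul_relIndex_le (I := T'.filter fun v ↦ Even (ord v x)) hS hTS
    ((Finset.filter_subset _ _).trans hT') (by simp +contextual [hT'odd])
    (by simp) (by simp +contextual [hx]) hN hNx hN0
  have hodd' := two_pow_card_le_relIndex_sUnits (R := T'.filter fun v ↦ ¬ Even (ord v x)) hodd hTS
    hT ((Finset.filter_subset _ _).trans hT') (by simp +contextual [hT'odd]) (by simp) hNx
    fun h ↦ hN0 (Subgroup.relIndex_eq_zero_of_le_right (sUnits_mono Finset.subset_union_left) h)
  rw [← Finset.card_filter_add_card_filter_not (s := T') (fun v ↦ Even (ord v x)), pow_add]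
  exact (Nat.mul_le_mul_left _ hodd').trans heven

lemma isSquare_of_mem_sUnits [DecidableEq (FinitePrime K)] (hS : IsPrincipalOutside S)
    (hodd : dyadicPrimes K ⊆ S) (hTS : Disjoint T S)
    (hT : (finiteLocalSquaresAt T).relIndex (sUnits S) = 2 ^ T.card)
    (hx : x ∈ sUnits (S ∪ T)) (hloc : ∀ p ∈ sPlaces S, x ∈ localSquares p) : IsSquare x := by
  classical
  by_contra hsq
  obtain ⟨N, hN, hNx, hindex⟩ := exists_norm_subgroup_relIndex (hS.mono Finset.subset_union_left)
    (hodd.trans Finset.subset_union_left) (mem_sUnits_iff_primeSupport_subset.1 hx) hsq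
  have hN0 : N.relIndex (sUnits (S ∪ T)) ≠ 0 :=
    left_ne_zero_of_mul (hindex ▸ pow_ne_zero _ two_ne_zero)
  have hsub : nonsplitPlaces (S ∪ T) x ⊆
      (T.filter fun v ↦ x ∉ finiteLocalSquares v).map ⟨Sum.inr, Sum.inr_injective⟩ := by
    rintro (w | v) hp <;> obtain ⟨hp, hxp⟩ := mem_nonsplitPlaces.1 hp
    · exact absurd (hloc _ (inl_mem_sPlaces S w)) hxp
    · rcases Finset.mem_union.1 (inr_mem_sPlaces.1 hp) with hv | hv
      · exact absurd (hloc _ (inr_mem_sPlaces.2 hv)) hxp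
      · exact Finset.mem_map_of_mem _ (Finset.mem_filter.2 ⟨hv, hxp⟩)
  have hcard := Nat.pow_le_pow_right two_pos ((Finset.card_le_card hsub).trans
    (Finset.card_map _).le)
  have hle := two_pow_card_le_relIndex_sUnits_union hS hodd hTS hT (Finset.filter_subset _ _)
    (fun v hv ↦ (Finset.mem_filter.1 hv).2) hN hNx hN0
  lia

end SUnitSquares

/-! ### The norm theorem for quadratic extensions -/

section NormTheorem

variable {S T : Finset (FinitePrime K)} {c : Kˣ}

lemma index_localSquares_ne_zero (p : Place K) : (localSquares p).index ≠ 0 := by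
  rcases p with w | v
  · exact ne_zero_of_dvd_ne_zero two_ne_zero (index_infiniteLocalSquares_dvd_two w)
  · exact (index_finiteLocalSquares v).2

lemma index_localNorms_ne_zero (p : Place K) (c : Kˣ) : (localNorms p c).index ≠ 0 :=
  ne_zero_of_dvd_ne_zero (index_localSquares_ne_zero p)
    (Subgroup.index_dvd_of_le (localSquares_le_localNorms p c))

lemma two_le_index_localNorms {p : Place K} (h : localNorms p c ≠ ⊤) :
    2 ≤ (localNorms p c).index :=
  Nat.one_lt_iff_ne_zero_and_ne_one.2
    ⟨index_localNorms_ne_zero p c, fun h' ↦ h (Subgroup.index_eq_one.1 h')⟩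

lemma iInf_localSquares_inf_sUnits [DecidableEq (FinitePrime K)] (hS : IsPrincipalOutside S)
    (hodd : dyadicPrimes K ⊆ S) (hTS : Disjoint T S)
    (hT : (finiteLocalSquaresAt T).relIndex (sUnits S) = 2 ^ T.card) :
    (⨅ p ∈ sPlaces S, localSquares p) ⊓ sUnits (S ∪ T) = squares (sUnits (S ∪ T)) := by
  ext x
  simp only [Subgroup.mem_inf, Subgroup.mem_iInf]
  constructor
  · rintro ⟨hx, hxU⟩
    exact mem_squares_sUnits hxU (isSquare_of_mem_sUnits hS hodd hTS hT hxU hx)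
  · intro hx
    obtain ⟨y, hy, rfl⟩ := mem_squares.1 hx
    exact ⟨fun p _ ↦ sq_mem_localSquares p y, pow_mem hy 2⟩

lemma index_sUnits_sup_iInf_localSquares [DecidableEq (FinitePrime K)]
    (hS : IsPrincipalOutside S) (hodd : dyadicPrimes K ⊆ S) (hTS : Disjoint T S)
    (hT : (finiteLocalSquaresAt T).relIndex (sUnits S) = 2 ^ T.card)
    (hcard : T.card + 1 = (sPlaces S).card) :
    (sUnits (S ∪ T) ⊔ ⨅ p ∈ sPlaces S, localSquares p).index ≠ 0 ∧
      (sUnits (S ∪ T) ⊔ ⨅ p ∈ sPlaces S, localSquares p).index ≤ 2 := by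
  have htower := Subgroup.relIndex_mul_index
    (le_sup_right : _ ≤ sUnits (S ∪ T) ⊔ ⨅ p ∈ sPlaces S, localSquares p)
  rw [Subgroup.relIndex_sup_right, ← Subgroup.inf_relIndex_right,
    iInf_localSquares_inf_sUnits hS hodd hTS hT, relIndex_squares_sUnits,
    index_iInf_eq_prod_index _ fun _ _ ↦ le_rfl] at htower
  have hcardT : (sPlaces (S ∪ T)).card + 1 = 2 * (sPlaces S).card := by
    have := card_sPlaces S
    rw [card_sPlaces, Finset.card_union_of_disjoint hTS.symm]
    lia
  have hpow : 4 ^ (sPlaces S).card = 2 ^ (sPlaces (S ∪ T)).card * 2 := by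
    rw [← pow_succ, hcardT, pow_mul]
    norm_num
  refine ⟨right_ne_zero_of_mul (htower ▸ Finset.prod_ne_zero_iff.2 fun p _ ↦
    index_localSquares_ne_zero p), ?_⟩
  exact Nat.le_of_mul_le_mul_left (htower ▸ hpow ▸ prod_index_localSquares_le S) (by positivity)

lemma exists_index_sUnits_sup_iInf_localNorms_le (hS : IsPrincipalOutside S)
    (hodd : dyadicPrimes K ⊆ S) (hc : primeSupport c ⊆ S) (hsq : ¬ IsSquare c) :
    ∃ T, S ⊆ T ∧ nonsplitPlaces T c = nonsplitPlaces S c ∧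
      (sUnits T ⊔ ⨅ p ∈ sPlaces S, localNorms p c).index ≤ 2 := by
  classical
  have hpos : 0 < (sPlaces S).card := by
    rw [card_sPlaces]
    exact Nat.add_pos_left Fintype.card_pos _
  obtain ⟨T, hcard, hTS, hcT, hindex⟩ := exists_relIndex_finiteLocalSquaresAt_eq hodd
    (mem_sUnits_iff_primeSupport_subset.2 hc) hsq ((sPlaces S).card - 1) (by lia)
  obtain ⟨hne, hle⟩ := index_sUnits_sup_iInf_localSquares hS hodd hTS (hcard ▸ hindex) (by lia)
  refine ⟨S ∪ T, Finset.subset_union_left, ?_, ?_⟩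
  · ext (w | v)
    · simp [mem_nonsplitPlaces]
    · have := mem_finiteLocalSquaresAt.1 hcT v
      simp only [mem_nonsplitPlaces, inr_mem_sPlaces, Finset.mem_union]
      exact ⟨fun h ↦ ⟨h.1.resolve_right fun hv ↦ h.2 (this hv), h.2⟩, fun h ↦ ⟨.inl h.1, h.2⟩⟩
  · exact (Nat.le_of_dvd (Nat.pos_of_ne_zero hne) (Subgroup.index_dvd_of_le (sup_le_sup_left
      (iInf₂_mono fun p _ ↦ localSquares_le_localNorms p c) _))).trans hle

lemma exists_relIndex_mul_prod_index_localNorms_le (hS : IsPrincipalOutside S)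
    (hodd : dyadicPrimes K ⊆ S) (hc : primeSupport c ⊆ S) (hsq : ¬ IsSquare c) :
    ∃ U N : Subgroup Kˣ, sUnits S ≤ U ∧ N ≤ quadraticNorms c ∧
      N.relIndex ((⨅ p ∈ sPlaces S, localNorms p c) ⊓ U) ≠ 0 ∧
      N.relIndex ((⨅ p ∈ sPlaces S, localNorms p c) ⊓ U) *
        ∏ p ∈ sPlaces S, (localNorms p c).index ≤ 2 ^ (nonsplitPlaces S c).card := by
  obtain ⟨T, hST, hns, hle⟩ := exists_index_sUnits_sup_iInf_localNorms_le hS hodd hc hsq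
  obtain ⟨N, hN, hNc, hindex⟩ :=
    exists_norm_subgroup_relIndex (hS.mono hST) (hodd.trans hST) (hc.trans hST) hsq
  set Λ : Subgroup Kˣ := ⨅ p ∈ sPlaces S, localNorms p c
  have hNΛ : N ≤ Λ := le_iInf₂ fun p _ ↦ hNc.trans (quadraticNorms_le_localNorms p c)
  have htower := Subgroup.relIndex_mul_relIndex N _ (sUnits T) (le_inf hNΛ hN) inf_le_right
  have htower' := Subgroup.relIndex_mul_index (le_sup_right : Λ ≤ sUnits T ⊔ Λ)
  rw [Subgroup.inf_relIndex_right] at htower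
  rw [Subgroup.relIndex_sup_right,
    index_iInf_eq_prod_index _ fun p _ ↦ localSquares_le_localNorms p c] at htower'
  rw [hns, ← htower] at hindex
  refine ⟨sUnits T, N, sUnits_mono hST, hNc, left_ne_zero_of_mul
    (left_ne_zero_of_mul (hindex ▸ pow_ne_zero _ two_ne_zero)), ?_⟩
  rw [← hindex, ← htower', ← mul_assoc]
  exact Nat.mul_le_mul_left _ hle

theorem prod_index_localNorms_le (hS : IsPrincipalOutside S) (hodd : dyadicPrimes K ⊆ S)
    (hc : primeSupport c ⊆ S) (hsq : ¬ IsSquare c) :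
    ∏ p ∈ sPlaces S, (localNorms p c).index ≤ 2 ^ (nonsplitPlaces S c).card := by
  obtain ⟨U, N, -, -, hne, hle⟩ := exists_relIndex_mul_prod_index_localNorms_le hS hodd hc hsq
  exact (Nat.le_mul_of_pos_left _ (Nat.pos_of_ne_zero hne)).trans hle

lemma two_pow_card_le_prod_index_localNorms
    (hne : ∀ p ∈ nonsplitPlaces S c, localNorms p c ≠ ⊤) :
    2 ^ (nonsplitPlaces S c).card ≤ ∏ p ∈ sPlaces S, (localNorms p c).index :=
  calc 2 ^ (nonsplitPlaces S c).card
      ≤ ∏ p ∈ nonsplitPlaces S c, (localNorms p c).index :=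
        Finset.pow_card_le_prod _ _ _ fun _ hp ↦ two_le_index_localNorms (hne _ hp)
    _ ≤ ∏ p ∈ sPlaces S, (localNorms p c).index :=
        Finset.prod_le_prod_of_subset_of_one_le' (fun _ hp ↦ (mem_nonsplitPlaces.1 hp).1)
          fun p _ _ ↦ Nat.one_le_iff_ne_zero.2 (index_localNorms_ne_zero p c)

theorem mem_quadraticNorms_of_forall_mem_localNorms {u : Kˣ}
    (hne : ∀ p, c ∉ localSquares p → localNorms p c ≠ ⊤)
    (hu : ∀ p, c ∉ localSquares p → u ∈ localNorms p c) : u ∈ quadraticNorms c := by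
  classical
  by_cases hsq : IsSquare c
  · simp [quadraticNorms_eq_top_of_isSquare hsq]
  obtain ⟨S₀, hS₀⟩ := exists_isPrincipalOutside (K := K)
  set S := S₀ ∪ (dyadicPrimes K ∪ (primeSupport c ∪ primeSupport u))
  obtain ⟨U, N, hSU, hNc, hN0, hle⟩ := exists_relIndex_mul_prod_index_localNorms_le
    (S := S) (c := c) (hS₀.mono Finset.subset_union_left) (by grind) (by grind) hsq
  have hle' := hle.trans (two_pow_card_le_prod_index_localNorms fun p hp ↦
    hne p (mem_nonsplitPlaces.1 hp).2)
  have hone : N.relIndex ((⨅ p ∈ sPlaces S, localNorms p c) ⊓ U) = 1 := by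
    refine le_antisymm (Nat.le_of_mul_le_mul_right (hle'.trans_eq (one_mul _).symm) ?_)
      (Nat.pos_of_ne_zero hN0)
    exact Finset.prod_pos fun p _ ↦ Nat.pos_of_ne_zero (index_localNorms_ne_zero p c)
  have hΛ : u ∈ ⨅ p ∈ sPlaces S, localNorms p c := by
    simp only [Subgroup.mem_iInf]
    intro p _
    by_cases hp : c ∈ localSquares p
    · simp [localNorms_eq_top hp]
    · exact hu p hp
  exact hNc (Subgroup.relIndex_eq_one.1 hone
    ⟨hΛ, hSU (mem_sUnits_iff_primeSupport_subset.2 (by grind))⟩)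

end NormTheorem

section LocalIndex

lemma le_of_prod_le_pow_card {ι : Type*} {F : Finset ι} {g : ι → ℕ} {n : ℕ}
    (hn : 0 < n) {i : ι} (hi : i ∈ F) (hg : ∀ j ∈ F, j ≠ i → n ≤ g j)
    (hle : ∏ j ∈ F, g j ≤ n ^ F.card) : g i ≤ n := by
  classical
  have herase : n ^ (F.erase i).card ≤ ∏ j ∈ F.erase i, g j :=
    Finset.pow_card_le_prod _ _ _ fun j hj ↦ hg j (Finset.mem_of_mem_erase hj)
      (Finset.ne_of_mem_erase hj)
  rw [← Finset.mul_prod_erase F g hi, ← Finset.card_erase_add_one hi, pow_succ, mul_comm] at hle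
  exact Nat.le_of_mul_le_mul_left ((Nat.mul_le_mul_right _ herase).trans hle) (by positivity)

/-- Approximate `c` by an element which is a local square at all the other bad places; then the
global bound on the product of the indices leaves room for at most a factor `2` at `v`. -/
theorem index_localNorms_le_two (v : FinitePrime K) (c : Kˣ) :
    (localNorms (Sum.inr v) c).index ≤ 2 := by
  classical
  by_cases hc : c ∈ finiteLocalSquares v
  · rw [localNorms_eq_top (p := Sum.inr v) hc, Subgroup.index_top]
    exact one_le_two
  obtain ⟨c', hinf, hfin, -⟩ := exists_localSquares_approximation
    (Finset.disjoint_empty_right (insert v (dyadicPrimes K)))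
    (fun p ↦ if p = Sum.inr v then c else 1) 0 (ε := 1) (by simp)
  have hcc' : c' / c ∈ finiteLocalSquares v := by simpa using (hfin v (by simp)).1
  have hc' : c' ∉ finiteLocalSquares v := fun h ↦
    hc (by simpa using div_mem h hcc')
  have hsq : ¬ IsSquare c' := by
    rintro ⟨b, rfl⟩
    exact hc' (by simpa [sq] using sq_mem_finiteLocalSquares v b)
  obtain ⟨S₀, hS₀⟩ := exists_isPrincipalOutside (K := K)
  set S := S₀ ∪ (dyadicPrimes K ∪ (primeSupport c' ∪ {v})) with hS
  have hle := prod_index_localNorms_le (S := S) (hS₀.mono Finset.subset_union_left)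
    (by grind) (by grind) hsq
  rw [← localNorms_congr hcc']
  refine le_of_prod_le_pow_card (F := nonsplitPlaces S c') (g := fun p ↦ (localNorms p c').index)
    two_pos (mem_nonsplitPlaces.2 ⟨by simp [hS], hc'⟩) ?_ ?_
  · rintro (w | u) hp hpv <;> have hcp := (mem_nonsplitPlaces.1 hp).2
    · have hw : c' ∈ infiniteLocalSquares w := by simpa using hinf w
      exact absurd hw hcp
    · refine two_le_index_localNorms (localNorms_ne_top_of_isOdd
        (isOdd_iff_notMem_dyadicPrimes.2 fun hu ↦ hcp ?_) hcp)
      have hu' : c' ∈ finiteLocalSquares u := by simpa [hpv] using (hfin u (by simp [hu])).1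
      exact hu'
  · exact (Finset.prod_le_prod_of_subset_of_one_le' (fun p hp ↦ (mem_nonsplitPlaces.1 hp).1)
      fun p _ _ ↦ Nat.one_le_iff_ne_zero.2 (index_localNorms_ne_zero p c')).trans hle

lemma index_localNorms_dvd_two (v : FinitePrime K) (c : Kˣ) :
    (localNorms (Sum.inr v) c).index ∣ 2 :=
  (Nat.dvd_prime Nat.prime_two).2 (by
    have := index_localNorms_le_two v c
    have := index_localNorms_ne_zero (Sum.inr v) c
    lia)

lemma mem_localNorms_of_even_ord {v : FinitePrime K} (hv : IsOdd v) {c u : Kˣ}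
    (hc : Even (ord v c)) (hc' : c ∉ finiteLocalSquares v) (hu : Even (ord v u)) :
    u ∈ localNorms (Sum.inr v) c := by
  have hle : localNorms (Sum.inr v) c ≤ evenOrd v := fun _ ↦ even_ord_of_mem_localNorms hv hc hc'
  have hdvd := index_localNorms_dvd_two v c
  rw [← Subgroup.relIndex_mul_index hle, index_evenOrd] at hdvd
  have hone : (localNorms (Sum.inr v) c).relIndex (evenOrd v) = 1 :=
    Nat.dvd_one.1 (Nat.dvd_of_mul_dvd_mul_right two_pos (by simpa using hdvd))
  exact Subgroup.relIndex_eq_one.1 hone hu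

end LocalIndex

/-! ### Norms from quaternion algebras -/

section QuaternionNorms

variable {F : Type*} [Field F]

/-- The nonzero norms from the quaternion algebra `ℍ[F, a, b]`, that is, the nonzero values of
`⟨1, -a, -b, ab⟩`. -/
def quaternionNorms (a b : Fˣ) : Subgroup Fˣ where
  carrier := {u | ∃ x y z t : F, (u : F) = x ^ 2 - a * y ^ 2 - b * z ^ 2 + a * b * t ^ 2}
  one_mem' := ⟨1, 0, 0, 0, by simp⟩
  mul_mem' := by
    rintro u u' ⟨x, y, z, t, h⟩ ⟨x', y', z', t', h'⟩
    refine ⟨x * x' + a * y * y' + b * z * z' - a * b * t * t',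
      x * y' + y * x' - b * z * t' + b * t * z', x * z' + z * x' + a * y * t' - a * t * y',
      x * t' + t * x' + y * z' - z * y', ?_⟩
    rw [Units.val_mul, h, h']
    ring
  inv_mem' := by
    rintro u ⟨x, y, z, t, h⟩
    refine ⟨x / u, y / u, z / u, t / u, ?_⟩
    rw [Units.val_inv_eq_inv_val]
    field_simp
    linear_combination h

lemma mem_quaternionNorms {a b u : Fˣ} : u ∈ quaternionNorms a b ↔
    ∃ x y z t : F, (u : F) = x ^ 2 - a * y ^ 2 - b * z ^ 2 + a * b * t ^ 2 := Iff.rfl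

lemma quadraticNorms_le_quaternionNorms (a b : Fˣ) : quadraticNorms a ≤ quaternionNorms a b :=
  fun _ ⟨x, y, h⟩ ↦ ⟨x, y, 0, 0, by rw [h]; ring⟩

lemma neg_mem_quaternionNorms (a b : Fˣ) : -b ∈ quaternionNorms a b :=
  ⟨0, 0, 1, 0, by rw [Units.val_neg]; ring⟩

lemma eq_top_of_add_mem [CharZero F] {G : Subgroup Fˣ} (hsq : ∀ x : Fˣ, x ^ 2 ∈ G)
    (hadd : ∀ x ∈ G, ∀ y ∈ G, ∀ z : Fˣ, (z : F) = x + y → z ∈ G) {u : Fˣ} {n : ℕ}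
    (hu : (u : F) = n) (hneg : -u ∈ G) : G = ⊤ := by
  have hnat (m : ℕ) : ∀ x : Fˣ, (x : F) = (m + 1 : ℕ) → x ∈ G := by
    induction m with
    | zero => exact fun x hx ↦ (Units.ext (by simpa using hx) : x = 1) ▸ one_mem G
    | succ m ih =>
      refine fun x hx ↦ hadd (Units.mk0 _ (Nat.cast_ne_zero.2 m.succ_ne_zero)) (ih _ rfl) 1
        (one_mem G) x ?_
      simpa using hx
  have hneg_one : -1 ∈ G := by
    obtain ⟨m, rfl⟩ := Nat.exists_eq_succ_of_ne_zero
      (Nat.cast_ne_zero.1 (hu ▸ u.ne_zero : (n : F) ≠ 0))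
    simpa [neg_div] using div_mem hneg (hnat m u hu)
  refine (Subgroup.eq_top_iff' G).2 fun c ↦ ?_
  obtain rfl | h₁ := eq_or_ne c 1
  · exact one_mem G
  obtain rfl | h₂ := eq_or_ne c (-1)
  · exact hneg_one
  have hadd₀ : ((c : F) + 1) / 2 ≠ 0 :=
    div_ne_zero (fun h ↦ h₂ (Units.ext (by simpa using eq_neg_of_add_eq_zero_left h))) two_ne_zero
  have hsub₀ : ((c : F) - 1) / 2 ≠ 0 :=
    div_ne_zero (sub_ne_zero.2 fun h ↦ h₁ (Units.ext h)) two_ne_zero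
  refine hadd (Units.mk0 _ hadd₀ ^ 2) (hsq _) (-1 * Units.mk0 _ hsub₀ ^ 2)
    (mul_mem hneg_one (hsq _)) c ?_
  push_cast
  rw [Units.val_mk0, Units.val_mk0]
  ring

end QuaternionNorms

lemma exists_natCast_valuation_lt_one (v : FinitePrime K) :
    ∃ n : ℕ, 0 < n ∧ v.valuation K (n : K) < 1 := by
  refine ⟨Ideal.absNorm v.asIdeal, Nat.pos_of_ne_zero (Ideal.absNorm_ne_zero_of_nonZeroDivisors
    ⟨v.asIdeal, mem_nonZeroDivisors_of_ne_zero v.ne_bot⟩), ?_⟩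
  simpa using (v.valuation_lt_one_iff_mem (K := K) (Ideal.absNorm v.asIdeal : 𝓞 K)).2
    (Ideal.absNorm_mem v.asIdeal)

lemma exists_neg_natCast_mem_finiteLocalSquares (v : FinitePrime K) :
    ∃ (u : Kˣ) (n : ℕ), (u : K) = n ∧ -u ∈ finiteLocalSquares v := by
  obtain ⟨p, hp, hv⟩ := exists_natCast_valuation_lt_one v
  have hcast : ((4 * p - 1 : ℕ) : K) = 4 * p - 1 := by
    rw [Nat.cast_sub (by lia)]
    push_cast
    rfl
  refine ⟨Units.mk0 ((4 * p - 1 : ℕ) : K) (Nat.cast_ne_zero.2 (by lia)), 4 * p - 1, rfl, 1, ?_⟩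
  have h : ((-Units.mk0 ((4 * p - 1 : ℕ) : K) (Nat.cast_ne_zero.2 (by lia)) : Kˣ) : K) *
      ((1 : Kˣ) : K) ^ 2 - 1 = -(4 * p) := by
    rw [Units.val_neg, Units.val_mk0, hcast, Units.val_one]
    ring
  rw [h, Valuation.map_neg, map_mul]
  exact (mul_lt_iff_lt_one_right (valuation_four_pos v)).2 hv

lemma exists_mem_quadraticNorms_valuation_sub_lt (v : FinitePrime K) {a g : Kˣ}
    (hg : g ∈ localNorms (Sum.inr v) a) {ε : ℤᵐ⁰} (hε : ε ≠ 0) :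
    ∃ n ∈ quadraticNorms a, v.valuation K (n - g : K) < ε := by
  obtain ⟨n, hn, hs⟩ := mem_localNorms.1 hg
  have hs' : n / g ∈ finiteLocalSquares v := inv_div g n ▸ inv_mem hs
  have hg0 : v.valuation K (g : K) ≠ 0 := (Valuation.ne_zero_iff _).2 g.ne_zero
  obtain ⟨y, hy⟩ := exists_valuation_mul_sq_sub_one_lt v hs' (div_ne_zero hε hg0)
  refine ⟨n * y ^ 2, mul_mem hn (sq_mem_quadraticNorms a y), ?_⟩
  have h : ((n * y ^ 2 : Kˣ) : K) - g = (((n / g : Kˣ) : K) * (y : K) ^ 2 - 1) * g := by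
    push_cast
    field_simp
  rwa [h, map_mul, ← lt_div_iff₀ (zero_lt_iff.2 hg0)]

lemma exists_mem_quaternionNorms_div_mem_of_eq_add (v : FinitePrime K) {a b x y z : Kˣ}
    (hx : x ∈ localNorms (Sum.inr v) a) (hy : y / -b ∈ localNorms (Sum.inr v) a)
    (hz : (z : K) = x + y) : ∃ m ∈ quaternionNorms a b, m / z ∈ finiteLocalSquares v := by
  have hb : v.valuation K (b : K) ≠ 0 := (Valuation.ne_zero_iff _).2 b.ne_zero
  have hε : v.valuation K (4 : K) * v.valuation K (z : K) ≠ 0 :=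
    mul_ne_zero (valuation_four_pos v).ne' ((Valuation.ne_zero_iff _).2 z.ne_zero)
  obtain ⟨m, hm, hmx⟩ := exists_mem_quadraticNorms_valuation_sub_lt v hx hε
  obtain ⟨n, hn, hny⟩ := exists_mem_quadraticNorms_valuation_sub_lt v hy (div_ne_zero hε hb)
  rw [lt_div_iff₀ (zero_lt_iff.2 hb), ← map_mul] at hny
  have hlt : v.valuation K (m - b * n - z : K) < v.valuation K (4 : K) * v.valuation K (z : K) := by
    have h : (m - b * n - z : K) = (m - x) - (n - ((y / -b : Kˣ) : K)) * b := by
      rw [hz]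
      push_cast
      field_simp
      ring
    rw [h]
    exact Valuation.map_sub_lt _ hmx hny
  have hne : (m - b * n : K) ≠ 0 := by
    intro h
    rw [h, zero_sub, Valuation.map_neg] at hlt
    exact hlt.not_ge (mul_le_of_le_one_left' (valuation_ofNat_le_one v 4))
  refine ⟨Units.mk0 _ hne, ?_, div_mem_finiteLocalSquares v hlt⟩
  obtain ⟨x₁, x₂, hm⟩ := hm
  obtain ⟨x₃, x₄, hn⟩ := hn
  exact ⟨x₁, x₂, x₃, x₄, by rw [Units.val_mk0, hm, hn]; ring⟩

/-- If `c` were not a local quaternion norm, the local norms from `K(√a)` would form a subgroup of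
index two containing all quaternion norms; this makes it closed under addition, hence everything,
since a negative integer is a local square. -/
theorem exists_mem_quaternionNorms_mul_mem_finiteLocalSquares (v : FinitePrime K) (a b c : Kˣ) :
    ∃ n ∈ quaternionNorms a b, c * n ∈ finiteLocalSquares v := by
  by_contra! hcon
  set G := localNorms (Sum.inr v) a
  have hmul {m : Kˣ} (hm : m ∈ quaternionNorms a b) : c * m ∉ G := fun h ↦ by
    obtain ⟨n, hn, hs⟩ := mem_localNorms.1 h
    exact hcon (m / n) (div_mem hm (quadraticNorms_le_quaternionNorms a b hn))
      (mul_div_assoc c m n ▸ hs)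
  have hc : c ∉ G := by simpa using hmul (one_mem _)
  have hindex : G.index = 2 :=
    ((Nat.dvd_prime Nat.prime_two).1 (index_localNorms_dvd_two v a)).resolve_left fun h ↦
      hc ((Subgroup.index_eq_one.1 h : G = ⊤) ▸ Subgroup.mem_top c)
  have hle : quaternionNorms a b ≤ G := fun m hm ↦ by
    have := hmul hm
    rw [Subgroup.mul_mem_iff_of_index_two hindex] at this
    tauto
  have hadd : ∀ x ∈ G, ∀ y ∈ G, ∀ z : Kˣ, (z : K) = x + y → z ∈ G := fun x hx y hy z hz ↦ by
    obtain ⟨m, hm, hmz⟩ := exists_mem_quaternionNorms_div_mem_of_eq_add v hx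
      (div_mem hy (hle (neg_mem_quaternionNorms a b))) hz
    simpa using div_mem (hle hm) (localSquares_le_localNorms (Sum.inr v) a hmz)
  obtain ⟨u, n, hu, hneg⟩ := exists_neg_natCast_mem_finiteLocalSquares v
  have htop : G = ⊤ := eq_top_of_add_mem
    (fun x ↦ localSquares_le_localNorms _ a (sq_mem_localSquares _ x)) hadd hu
    (localSquares_le_localNorms (Sum.inr v) a hneg)
  exact hc (htop ▸ Subgroup.mem_top c)

section QuaternionNorms

variable {F : Type*} [Field F] [NeZero (2 : F)]

lemma quaternionNorms_eq_top_of_isotropic {a b : Fˣ} {x y z t : F}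
    (h : x ^ 2 - a * y ^ 2 - b * z ^ 2 + a * b * t ^ 2 = 0)
    (hne : x ≠ 0 ∨ y ≠ 0 ∨ z ≠ 0 ∨ t ≠ 0) : quaternionNorms a b = ⊤ := by
  refine (Subgroup.eq_top_iff' _).2 fun u ↦ ?_
  have hsolve (A : F) {B : F} (hB : B ≠ 0) : ∃ s : F, (u : F) = A + s * B :=
    ⟨(u - A) / B, by field_simp; ring⟩
  have h2 : (2 : F) ≠ 0 := two_ne_zero
  rcases hne with hx | hy | hz | ht
  · obtain ⟨s, hs⟩ := hsolve 1 (mul_ne_zero h2 hx)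
    exact ⟨1 + s * x, s * y, s * z, s * t, by rw [hs]; linear_combination -s ^ 2 * h⟩
  · obtain ⟨s, hs⟩ := hsolve (-a) (B := -2 * a * y) (by simp [hy, h2])
    exact ⟨s * x, 1 + s * y, s * z, s * t, by rw [hs]; linear_combination -s ^ 2 * h⟩
  · obtain ⟨s, hs⟩ := hsolve (-b) (B := -2 * b * z) (by simp [hz, h2])
    exact ⟨s * x, s * y, 1 + s * z, s * t, by rw [hs]; linear_combination -s ^ 2 * h⟩
  · obtain ⟨s, hs⟩ := hsolve (a * b) (B := 2 * a * b * t) (by simp [ht, h2])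
    exact ⟨s * x, s * y, s * z, 1 + s * t, by rw [hs]; linear_combination -s ^ 2 * h⟩

/-- The hypotheses say that `a = X ^ 2 - c * Y ^ 2` with `X = x + x' * √e` and `Y = y + y' * √e`, so
`ℍ[F, a, c]` is split by `F(√e)`; unless it is already split, it then contains `√e`. -/
lemma quaternionNorms_eq_top_or_exists_pure {a c : Fˣ} {e x x' y y' : F}
    (ha : (a : F) = x ^ 2 + e * x' ^ 2 - c * (y ^ 2 + e * y' ^ 2)) (h : x * x' = c * y * y') :
    quaternionNorms a c = ⊤ ∨ ∃ p q r : F, e = a * p ^ 2 + c * q ^ 2 - a * c * r ^ 2 := by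
  by_cases hD : x' ^ 2 - c * y' ^ 2 = 0
  · left
    by_cases hne : x' ≠ 0 ∨ y' ≠ 0
    · exact quaternionNorms_eq_top_of_isotropic (x := x') (y := 0) (z := y') (t := 0)
        (by linear_combination hD) (by tauto)
    · push Not at hne
      obtain ⟨rfl, rfl⟩ := hne
      exact quaternionNorms_eq_top_of_isotropic (x := x) (y := 1) (z := y) (t := 0)
        (by linear_combination -ha) (.inr (.inl one_ne_zero))
  · right
    refine ⟨x' / (x' ^ 2 - c * y' ^ 2), (y * x' - x * y') / (x' ^ 2 - c * y' ^ 2),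
      y' / (x' ^ 2 - c * y' ^ 2), ?_⟩
    field_simp
    linear_combination -(x' ^ 2 - c * y' ^ 2) * ha - (x * x' - c * y * y') * h

lemma mem_quaternionNorms_of_eq_sq_sub {a b c : Fˣ} {e t x x' y y' : F}
    (he : e = t ^ 2 - 4 * b)
    (ha : (a : F) = x ^ 2 + e * x' ^ 2 - c * (y ^ 2 + e * y' ^ 2)) (h : x * x' = c * y * y') :
    b ∈ quaternionNorms a c := by
  obtain htop | ⟨p, q, r, hpqr⟩ := quaternionNorms_eq_top_or_exists_pure ha h
  · exact htop ▸ Subgroup.mem_top b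
  · refine ⟨t / 2, p / 2, q / 2, r / 2, ?_⟩
    have h2 : (2 : F) ≠ 0 := two_ne_zero
    field_simp
    linear_combination he - hpqr

lemma mem_quaternionNorms_symm {a b c : Fˣ} (h : b ∈ quaternionNorms a c) :
    c ∈ quaternionNorms a b := by
  obtain ⟨x, y, z, t, h⟩ := h
  by_cases hD : z ^ 2 - a * t ^ 2 = 0
  · refine (?_ : quaternionNorms a b = ⊤) ▸ Subgroup.mem_top c
    by_cases hne : z ≠ 0 ∨ t ≠ 0
    · exact quaternionNorms_eq_top_of_isotropic (x := z) (y := t) (z := 0) (t := 0)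
        (by linear_combination hD) (by tauto)
    · push Not at hne
      obtain ⟨rfl, rfl⟩ := hne
      exact quaternionNorms_eq_top_of_isotropic (x := x) (y := y) (z := 1) (t := 0)
        (by linear_combination -h) (.inr (.inr (.inl one_ne_zero)))
  · have hnorm : Units.mk0 _ hD ∈ quaternionNorms a b :=
      quadraticNorms_le_quaternionNorms a b ⟨z, t, Units.val_mk0 hD⟩
    have hmul : c * Units.mk0 _ hD ∈ quaternionNorms a b := ⟨x, y, 1, 0, by
      rw [Units.val_mul, Units.val_mk0]
      linear_combination h⟩
    simpa using div_mem hmul hnorm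

end QuaternionNorms

section DiagonalForms

variable {ι : Type*} [Fintype ι]

lemma exists_valuation_mul_sq_sub_sq_lt (v : FinitePrime K) (A x : K) {η : ℤᵐ⁰} (hη : η ≠ 0) :
    ∃ ε : ℤᵐ⁰, ε ≠ 0 ∧
      ∀ z, v.valuation K (z - x) < ε → v.valuation K (A * (z ^ 2 - x ^ 2)) < η := by
  set M := max (v.valuation K A) 1 * max 1 (v.valuation K (2 * x))
  have hM₀ : 0 < M := mul_pos (by simp) (by simp)
  refine ⟨min 1 (η / M), (lt_min one_pos (zero_lt_iff.2 (div_ne_zero hη hM₀.ne'))).ne',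
    fun z hz ↦ ?_⟩
  obtain ⟨h₁, h₂⟩ := lt_min_iff.1 hz
  rw [lt_div_iff₀ hM₀] at h₂
  have h : A * (z ^ 2 - x ^ 2) = (z - x) * (A * ((z - x) + 2 * x)) := by ring
  rw [h, map_mul]
  refine (mul_le_mul_right ?_ _).trans_lt h₂
  rw [map_mul]
  exact mul_le_mul' (le_max_left _ _)
    ((Valuation.map_add _ _ _).trans (max_le_max h₁.le le_rfl))

open Filter Topology in
omit [Fintype ι] in
lemma eventually_forall_pos_of_continuous [Finite ι] {f : (ι → ℝ) → ℝ} (hf : Continuous f)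
    {y : ι → ℝ} (hy : 0 < f y) :
    ∀ᶠ δ in 𝓝[>] (0 : ℝ), ∀ z : ι → ℝ, (∀ i, |z i - y i| < δ) → 0 < f z := by
  have := Fintype.ofFinite ι
  obtain ⟨ε, hε, hball⟩ := Metric.isOpen_iff.1 (isOpen_lt continuous_const hf) y hy
  filter_upwards [Ioo_mem_nhdsGT hε] with δ hδ z hz
  exact hball (((dist_pi_lt_iff hδ.1).2 hz).trans hδ.2)

open Filter Topology in
lemma exists_diagonal_approximation (A : ι → K) (c : K) (S : Finset (FinitePrime K))
    (x : FinitePrime K → ι → K) {η : FinitePrime K → ℤᵐ⁰} (hη : ∀ v, η v ≠ 0)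
    (y : (K →+* ℝ) → ι → K) (hy : ∀ φ : K →+* ℝ, 0 < φ (c * ∑ i, A i * y φ i ^ 2)) :
    ∃ z : ι → K,
      (∀ v ∈ S, v.valuation K (∑ i, A i * z i ^ 2 - ∑ i, A i * x v i ^ 2) < η v) ∧
      ∀ φ : K →+* ℝ, 0 < φ (c * ∑ i, A i * z i ^ 2) := by
  choose ε hε hεη using fun (v : FinitePrime K) (i : ι) ↦
    exists_valuation_mul_sq_sub_sq_lt v (A i) (x v i) (hη v)
  have : Finite (K →+* ℝ) := Finite.of_injective realPlace realPlace_injective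
  have hreal : ∀ᶠ δ in 𝓝[>] (0 : ℝ), ∀ (φ : K →+* ℝ) (z : ι → ℝ), (∀ i, |z i - φ (y φ i)| < δ) →
      0 < φ c * ∑ i, φ (A i) * z i ^ 2 :=
    eventually_all.2 fun φ ↦ eventually_forall_pos_of_continuous
      (f := fun z ↦ φ c * ∑ i, φ (A i) * z i ^ 2) (by fun_prop) (by simpa using hy φ)
  obtain ⟨δ, hδ, hδ₀⟩ := (hreal.and self_mem_nhdsWithin).exists
  choose z hzS hzδ using fun i ↦ weak_approximation S (fun v ↦ x v i) (fun v ↦ hε v i)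
    (Function.extend realPlace (fun φ ↦ y φ i) 0) hδ₀
  refine ⟨z, fun v hv ↦ ?_, fun φ ↦ ?_⟩
  · rw [← Finset.sum_sub_distrib]
    simp only [← mul_sub]
    exact Valuation.map_sum_lt _ (hη v) fun i _ ↦ hεη v i _ (hzS i v hv)
  · simp only [map_mul, map_sum, map_pow]
    refine hδ φ (fun i ↦ φ (z i)) fun i ↦ ?_
    simpa [realPlace_injective.extend_apply, realPlace_apply] using hzδ i (realPlace φ)

end DiagonalForms

lemma mem_quaternionNorms_iff_sum {F : Type*} [Field F] {a b u : Fˣ} : u ∈ quaternionNorms a b ↔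
    ∃ x : Fin 4 → F, (u : F) = ∑ i, ![1, -(a : F), -(b : F), a * b] i * x i ^ 2 := by
  simp only [mem_quaternionNorms, Fin.sum_univ_four]
  constructor
  · rintro ⟨x, y, z, t, h⟩
    exact ⟨![x, y, z, t], by simpa [sub_eq_add_neg] using h⟩
  · rintro ⟨x, h⟩
    exact ⟨x 0, x 1, x 2, x 3, by simpa [sub_eq_add_neg] using h⟩

omit [NumberField K] in
lemma exists_pos_map_mul_sum {a b c : Kˣ} {φ : K →+* ℝ} (h : φ a < 0 → φ b < 0 → 0 < φ c) :
    ∃ x : Fin 4 → K, 0 < φ (c * ∑ i, ![1, -(a : K), -(b : K), a * b] i * x i ^ 2) := by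
  have hne (u : Kˣ) : φ u ≠ 0 := (map_ne_zero φ).2 u.ne_zero
  rcases (hne c).lt_or_gt with hc | hc
  · rcases (hne a).lt_or_gt with ha | ha
    · have hb : 0 < φ b := (hne b).lt_or_gt.resolve_left fun hb ↦ hc.not_gt (h ha hb)
      exact ⟨![0, 0, 1, 0], by simpa [Fin.sum_univ_four] using mul_neg_of_neg_of_pos hc hb⟩
    · exact ⟨![0, 1, 0, 0], by simpa [Fin.sum_univ_four] using mul_neg_of_neg_of_pos hc ha⟩
  · exact ⟨![1, 0, 0, 0], by simpa [Fin.sum_univ_four] using hc⟩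

theorem exists_mem_quaternionNorms_mul_mem_localSquares (S : Finset (FinitePrime K)) (a b c : Kˣ)
    (hpos : ∀ φ : K →+* ℝ, φ a < 0 → φ b < 0 → 0 < φ c) :
    ∃ n ∈ quaternionNorms a b, (∀ v ∈ S, c * n ∈ finiteLocalSquares v) ∧
      ∀ w, c * n ∈ infiniteLocalSquares w := by
  classical
  obtain ⟨v₀, -⟩ := Infinite.exists_notMem_finset (∅ : Finset (FinitePrime K))
  choose n hn hcn using fun v : FinitePrime K ↦
    exists_mem_quaternionNorms_mul_mem_finiteLocalSquares v a b c
  choose x hx using fun v ↦ mem_quaternionNorms_iff_sum.1 (hn v)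
  choose y hy using fun φ ↦ exists_pos_map_mul_sum (hpos φ)
  have hη (v : FinitePrime K) : v.valuation K (4 : K) * v.valuation K (n v : K) ≠ 0 :=
    mul_ne_zero (valuation_four_pos v).ne' ((Valuation.ne_zero_iff _).2 (n v).ne_zero)
  obtain ⟨z, hzS, hz⟩ := exists_diagonal_approximation _ (c : K) (insert v₀ S) x hη y hy
  simp only [← hx] at hzS
  set m := ∑ i, ![1, -(a : K), -(b : K), a * b] i * z i ^ 2
  have hm : m ≠ 0 := by
    intro h
    have hlt := hzS v₀ (Finset.mem_insert_self v₀ S)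
    rw [h, zero_sub, Valuation.map_neg] at hlt
    exact hlt.not_ge (mul_le_of_le_one_left' (valuation_ofNat_le_one v₀ 4))
  refine ⟨Units.mk0 m hm, mem_quaternionNorms_iff_sum.2 ⟨z, rfl⟩, fun v hv ↦ ?_, ?_⟩
  · have h : Units.mk0 m hm / n v ∈ finiteLocalSquares v :=
      div_mem_finiteLocalSquares v (hzS v (Finset.mem_insert_of_mem hv))
    simpa [mul_assoc] using mul_mem (hcn v) h
  · rintro w φ rfl
    exact hz φ

section Discriminants

variable {v : FinitePrime K} {b : Kˣ}

lemma exists_discrim_near_of_mem_finiteLocalSquares (hv : IsOdd v) (hb : b ∈ finiteLocalSquares v) :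
    ∃ (t : K) (u : Kˣ), Even (ord v u) ∧ u ∉ finiteLocalSquares v ∧
      v.valuation K (t ^ 2 - 4 * b - u) < v.valuation K (u : K) := by
  obtain ⟨n, hn, hn'⟩ := exists_unit_notMem_finiteLocalSquares v
  obtain ⟨y, hy⟩ := hb
  rw [hv.valuation_four] at hy
  have hn₁ : (1 - n : K) ≠ 0 := fun h ↦
    hn' ((Units.ext (sub_eq_zero.1 h).symm : n = 1) ▸ one_mem _)
  set k := Units.mk0 (4 * (y : K)⁻¹ / (1 - n))
    (div_ne_zero (mul_ne_zero (by norm_num) (inv_ne_zero y.ne_zero)) hn₁) with hk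
  refine ⟨2 * (y : K)⁻¹ * (1 + n) / (1 - n), n * k ^ 2, ⟨ord v k, by simp [hn, two_mul]⟩,
    fun h ↦ hn' (by simpa using div_mem h (sq_mem_finiteLocalSquares v k)), ?_⟩
  have hval : v.valuation K ((n * k ^ 2 : Kˣ) : K) =
      v.valuation K ((y : K)⁻¹ ^ 2) * v.valuation K ((1 - n : K) ^ 2)⁻¹ := by
    rw [Units.val_mul, Units.val_pow_eq_pow_val, hk, Units.val_mk0, map_mul,
      (valuation_eq_one_iff v n).2 hn, one_mul, mul_div_assoc, mul_pow, div_pow, map_mul, map_pow,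
      hv.valuation_four, one_pow, one_mul, div_eq_mul_inv, map_mul]
  have hle : v.valuation K (1 - n : K) ≤ 1 := (Valuation.map_sub _ _ _).trans (by
    rw [map_one, (valuation_eq_one_iff v n).2 hn, max_self])
  have hone : 1 ≤ v.valuation K ((1 - n : K) ^ 2)⁻¹ := by
    rw [map_inv₀, map_pow]
    exact (one_le_inv₀ (pow_pos (zero_lt_iff.2 ((Valuation.ne_zero_iff _).2 hn₁)) 2)).2
      (pow_le_one₀ zero_le hle)
  have hdiff : (2 * (y : K)⁻¹ * (1 + n) / (1 - n)) ^ 2 - 4 * b - (n * k ^ 2 : Kˣ) =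
      (y : K)⁻¹ ^ 2 * (-4 * (b * (y : K) ^ 2 - 1)) := by
    rw [Units.val_mul, Units.val_pow_eq_pow_val, hk, Units.val_mk0]
    field_simp
    ring
  rw [hval, hdiff, map_mul, map_mul, Valuation.map_neg, hv.valuation_four, one_mul]
  exact mul_lt_mul_of_pos_left (hy.trans_le hone)
    (zero_lt_iff.2 ((Valuation.ne_zero_iff _).2 (pow_ne_zero 2 (inv_ne_zero y.ne_zero))))

lemma exists_discrim_near_of_notMem_finiteLocalSquares (hv : IsOdd v) (hb : ord v b = 0)
    (hb' : b ∉ finiteLocalSquares v) :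
    ∃ (t : K) (u : Kˣ), Even (ord v u) ∧ u ∉ finiteLocalSquares v ∧
      v.valuation K (t ^ 2 - 4 * b - u) < v.valuation K (u : K) := by
  obtain ⟨n, hn, hn'⟩ := exists_unit_notMem_finiteLocalSquares v
  have hvb : v.valuation K (b : K) = 1 := (valuation_eq_one_iff v b).2 hb
  obtain ⟨m, ⟨x, s, hm⟩, hmb⟩ := exists_mem_quadraticNorms_valuation_sub_lt v
    (mem_localNorms_of_even_ord hv (by simp [hn]) hn' (by simp [hb]) :
      b ∈ localNorms (Sum.inr v) n) one_ne_zero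
  have hns : 1 ≤ v.valuation K (n * s ^ 2 : K) := by
    by_contra! hlt
    have hx : v.valuation K (x ^ 2 - b) < v.valuation K (b : K) := by
      have h := Valuation.map_add_lt _ hmb hlt
      rwa [hm, sub_add_eq_add_sub, sub_add_cancel, ← hvb] at h
    have hx₀ : x ≠ 0 := by
      rintro rfl
      simp at hx
    have hsq : Units.mk0 x hx₀ ^ 2 / b ∈ finiteLocalSquares v :=
      hv.div_mem_finiteLocalSquares (by simpa using hx)
    exact hb' (by simpa using div_mem (sq_mem_finiteLocalSquares v (Units.mk0 x hx₀)) hsq)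
  have hs : 2 * s ≠ 0 := mul_ne_zero two_ne_zero (by rintro rfl; simp at hns)
  set k := Units.mk0 (2 * s) hs with hk
  refine ⟨2 * x, n * k ^ 2, ⟨ord v k, by simp [hn, two_mul]⟩,
    fun h ↦ hn' (by simpa using div_mem h (sq_mem_finiteLocalSquares v k)), ?_⟩
  have hdiff : (2 * x) ^ 2 - 4 * b - (n * k ^ 2 : Kˣ) = 4 * ((m : K) - b) := by
    rw [Units.val_mul, Units.val_pow_eq_pow_val, hk, Units.val_mk0, hm]
    ring
  have hu : ((n * k ^ 2 : Kˣ) : K) = 4 * (n * s ^ 2) := by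
    rw [Units.val_mul, Units.val_pow_eq_pow_val, hk, Units.val_mk0]
    ring
  rw [hdiff, hu, map_mul, map_mul, hv.valuation_four, one_mul, one_mul]
  exact hmb.trans_le hns

theorem exists_discrim_notMem_finiteLocalSquares (T : Finset (FinitePrime K)) (hT : T.Nonempty)
    (hodd : ∀ v ∈ T, IsOdd v) (hb : ∀ v ∈ T, ord v b = 0) :
    ∃ (t : K) (e : Kˣ), (e : K) = t ^ 2 - 4 * b ∧ ¬ IsSquare e ∧
      ∀ v ∈ T, Even (ord v e) ∧ e ∉ finiteLocalSquares v := by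
  classical
  have hlocal (v : FinitePrime K) : ∃ (t : K) (u : Kˣ), v ∈ T → Even (ord v u) ∧
      u ∉ finiteLocalSquares v ∧ v.valuation K (t ^ 2 - 4 * b - u) < v.valuation K (u : K) := by
    by_cases hv : v ∈ T
    · by_cases hb' : b ∈ finiteLocalSquares v
      · simpa [hv] using exists_discrim_near_of_mem_finiteLocalSquares (hodd v hv) hb'
      · simpa [hv] using exists_discrim_near_of_notMem_finiteLocalSquares (hodd v hv) (hb v hv) hb'
    · exact ⟨0, 1, fun h ↦ absurd h hv⟩
  choose t u hu using hlocal
  choose ε hε hεt using fun v ↦ exists_valuation_mul_sq_sub_sq_lt v 1 (t v)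
    ((Valuation.ne_zero_iff _).2 (u v).ne_zero : v.valuation K (u v : K) ≠ 0)
  obtain ⟨x, hx, -⟩ := weak_approximation T t hε 0 one_pos
  have hnear (v : FinitePrime K) (hv : v ∈ T) :
      v.valuation K (x ^ 2 - 4 * b - u v) < v.valuation K (u v : K) := by
    convert Valuation.map_add_lt _ (hεt v x (hx v hv)) (hu v hv).2.2 using 2
    ring
  obtain ⟨v₀, hv₀⟩ := hT
  have he : x ^ 2 - 4 * (b : K) ≠ 0 := by
    intro h
    simpa [h] using hnear v₀ hv₀
  have hcond (v : FinitePrime K) (hv : v ∈ T) :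
      Even (ord v (Units.mk0 _ he)) ∧ Units.mk0 _ he ∉ finiteLocalSquares v := by
    obtain ⟨heven, hnot, -⟩ := hu v hv
    refine ⟨ord_eq_of_valuation_sub_lt (x := Units.mk0 _ he) (hnear v hv) ▸ heven, fun h ↦ hnot ?_⟩
    simpa using div_mem h ((hodd v hv).div_mem_finiteLocalSquares (x := Units.mk0 _ he)
      (hnear v hv))
  refine ⟨x, Units.mk0 _ he, Units.val_mk0 he, ?_, hcond⟩
  rintro ⟨y, hy⟩
  exact (hcond v₀ hv₀).2 (hy ▸ sq y ▸ sq_mem_finiteLocalSquares v₀ y)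

end Discriminants

lemma IsOdd.mul_mem_finiteLocalSquares_of_even_ord {v : FinitePrime K} (h : IsOdd v) {a c : Kˣ}
    (ha : ord v a = 0) (hc : Even (ord v c)) (ha' : a ∉ finiteLocalSquares v)
    (hc' : c ∉ finiteLocalSquares v) : a * c ∈ finiteLocalSquares v := by
  obtain ⟨k, hk⟩ := hc
  obtain ⟨π, hπ⟩ := exists_ord_eq_one K v
  refine mem_finiteLocalSquares_of_div_sq_mem (y := π ^ k) (mul_div_assoc a c _ ▸
    h.mul_mem_finiteLocalSquares ha ?_ ha' fun hdiv ↦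
      hc' (mem_finiteLocalSquares_of_div_sq_mem hdiv))
  simp [hk, hπ, two_mul]

namespace QuadraticExtension

section Field

variable {K L : Type*} [Field K] [Field L] [NeZero (2 : L)] [Algebra K L] {e : Kˣ}
  (Q : QuadraticExtension K L e)

include Q in
lemma eq_zero_of_add_mul_sqrt_eq_zero {p q : K}
    (h : algebraMap K L p + algebraMap K L q * Q.sqrt = 0) : p = 0 ∧ q = 0 := by
  have hconj := congrArg Q.conj h
  simp only [map_add, map_mul, AlgEquiv.commutes, Q.conj_sqrt, map_zero] at hconj
  have hp : algebraMap K L p = 0 :=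
    (mul_eq_zero.1 (by linear_combination h + hconj : (2 : L) * algebraMap K L p = 0)).resolve_left
      (NeZero.ne 2)
  exact ⟨by simpa using hp, by simpa [hp] using h⟩

include Q in
/-- Write `a = X ^ 2 - d * Y ^ 2` over `K(√e)` and compare coefficients. -/
lemma mem_quaternionNorms {a b d : Kˣ} {t : K} (he : (e : K) = t ^ 2 - 4 * b)
    (h : unitsMap K L a ∈ quadraticNorms (unitsMap K L d)) : b ∈ quaternionNorms a d := by
  have : NeZero (2 : K) := ⟨fun h ↦ NeZero.ne (2 : L) (by
    rw [← map_ofNat (algebraMap K L) 2, h, map_zero])⟩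
  obtain ⟨X, Y, hXY⟩ := h
  obtain ⟨x, x', rfl⟩ := Q.exists_eq_add_mul_sqrt X
  obtain ⟨y, y', rfl⟩ := Q.exists_eq_add_mul_sqrt Y
  change algebraMap K L a = _ - algebraMap K L d * _ at hXY
  obtain ⟨h₁, h₂⟩ := Q.eq_zero_of_add_mul_sqrt_eq_zero
    (p := x ^ 2 + e * x' ^ 2 - d * (y ^ 2 + e * y' ^ 2) - a) (q := 2 * (x * x' - d * y * y')) (by
      simp only [map_sub, map_add, map_mul, map_pow, map_ofNat]
      linear_combination -hXY -
        (algebraMap K L x' ^ 2 - algebraMap K L d * algebraMap K L y' ^ 2) * Q.sq_sqrt)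
  exact mem_quaternionNorms_of_eq_sq_sub he (by linear_combination -h₁)
    (sub_eq_zero.1 ((mul_eq_zero.1 h₂).resolve_left (NeZero.ne 2)))

end Field

variable {L : Type*} [Field L] [NumberField L] [Algebra K L] {e : Kˣ}
  (Q : QuadraticExtension K L e) {a d : Kˣ}

include Q in
lemma unitsMap_mem_finiteLocalSquares_of_notMem {P : FinitePrime L}
    (hP : IsOdd (P.under (𝓞 K))) (ha : ord (P.under (𝓞 K)) a = 0)
    (he : Even (ord (P.under (𝓞 K)) e)) (he' : e ∉ finiteLocalSquares (P.under (𝓞 K))) :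
    unitsMap K L a ∈ finiteLocalSquares P := by
  by_cases ha' : a ∈ finiteLocalSquares (P.under (𝓞 K))
  · exact unitsMap_mem_finiteLocalSquares P ha'
  · have h := unitsMap_mem_finiteLocalSquares (L := L) P
      (hP.mul_mem_finiteLocalSquares_of_even_ord ha he ha' he')
    rw [map_mul, ← Q.sqrt_sq] at h
    exact (Subgroup.mul_mem_cancel_right _ (sq_mem_finiteLocalSquares P _)).1 h

include Q in
/-- At a prime of `L` where `d` is not a local square, either `d` has even valuation and `a`, being
a unit, is a local norm, or the prime below is inert in `L` and `a` becomes a local square. -/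
theorem unitsMap_mem_quadraticNorms {S : Finset (FinitePrime K)}
    (hS : ∀ v ∉ S, IsOdd v ∧ ord v a = 0) (hd : ∀ v ∈ S, d ∈ finiteLocalSquares v)
    (hd' : ∀ w, d ∈ infiniteLocalSquares w)
    (he : ∀ v ∉ S, ord v d ≠ 0 → Even (ord v e) ∧ e ∉ finiteLocalSquares v) :
    unitsMap K L a ∈ quadraticNorms (unitsMap K L d) := by
  have hnotMem (P : FinitePrime L) (hP : unitsMap K L d ∉ finiteLocalSquares P) :
      P.under (𝓞 K) ∉ S := fun h ↦ hP (unitsMap_mem_finiteLocalSquares P (hd _ h))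
  have hodd (P : FinitePrime L) (hP : P.under (𝓞 K) ∉ S) : IsOdd P := by
    have h2 := valuation_algebraMap P (2 : K)
    rwa [(hS _ hP).1, one_pow, map_ofNat] at h2
  refine mem_quadraticNorms_of_forall_mem_localNorms ?_ ?_ <;> rintro (W | P) hp
  · exact absurd (unitsMap_mem_infiniteLocalSquares W hd') hp
  · exact localNorms_ne_top_of_isOdd (hodd P (hnotMem P hp)) hp
  · exact absurd (unitsMap_mem_infiniteLocalSquares W hd') hp
  · obtain ⟨hP, ha⟩ := hS _ (hnotMem P hp)
    by_cases hev : Even (ord P (unitsMap K L d))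
    · exact mem_localNorms_of_even_ord (hodd P (hnotMem P hp)) hev hp (by simp [ord_unitsMap, ha])
    · have hd₀ : ord (P.under (𝓞 K)) d ≠ 0 := fun h ↦ hev (by simp [ord_unitsMap, h])
      obtain ⟨he, he'⟩ := he _ (hnotMem P hp) hd₀
      exact localSquares_le_localNorms (Sum.inr P) _
        (Q.unitsMap_mem_finiteLocalSquares_of_notMem hP ha he he')

end QuadraticExtension

/-- After multiplying `c` by a quaternion norm, it is a local square at all real places and at all
primes dividing `2ab`. For a suitable `e = t ^ 2 - 4 * b`, the norm theorem over `K(√e)` shows that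
`a` is a norm from `K(√e, √c)`, whence `ℍ[K, a, c]` contains an element of norm `b`. -/
theorem mem_quaternionNorms_of_forall_pos (a b c : Kˣ)
    (hpos : ∀ φ : K →+* ℝ, φ a < 0 → φ b < 0 → 0 < φ c) : c ∈ quaternionNorms a b := by
  classical
  set S := dyadicPrimes K ∪ (primeSupport a ∪ primeSupport b) with hS
  obtain ⟨m, hm, hmS, hmI⟩ := exists_mem_quaternionNorms_mul_mem_localSquares S a b c hpos
  suffices h : c * m ∈ quaternionNorms a b by simpa using div_mem h hm
  generalize c * m = d at hmS hmI ⊢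
  have hunit (v : FinitePrime K) (hv : v ∉ S) : IsOdd v ∧ ord v a = 0 ∧ ord v b = 0 := by
    simpa [hS, isOdd_iff_notMem_dyadicPrimes, mem_primeSupport] using hv
  obtain ⟨v₀, hv₀⟩ := Infinite.exists_notMem_finset S
  set T := insert v₀ (primeSupport d \ S) with hT
  have hTS (v : FinitePrime K) (hv : v ∈ T) : v ∉ S := by
    rcases Finset.mem_insert.1 hv with rfl | hv
    exacts [hv₀, (Finset.mem_sdiff.1 hv).2]
  obtain ⟨t, e, he, hsq, heT⟩ := exists_discrim_notMem_finiteLocalSquares (b := b) T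
    (Finset.insert_nonempty _ _) (fun v hv ↦ (hunit v (hTS v hv)).1)
    fun v hv ↦ (hunit v (hTS v hv)).2.2
  obtain ⟨L, _, _, _, ⟨Q⟩⟩ := exists_quadraticExtension hsq
  exact mem_quaternionNorms_symm (Q.mem_quaternionNorms he (Q.unitsMap_mem_quadraticNorms
    (fun v hv ↦ ⟨(hunit v hv).1, (hunit v hv).2.1⟩) hmS hmI fun v hv hd ↦
      heT v (Finset.mem_insert_of_mem (Finset.mem_sdiff.2 ⟨mem_primeSupport.2 hd, hv⟩))))

/-! ### Quadratic forms in four variables -/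

section QuadraticForms

open QuadraticMap

section Gram

variable {R : Type*} [CommRing R] {n : ℕ}

lemma gramMatrix_eq_toMatrix₂' (f : QuadraticForm R (Fin n → R)) :
    gramMatrix f = LinearMap.toMatrix₂' R (polarBilin f) := by
  ext i j
  rw [LinearMap.toMatrix₂'_apply]
  rfl

lemma gramMatrix_comp (f : QuadraticForm R (Fin n → R)) (l : (Fin n → R) →ₗ[R] Fin n → R) :
    gramMatrix (f.comp l) =
      (LinearMap.toMatrix' l).transpose * gramMatrix f * LinearMap.toMatrix' l := by
  simp only [gramMatrix_eq_toMatrix₂', QuadraticMap.polarBilin_comp,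
    LinearMap.toMatrix₂'_compl₁₂]

lemma exists_det_gramMatrix_eq_of_equivalent {f g : QuadraticForm R (Fin n → R)}
    (h : f.Equivalent g) : ∃ t : R, (gramMatrix f).det = t ^ 2 * (gramMatrix g).det := by
  obtain ⟨e⟩ := h
  have he : g.comp e.toLinearMap = f := QuadraticMap.ext e.map_app
  refine ⟨(LinearMap.toMatrix' e.toLinearMap).det, ?_⟩
  rw [← congrArg gramMatrix he, gramMatrix_comp, Matrix.det_mul, Matrix.det_mul,
    Matrix.det_transpose]
  ring

lemma det_gramMatrix_weightedSumSquares (w : Fin n → R) :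
    (gramMatrix (weightedSumSquares R w)).det = 2 ^ n * ∏ i, w i := by
  have h : gramMatrix (weightedSumSquares R w) = Matrix.diagonal fun i ↦ 2 * w i := by
    ext i j
    simp only [gramMatrix, Matrix.of_apply, polar, weightedSumSquares_apply, smul_eq_mul,
      ← Finset.sum_sub_distrib, Pi.add_apply, Pi.single_apply, Matrix.diagonal_apply]
    rw [Finset.sum_eq_single i (by intro k _ hk; simp [hk]) (by simp)]
    split_ifs <;> simp_all; ring
  simp [h, Finset.prod_mul_distrib]

end Gram

variable {F : Type*} [Field F]

lemma exists_equivalent_weightedSumSquares_prod_eq_sq [NeZero (2 : F)] {n : ℕ} (hn : Even n)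
    {f : QuadraticForm F (Fin n → F)} {s : F} (hs : s ≠ 0) (hf : (gramMatrix f).det = s ^ 2) :
    ∃ (d : Fin n → Fˣ) (t : Fˣ),
      f.Equivalent (weightedSumSquares F fun i ↦ (d i : F)) ∧ ∏ i, d i = t ^ 2 := by
  have : Invertible (2 : F) := invertibleOfNonzero (NeZero.ne 2)
  have hdiag := QuadraticForm.equivalent_weightedSumSquares f
  rw [Module.finrank_fin_fun] at hdiag
  obtain ⟨d, hd⟩ := hdiag
  obtain ⟨r, hr⟩ := exists_det_gramMatrix_eq_of_equivalent hd
  obtain ⟨m, rfl⟩ := hn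
  rw [hf, det_gramMatrix_weightedSumSquares] at hr
  have hne : r ^ 2 * (2 ^ (m + m) * ∏ i, d i) ≠ 0 := hr ▸ pow_ne_zero 2 hs
  simp only [mul_ne_zero_iff, Finset.prod_ne_zero_iff, pow_ne_zero_iff two_ne_zero] at hne
  obtain ⟨hr₀, -, hd₀⟩ := hne
  have ht : s / (r * 2 ^ m) ≠ 0 := by have := NeZero.ne (2 : F); positivity
  refine ⟨fun i ↦ Units.mk0 (d i) (hd₀ i (Finset.mem_univ i)), Units.mk0 _ ht, hd, ?_⟩
  ext
  simp only [Units.coe_prod, Units.val_mk0, Units.val_pow_eq_pow_val]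
  field_simp
  linear_combination -hr

lemma equivalent_of_comp_eq {V : Type*} [AddCommGroup V] [Module F V] [FiniteDimensional F V]
    {Q Q' : QuadraticForm F V} (hQ : Q.radical = ⊥) (l : V →ₗ[F] V) (h : Q'.comp l = Q) :
    Q.Equivalent Q' := by
  have hl : Function.Injective l := by
    rw [← LinearMap.ker_eq_bot, eq_bot_iff, ← hQ]
    intro x hx
    rw [LinearMap.mem_ker] at hx
    simp [mem_radical_iff', ← h, hx]
  exact ⟨{ LinearEquiv.ofInjectiveEndo l hl with map_app' x := congrArg (· x) h }⟩

/-- The norm form `⟨1, -a, -b, ab⟩` of the quaternion algebra `ℍ[F,a,b]`, in the coordinates given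
by the basis `1, i, j, k`. -/
noncomputable def quaternionNormForm (a b : F) : QuadraticForm F (Fin 4 → F) :=
  weightedSumSquares F ![1, -a, -b, a * b]

lemma quaternionNormForm_apply (a b : F) (x : Fin 4 → F) :
    quaternionNormForm a b x = x 0 ^ 2 - a * x 1 ^ 2 - b * x 2 ^ 2 + a * b * x 3 ^ 2 := by
  simp [quaternionNormForm, Fin.sum_univ_four]
  ring

/-- The matrix of left multiplication by `p 0 + p 1 i + p 2 j + p 3 k` on the quaternion algebra
`ℍ[F,a,b]`. -/
def quaternionMulMatrix (a b : F) (p : Fin 4 → F) : Matrix (Fin 4) (Fin 4) F :=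
  !![p 0, a * p 1, b * p 2, -(a * b * p 3);
     p 1, p 0, b * p 3, -(b * p 2);
     p 2, -(a * p 3), p 0, a * p 1;
     p 3, -p 2, p 1, p 0]

lemma quaternionNormForm_mulVec (a b : F) (p x : Fin 4 → F) :
    quaternionNormForm a b ((quaternionMulMatrix a b p).mulVec x) =
      quaternionNormForm a b p * quaternionNormForm a b x := by
  simp [quaternionNormForm_apply, quaternionMulMatrix, dotProduct,
    Fin.sum_univ_four]
  ring

lemma weightedSumSquares_mul_equivalent_quaternionNormForm [NeZero (2 : F)] {a b c : Fˣ}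
    (hc : c ∈ quaternionNorms a b) :
    (weightedSumSquares F fun i ↦ (c : F) * ![1, -(a : F), -b, a * b] i).Equivalent
      (quaternionNormForm (a : F) b) := by
  obtain ⟨x, y, z, t, h⟩ := hc
  refine equivalent_of_comp_eq ?_ (quaternionMulMatrix (a : F) b ![x, y, z, t]).mulVecLin
    (QuadraticMap.ext fun v ↦ ?_)
  · have hne (i : Fin 4) : (c : F) * ![1, -(a : F), -b, a * b] i ≠ 0 := by fin_cases i <;> simp
    simp [QuadraticForm.radical_weightedSumSquares, hne, Pi.spanSubset]
  · change quaternionNormForm _ _ (Matrix.mulVec _ v) = _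
    rw [quaternionNormForm_mulVec, quaternionNormForm_apply _ _ ![x, y, z, t]]
    simp [quaternionNormForm, Finset.mul_sum, mul_assoc, h]

lemma weightedSumSquares_equivalent_quaternionNormForm [NeZero (2 : F)] {d : Fin 4 → Fˣ} {t : Fˣ}
    (ht : ∏ i, d i = t ^ 2) (hd : d 0 ∈ quaternionNorms (-(d 0 * d 1)) (-(d 0 * d 2))) :
    (weightedSumSquares F fun i ↦ (d i : F)).Equivalent
      (quaternionNormForm ((-(d 0 * d 1) : Fˣ) : F) ((-(d 0 * d 2) : Fˣ) : F)) := by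
  refine .trans ?_ (weightedSumSquares_mul_equivalent_quaternionNormForm hd)
  let u : Fin 4 → Fˣ := ![1, (d 0)⁻¹, (d 0)⁻¹, t / (d 0 ^ 2 * d 1 * d 2)]
  refine ⟨QuadraticForm.isometryEquivWeightedSumSquaresWeightedSumSquares u fun i ↦ ?_⟩
  rw [Fin.prod_univ_four] at ht
  replace ht : (t : F) ^ 2 = d 0 * d 1 * d 2 * d 3 := by exact_mod_cast congrArg Units.val ht.symm
  fin_cases i <;> simp [u] <;> field_simp
  linear_combination ht

lemma exists_pos_of_weightedSumSquares_pos {ι : Type*} [Fintype ι] (φ : F →+* ℝ) {w y : ι → F}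
    (h : 0 < φ (weightedSumSquares F w y)) : ∃ i, 0 < φ (w i) := by
  contrapose! h
  rw [weightedSumSquares_apply, map_sum]
  refine Finset.sum_nonpos fun i _ ↦ ?_
  rw [smul_eq_mul, map_mul, map_mul]
  exact mul_nonpos_of_nonpos_of_nonneg (h i) (mul_self_nonneg _)

lemma pos_of_prod_eq_sq {R : Type*} [CommRing R] [LinearOrder R] [IsStrictOrderedRing R]
    {d : Fin 4 → R} {t : R} (ht : ∏ i, d i = t ^ 2) (hpos : ∃ i, 0 < d i)
    (h₁ : 0 < d 0 * d 1) (h₂ : 0 < d 0 * d 2) : 0 < d 0 := by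
  by_contra! h₀
  have hd₁ : d 1 < 0 := neg_of_mul_pos_right h₁ h₀
  have hd₂ : d 2 < 0 := neg_of_mul_pos_right h₂ h₀
  have hd₃ : d 3 ≤ 0 := by
    rw [Fin.prod_univ_four] at ht
    by_contra! h₃
    exact (mul_neg_of_neg_of_pos (mul_neg_of_pos_of_neg h₁ hd₂) h₃).not_ge (ht ▸ sq_nonneg t)
  obtain ⟨i, hi⟩ := hpos
  fin_cases i
  exacts [h₀.not_gt hi, hd₁.not_gt hi, hd₂.not_gt hi, hd₃.not_gt hi]

end QuadraticForms

end HasseSchilling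

theorem stmt_2 (K : Type*) [Field K] [NumberField K]
    (f : QuadraticForm K (Fin 4 → K))
    (hdisc : ∃ s : K, s ≠ 0 ∧ (gramMatrix f).det = s ^ 2)
    (hpos : ∀ v : K →+* ℝ, ∃ x : Fin 4 → K, 0 < v (f x)) :
    ∃ a b : K, a ≠ 0 ∧ b ≠ 0 ∧
      f.Equivalent (QuadraticMap.weightedSumSquares K ![1, -a, -b, a * b]) := by
  obtain ⟨s, hs, hf⟩ := hdisc
  obtain ⟨d, t, ⟨e⟩, ht⟩ :=
    HasseSchilling.exists_equivalent_weightedSumSquares_prod_eq_sq (by decide) hs hf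
  have hd : d 0 ∈ HasseSchilling.quaternionNorms (-(d 0 * d 1)) (-(d 0 * d 2)) := by
    refine HasseSchilling.mem_quaternionNorms_of_forall_pos _ _ _ fun v h₁ h₂ ↦ ?_
    obtain ⟨x, hx⟩ := hpos v
    rw [← e.map_app] at hx
    have ht' : ∏ i, v (d i) = v t ^ 2 := by
      rw [← map_prod, ← Units.coe_prod, ht, Units.val_pow_eq_pow_val, map_pow]
    refine HasseSchilling.pos_of_prod_eq_sq ht'
      (HasseSchilling.exists_pos_of_weightedSumSquares_pos v hx) ?_ ?_
    · simpa using h₁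
    · simpa using h₂
  exact ⟨_, _, Units.ne_zero _, Units.ne_zero _,
    .trans ⟨e⟩ (HasseSchilling.weightedSumSquares_equivalent_quaternionNormForm ht hd)⟩
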